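/- arXiv:0910.1575 — 2 statements merged into one kernel-verified Lean document; each statement's English description precedes it below -/
import Mathlib

section
/- Let G be a finite simple graph with 10 vertices and 20 edges in which every vertex has degree exactly 4. Then G is 2-apex. -/
/-- `H` is a minor of `G`: there are pairwise disjoint nonempty connected branch sets
in `G`, one for each vertex of `H`, with an edge of `G` between the branch sets of
any two vertices adjacent in `H`. -/
def SimpleGraph.IsMinor {W V : Type*} (H : SimpleGraph W) (G : SimpleGraph V) : Prop :=
  ∃ f : W → Set V,
    (∀ w, (f w).Nonempty) ∧
    (∀ w, (G.induce (f w)).Connected) ∧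
    (Pairwise fun w₁ w₂ => Disjoint (f w₁) (f w₂)) ∧
    ∀ ⦃w₁ w₂⦄, H.Adj w₁ w₂ → ∃ v₁ ∈ f w₁, ∃ v₂ ∈ f w₂, G.Adj v₁ v₂

/-- A graph is planar iff it has no `K₅` minor and no `K₃,₃` minor (Kuratowski–Wagner). -/
def SimpleGraph.IsPlanar {V : Type*} (G : SimpleGraph V) : Prop :=
  ¬ (⊤ : SimpleGraph (Fin 5)).IsMinor G ∧
  ¬ (completeBipartiteGraph (Fin 3) (Fin 3)).IsMinor G

/-- A graph is 2-apex if it becomes planar after deleting at most two vertices. -/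
def SimpleGraph.TwoApex {V : Type*} (G : SimpleGraph V) : Prop :=
  ∃ s : Set V, s.ncard ≤ 2 ∧ (G.induce sᶜ).IsPlanar

/-!
Let `G` be quartic on ten vertices and let `a`, `b` be nonadjacent. Then `G - {a, b}` has
`∑ (deg - 2) = 8` over its vertices of degree at least two. A minor model of `K` needs `deg w - 2`
of this excess in the branch set of `w`, so `K₅`, which needs `10`, is not a minor, while `K₃,₃`,
which needs `6`, requires six vertices of degree at least three. If `a` and `b` have three common
neighbours there are at most five such vertices. If they have two, there are at most six, so in a
model of `K₃,₃` a branch set containing a vertex of degree three has only three outgoing edges; two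
adjacent vertices of degree three then lie in no common triangle, since `K₃,₃` has none. A `K₅` in
`G` is a component, and deleting one vertex inside and one outside leaves a disjoint union of two
graphs on four vertices.

If none of these criteria shows that `G` is 2-apex, then every vertex lies in at least two
triangles, and counting neighbours excludes first induced diamonds, then four-cliques. Hence every
edge lies in exactly one triangle and `3` divides the number `20` of edges, which is absurd.
-/

namespace QuarticTwoApex

open Finset

section Counting

variable {V : Type*} [Fintype V] [DecidableEq V] (G : SimpleGraph V) [DecidableRel G.Adj]

theorem sum_card_neighborFinset_inter_comm (S T : Finset V) :
    ∑ x ∈ S, #(G.neighborFinset x ∩ T) = ∑ y ∈ T, #(G.neighborFinset y ∩ S) := by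
  convert sum_card_bipartiteAbove_eq_sum_card_bipartiteBelow G.Adj (s := S) (t := T) using 3
  · ext; simp [bipartiteAbove, and_comm]
  · ext; simp [bipartiteBelow, and_comm, G.adj_comm]

theorem card_neighborFinset_inter_add_card_inter_compl (x : V) (S : Finset V) :
    #(G.neighborFinset x ∩ S) + #(G.neighborFinset x ∩ Sᶜ) = G.degree x := by
  rw [← sdiff_eq_inter_compl, card_inter_add_card_sdiff, G.card_neighborFinset_eq_degree]

theorem compl_neighborFinset_eq_insert (v : V) :
    (G.neighborFinset v)ᶜ = insert v (Gᶜ.neighborFinset v) := by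
  rw [G.neighborFinset_compl, sdiff_singleton_eq_erase, insert_erase (by simp)]

theorem degree_induce (S : Finset V) (x : (S : Set V)) :
    (G.induce (S : Set V)).degree x = #(G.neighborFinset x ∩ S) := by
  rw [← SimpleGraph.card_neighborFinset_eq_degree,
    ← card_map (Function.Embedding.subtype (· ∈ (S : Set V)))]
  congr 1
  ext y
  simp [and_comm]

/-- The edges of `G` leaving the vertex set `S`, oriented outwards. -/
def boundary (S : Finset V) : Finset (Σ _ : V, V) := S.sigma fun x ↦ G.neighborFinset x \ S

variable {G} in
theorem mem_boundary {S : Finset V} {e : Σ _ : V, V} :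
    e ∈ boundary G S ↔ e.1 ∈ S ∧ e.2 ∉ S ∧ G.Adj e.1 e.2 := by
  simp [boundary, and_comm]

variable {G} in
/- A connected set `S` spans at least `#S - 1` edges. -/
theorem card_boundary_le {S : Finset V} (hS : (G.induce (S : Set V)).Connected) :
    #(boundary G S) ≤ ∑ x ∈ S, (G.degree x - 2) + 2 := by
  have hedges : #S ≤ #(G.induce (S : Set V)).edgeFinset + 1 := by
    simpa [SimpleGraph.edgeFinset_card] using hS.card_vert_le_card_edgeSet_add_one
  have hinside : ∑ x ∈ S, #(G.neighborFinset x ∩ S)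
      = 2 * #(G.induce (S : Set V)).edgeFinset := by
    rw [← SimpleGraph.sum_degrees_eq_twice_card_edges, ← sum_finset_coe]
    simp only [degree_induce]
  have hdegree : ∑ x ∈ S, (#(G.neighborFinset x ∩ S) + #(G.neighborFinset x \ S))
      ≤ ∑ x ∈ S, ((G.degree x - 2) + 2) := by
    refine sum_le_sum fun x _ ↦ ?_
    rw [card_inter_add_card_sdiff, G.card_neighborFinset_eq_degree]
    omega
  rw [sum_add_distrib, hinside, sum_add_distrib, sum_const, smul_eq_mul] at hdegree
  rw [boundary, card_sigma]
  omega

end Counting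

section Minor

/-- A minor model of `K` in a finite graph `H`: the branch sets `B w` witnessing
`K.IsMinor H`, as finsets. Their nonemptiness is part of `connected`. -/
structure IsMinorModel {W U : Type*} (K : SimpleGraph W) (H : SimpleGraph U)
    (B : W → Finset U) : Prop where
  connected : ∀ w, (H.induce (B w : Set U)).Connected
  eq_of_mem : ∀ ⦃w z x⦄, x ∈ B w → x ∈ B z → w = z
  exists_adj : ∀ ⦃w z⦄, K.Adj w z → ∃ x ∈ B w, ∃ y ∈ B z, H.Adj x y

theorem exists_isMinorModel {W U : Type*} [Finite U] {K : SimpleGraph W} {H : SimpleGraph U}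
    (h : K.IsMinor H) : ∃ B, IsMinorModel K H B := by
  obtain ⟨f, -, hconn, hdisj, hadj⟩ := h
  have hfin (w : W) : (f w).Finite := (f w).toFinite
  refine ⟨fun w ↦ (hfin w).toFinset, fun w ↦ ?_, fun w z x hw hz ↦ ?_, fun w z hwz ↦ ?_⟩
  · rw [Set.Finite.coe_toFinset]
    exact hconn w
  · simp only [Set.Finite.mem_toFinset] at hw hz
    by_contra hne
    exact Set.disjoint_left.1 (hdisj hne) hw hz
  · simpa only [Set.Finite.mem_toFinset] using hadj hwz

namespace IsMinorModel

variable {W U : Type*} {K : SimpleGraph W} {H : SimpleGraph U} {B : W → Finset U}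

theorem nonempty (m : IsMinorModel K H B) (w : W) : (B w).Nonempty :=
  Set.nonempty_coe_sort.1 (m.connected w).nonempty

variable [Fintype W] [DecidableRel K.Adj] [Fintype U] [DecidableEq U] [DecidableRel H.Adj]

omit [Fintype W] [DecidableRel K.Adj] in
theorem exists_boundary (m : IsMinorModel K H B) (w : W) :
    ∃ e : W → Σ _ : U, U, ∀ z, K.Adj w z → e z ∈ boundary H (B w) ∧ (e z).2 ∈ B z := by
  have hedge (z : W) (hz : K.Adj w z) :
      ∃ e : Σ _ : U, U, e ∈ boundary H (B w) ∧ e.2 ∈ B z := by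
    obtain ⟨x, hx, y, hy, hxy⟩ := m.exists_adj hz
    exact ⟨⟨x, y⟩, mem_boundary.2 ⟨hx, fun hyw ↦ hz.ne (m.eq_of_mem hyw hy), hxy⟩, hy⟩
  have : Nonempty (Σ _ : U, U) := (m.nonempty w).elim fun x _ ↦ ⟨⟨x, x⟩⟩
  choose! e he using hedge
  exact ⟨e, he⟩

theorem exists_image_subset_boundary (m : IsMinorModel K H B) (w : W) :
    ∃ e : W → Σ _ : U, U, (∀ z, K.Adj w z → (e z).2 ∈ B z) ∧
      (K.neighborFinset w).image e ⊆ boundary H (B w) ∧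
      #((K.neighborFinset w).image e) = K.degree w := by
  obtain ⟨e, he⟩ := m.exists_boundary w
  refine ⟨e, fun z hz ↦ (he z hz).2, ?_, ?_⟩
  · simp only [image_subset_iff, SimpleGraph.mem_neighborFinset]
    exact fun z hz ↦ (he z hz).1
  · rw [card_image_of_injOn, K.card_neighborFinset_eq_degree]
    intro z hz z' hz' heq
    simp only [SimpleGraph.coe_neighborFinset, SimpleGraph.mem_neighborSet] at hz hz'
    exact m.eq_of_mem (he z hz).2 (heq ▸ (he z' hz').2)

theorem degree_le_card_boundary (m : IsMinorModel K H B) (w : W) :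
    K.degree w ≤ #(boundary H (B w)) := by
  obtain ⟨e, -, hsub, hcard⟩ := m.exists_image_subset_boundary w
  exact hcard ▸ card_le_card hsub

omit [DecidableEq U] in
theorem degree_le_sum (m : IsMinorModel K H B) (w : W) :
    K.degree w ≤ ∑ x ∈ B w, (H.degree x - 2) + 2 := by
  classical
  exact (m.degree_le_card_boundary w).trans (card_boundary_le (m.connected w))

omit [DecidableEq U] in
theorem exists_three_le_degree (m : IsMinorModel K H B) {w : W} (hw : 3 ≤ K.degree w) :
    ∃ x ∈ B w, 3 ≤ H.degree x := by
  by_contra! hlow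
  have hsum : ∑ x ∈ B w, (H.degree x - 2) = 0 :=
    sum_eq_zero fun x hx ↦ by have := hlow x hx; omega
  have := m.degree_le_sum w
  omega

omit [DecidableEq U] in
theorem sum_degree_sub_two_le (m : IsMinorModel K H B) :
    ∑ w, (K.degree w - 2) ≤ ∑ x, (H.degree x - 2) := by
  classical
  calc ∑ w, (K.degree w - 2)
      ≤ ∑ w, ∑ x ∈ B w, (H.degree x - 2) :=
        sum_le_sum fun w _ ↦ Nat.sub_le_iff_le_add.2 (m.degree_le_sum w)
    _ = ∑ x ∈ univ.biUnion B, (H.degree x - 2) :=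
        (sum_biUnion fun w _ z _ hne ↦ disjoint_left.2 fun x hw hz ↦
          hne (m.eq_of_mem hw hz)).symm
    _ ≤ ∑ x, (H.degree x - 2) := sum_le_sum_of_subset (subset_univ _)

section Tight

variable (m : IsMinorModel K H B) {w : W} (hw : #(boundary H (B w)) ≤ K.degree w)
include m hw

theorem exists_surjection_of_tight : ∃ e : W → Σ _ : U, U, (∀ z, K.Adj w z → (e z).2 ∈ B z) ∧
    ∀ p ∈ boundary H (B w), ∃ z, K.Adj w z ∧ e z = p := by
  obtain ⟨e, he, hsub, hcard⟩ := m.exists_image_subset_boundary w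
  refine ⟨e, he, fun p hp ↦ ?_⟩
  rw [← eq_of_subset_of_card_le hsub (hcard ▸ hw)] at hp
  simpa using hp

theorem exists_adj_of_tight {p : Σ _ : U, U} (hp : p ∈ boundary H (B w)) :
    ∃ z, K.Adj w z ∧ p.2 ∈ B z := by
  obtain ⟨e, he, hsurj⟩ := m.exists_surjection_of_tight hw
  obtain ⟨z, hz, rfl⟩ := hsurj p hp
  exact ⟨z, hz, he z hz⟩

theorem eq_of_tight {x x' y y' : U} (hxy : ⟨x, y⟩ ∈ boundary H (B w))
    (hxy' : ⟨x', y'⟩ ∈ boundary H (B w)) {z : W} (hy : y ∈ B z) (hy' : y' ∈ B z) : x = x' := by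
  obtain ⟨e, he, hsurj⟩ := m.exists_surjection_of_tight hw
  obtain ⟨t, ht, het⟩ := hsurj _ hxy
  obtain ⟨t', ht', het'⟩ := hsurj _ hxy'
  have htz : t = z := m.eq_of_mem (he t ht) (het ▸ hy)
  have htz' : t' = z := m.eq_of_mem (he t' ht') (het' ▸ hy')
  have hpair : (⟨x, y⟩ : Σ _ : U, U) = ⟨x', y'⟩ := by rw [← het, ← het', htz, htz']
  exact congrArg Sigma.fst hpair

end Tight

/- The apex `x` can lie neither in `B p` nor in `B q`, which are joined by one edge only, so
the triangle of `H` projects to a triangle of `K`. -/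
theorem not_triangle_of_tight (m : IsMinorModel K H B) (hK : K.CliqueFree 3) {p q : W}
    (hne : p ≠ q) (hp : #(boundary H (B p)) ≤ K.degree p)
    (hq : #(boundary H (B q)) ≤ K.degree q) {u v x : U} (hu : u ∈ B p) (hv : v ∈ B q)
    (huv : H.Adj u v) (hux : H.Adj u x) (hvx : H.Adj v x) : False := by
  have hvp : v ∉ B p := fun h ↦ hne (m.eq_of_mem h hv)
  have huq : u ∉ B q := fun h ↦ hne (m.eq_of_mem hu h)
  have huv_mem : ⟨u, v⟩ ∈ boundary H (B p) := mem_boundary.2 ⟨hu, hvp, huv⟩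
  have hvu_mem : ⟨v, u⟩ ∈ boundary H (B q) := mem_boundary.2 ⟨hv, huq, huv.symm⟩
  have hxp : x ∉ B p := fun hx ↦ hux.ne <|
    m.eq_of_tight hp huv_mem (mem_boundary.2 ⟨hx, hvp, hvx.symm⟩) hv hv
  have hxq : x ∉ B q := fun hx ↦ hvx.ne <|
    m.eq_of_tight hq hvu_mem (mem_boundary.2 ⟨hx, huq, hux.symm⟩) hu hu
  obtain ⟨q', hpq, hv'⟩ := m.exists_adj_of_tight hp huv_mem
  obtain rfl := m.eq_of_mem hv hv'
  obtain ⟨z, hpz, hxz⟩ := m.exists_adj_of_tight hp (p := ⟨u, x⟩) (mem_boundary.2 ⟨hu, hxp, hux⟩)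
  obtain ⟨z', hqz, hxz'⟩ :=
    m.exists_adj_of_tight hq (p := ⟨v, x⟩) (mem_boundary.2 ⟨hv, hxq, hvx⟩)
  obtain rfl := m.eq_of_mem hxz hxz'
  classical
  exact hK {p, q, z} (SimpleGraph.is3Clique_triple_iff.2 ⟨hpq, hpz, hqz⟩)

end IsMinorModel

end Minor

section Planarity

theorem isRegularOfDegree_completeBipartiteGraph (α : Type*) [Fintype α]
    [DecidableRel (completeBipartiteGraph α α).Adj] :
    (completeBipartiteGraph α α).IsRegularOfDegree (Fintype.card α) := by
  rintro (i | i) <;> rw [← SimpleGraph.card_neighborFinset_eq_degree]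
  · have : (completeBipartiteGraph α α).neighborFinset (.inl i) = univ.map .inr := by
      ext (j | j) <;> simp
    rw [this, card_map, card_univ]
  · have : (completeBipartiteGraph α α).neighborFinset (.inr i) = univ.map .inl := by
      ext (j | j) <;> simp
    rw [this, card_map, card_univ]

theorem cliqueFree_three_completeBipartiteGraph (α β : Type*) :
    (completeBipartiteGraph α β).CliqueFree 3 :=
  (SimpleGraph.CompleteBipartiteGraph.bicoloring α β).colorable.cliqueFree (by simp)

theorem connected_completeBipartiteGraph (α β : Type*) [Nonempty α] [Nonempty β] :
    (completeBipartiteGraph α β).Connected := by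
  have hadj (i : α) (j : β) : (completeBipartiteGraph α β).Reachable (.inl i) (.inr j) :=
    SimpleGraph.Adj.reachable (by simp)
  inhabit α
  inhabit β
  refine ⟨?_⟩
  rintro (i | i) (j | j)
  · exact (hadj i default).trans (hadj j default).symm
  · exact hadj i j
  · exact (hadj j i).symm
  · exact (hadj default i).symm.trans (hadj default j)

theorem mem_iff_of_reachable {U : Type*} {H : SimpleGraph U} {S : Set U}
    (hS : ∀ ⦃x y⦄, H.Adj x y → (x ∈ S ↔ y ∈ S)) {x y : U} (h : H.Reachable x y) :
    x ∈ S ↔ y ∈ S := by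
  obtain ⟨p⟩ := h
  induction p with
  | nil => rfl
  | cons hadj _ ih => exact (hS hadj).trans ih

variable {U : Type*} [Fintype U] {H : SimpleGraph U}

/- A minor model of a connected graph cannot meet both sides of a partition without crossing
edges. -/
theorem IsMinorModel.card_le_of_closed {W : Type*} [Fintype W] {K : SimpleGraph W}
    {B : W → Finset U} (m : IsMinorModel K H B) (hK : K.Preconnected) {S : Finset U}
    (hS : ∀ ⦃x y⦄, H.Adj x y → (x ∈ S ↔ y ∈ S)) {n : ℕ} (hcard : #S ≤ n)
    (hcompl : Fintype.card U - #S ≤ n) : Fintype.card W ≤ n := by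
  classical
  choose r hr using m.nonempty
  have hinj : Function.Injective r := fun w z hwz ↦ m.eq_of_mem (hr w) (hwz ▸ hr z)
  have hbranch {w : W} {x y : U} (hx : x ∈ B w) (hy : y ∈ B w) : x ∈ S ↔ y ∈ S :=
    mem_iff_of_reachable (S := S) hS <|
      ((m.connected w).preconnected ⟨x, hx⟩ ⟨y, hy⟩).map (SimpleGraph.Embedding.induce _).toHom
  have hclosed ⦃w z : W⦄ (hwz : K.Adj w z) : r w ∈ S ↔ r z ∈ S := by
    obtain ⟨x, hx, y, hy, hxy⟩ := m.exists_adj hwz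
    exact (hbranch (hr w) hx).trans ((hS hxy).trans (hbranch hy (hr z)))
  have hconst (w z : W) : r w ∈ S ↔ r z ∈ S :=
    mem_iff_of_reachable (S := {w | r w ∈ S}) hclosed (hK w z)
  rw [← card_univ, ← card_image_of_injective _ hinj]
  by_cases h : ∃ w, r w ∈ S
  · obtain ⟨w, hw⟩ := h
    refine (card_le_card ?_).trans hcard
    simpa [image_subset_iff] using fun z ↦ (hconst w z).1 hw
  · refine (card_le_card (t := Sᶜ) ?_).trans (by rwa [card_compl])
    simpa [image_subset_iff] using h

theorem isPlanar_of_closed {S : Finset U} (hS : ∀ ⦃x y⦄, H.Adj x y → (x ∈ S ↔ y ∈ S))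
    (hcard : #S ≤ 4) (hcompl : Fintype.card U - #S ≤ 4) : H.IsPlanar := by
  constructor <;> intro h <;> obtain ⟨B, m⟩ := exists_isMinorModel h
  · simpa using m.card_le_of_closed SimpleGraph.connected_top.preconnected hS hcard hcompl
  · simpa using m.card_le_of_closed (connected_completeBipartiteGraph _ _).preconnected hS hcard
      hcompl

variable [DecidableRel H.Adj]

theorem IsMinorModel.card_le_card_three_le_degree {W : Type*} [Fintype W] {K : SimpleGraph W}
    [DecidableRel K.Adj] {B : W → Finset U} (m : IsMinorModel K H B)
    (hK : ∀ w, 3 ≤ K.degree w) : Fintype.card W ≤ #{x | 3 ≤ H.degree x} := by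
  choose r hr hdeg using fun w ↦ m.exists_three_le_degree (hK w)
  rw [← card_univ]
  refine card_le_card_of_injOn r (fun w _ ↦ by simpa using hdeg w) fun w _ z _ hwz ↦ ?_
  exact m.eq_of_mem (hr w) (hwz ▸ hr z)

/- `K₅` has `∑ (deg - 2) = 10`. -/
theorem not_isMinor_top_five (hexcess : ∑ x, (H.degree x - 2) ≤ 9) :
    ¬ (⊤ : SimpleGraph (Fin 5)).IsMinor H := by
  intro h
  obtain ⟨B, m⟩ := exists_isMinorModel h
  have : 10 ≤ ∑ x, (H.degree x - 2) := by simpa using m.sum_degree_sub_two_le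
  omega

theorem isPlanar_of_card_three_le_degree (hexcess : ∑ x, (H.degree x - 2) ≤ 9)
    (hcard : #{x | 3 ≤ H.degree x} ≤ 5) : H.IsPlanar := by
  refine ⟨not_isMinor_top_five hexcess, fun h ↦ ?_⟩
  classical
  obtain ⟨B, m⟩ := exists_isMinorModel h
  have : 6 ≤ #{x | 3 ≤ H.degree x} := by
    simpa using m.card_le_card_three_le_degree fun w ↦
      (isRegularOfDegree_completeBipartiteGraph (Fin 3) w).ge
  omega

/- With six candidates for six branch sets, each branch set contains exactly one of them. -/
theorem IsMinorModel.exists_tight {W : Type*} [Fintype W] {K : SimpleGraph W}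
    [DecidableRel K.Adj] [DecidableEq U] {B : W → Finset U} (m : IsMinorModel K H B)
    (hK : K.IsRegularOfDegree 3) (hcard : #{x | 3 ≤ H.degree x} ≤ Fintype.card W) {u : U}
    (hu : H.degree u = 3) :
    ∃ w, u ∈ B w ∧ #(boundary H (B w)) ≤ K.degree w ∧ ∀ x ∈ B w, 3 ≤ H.degree x → x = u := by
  choose r hr hdeg using fun w ↦ m.exists_three_le_degree (hK w).ge
  have hinj : Function.Injective r := fun w z hwz ↦ m.eq_of_mem (hr w) (hwz ▸ hr z)
  have hsurj (x : U) (hx : 3 ≤ H.degree x) : ∃ w, r w = x := by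
    have hsub : univ.image r ⊆ ({x | 3 ≤ H.degree x} : Finset U) := by
      simpa [image_subset_iff] using hdeg
    have heq := eq_of_subset_of_card_le hsub (by
      rwa [card_image_of_injective _ hinj, card_univ])
    simpa using heq.ge (mem_filter.2 ⟨mem_univ x, hx⟩)
  obtain ⟨w, rfl⟩ := hsurj u hu.ge
  have honly : ∀ x ∈ B w, 3 ≤ H.degree x → x = r w := by
    intro x hx hx3
    obtain ⟨z, rfl⟩ := hsurj x hx3
    rw [m.eq_of_mem (hr z) hx]
  refine ⟨w, hr w, ?_, honly⟩
  have hsum : ∑ x ∈ B w, (H.degree x - 2) = H.degree (r w) - 2 :=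
    sum_eq_single_of_mem _ (hr w) fun x hx hne ↦ by
      by_contra h
      exact hne (honly x hx (by omega))
  have := card_boundary_le (m.connected w)
  rw [hK w]
  omega

theorem isPlanar_of_triangle (hexcess : ∑ x, (H.degree x - 2) ≤ 9)
    (hcard : #{x | 3 ≤ H.degree x} ≤ 6) {u v x : U} (hu : H.degree u = 3) (hv : H.degree v = 3)
    (huv : H.Adj u v) (hux : H.Adj u x) (hvx : H.Adj v x) : H.IsPlanar := by
  refine ⟨not_isMinor_top_five hexcess, fun h ↦ ?_⟩
  classical
  obtain ⟨B, m⟩ := exists_isMinorModel h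
  have hreg := isRegularOfDegree_completeBipartiteGraph (Fin 3)
  obtain ⟨p, hup, hp, honly⟩ := m.exists_tight hreg hcard hu
  obtain ⟨q, hvq, hq, -⟩ := m.exists_tight hreg hcard hv
  have hpq : p ≠ q := by
    rintro rfl
    exact huv.ne (honly v hvq hv.ge).symm
  exact m.not_triangle_of_tight (cliqueFree_three_completeBipartiteGraph _ _) hpq hp hq hup hvq
    huv hux hvx

end Planarity

section Deletion

variable {V : Type*} [Fintype V] [DecidableEq V] {G : SimpleGraph V} [DecidableRel G.Adj] {a b : V}

variable (G a b) in
/-- The graph `G - {a, b}`. Its vertex set is given as a finset, so that it inherits the finiteness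
and decidability instances of `G`. -/
abbrev deletePair : SimpleGraph (({a, b}ᶜ : Finset V) : Set V) :=
  G.induce (({a, b}ᶜ : Finset V) : Set V)

omit [DecidableRel G.Adj] in
theorem twoApex_of_isPlanar_deletePair (h : (deletePair G a b).IsPlanar) : G.TwoApex := by
  rw [deletePair, coe_compl] at h
  exact ⟨({a, b} : Finset V), (Set.ncard_coe_finset _).trans_le card_le_two, h⟩

variable (hG : G.IsRegularOfDegree 4)
include hG

theorem degree_deletePair_add_card (x : (({a, b}ᶜ : Finset V) : Set V)) :
    (deletePair G a b).degree x + #(G.neighborFinset x ∩ {a, b}) = 4 := by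
  rw [degree_induce, add_comm, card_neighborFinset_inter_add_card_inter_compl, hG]

theorem sum_degree_deletePair_sub_two (hne : a ≠ b) (hab : ¬ G.Adj a b) :
    ∑ x, ((deletePair G a b).degree x - 2) + 12 = 2 * Fintype.card V := by
  have hpair : #({a, b} : Finset V) = 2 := card_pair hne
  have hdegree (x : (({a, b}ᶜ : Finset V) : Set V)) :
      (deletePair G a b).degree x - 2
        = 2 - #(G.neighborFinset x ∩ {a, b}) := by
    have := degree_deletePair_add_card hG x
    omega
  have hle (x : V) : #(G.neighborFinset x ∩ {a, b}) ≤ 2 :=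
    hpair ▸ card_le_card inter_subset_right
  have hcross : ∑ x ∈ ({a, b}ᶜ : Finset V), #(G.neighborFinset x ∩ {a, b}) = 8 := by
    have ha : G.neighborFinset a ∩ {a, b} = ∅ := disjoint_iff_inter_eq_empty.1 (by simp [hab])
    have hb : G.neighborFinset b ∩ {a, b} = ∅ :=
      disjoint_iff_inter_eq_empty.1 (by simp [mt G.adj_symm hab])
    have ha4 := card_neighborFinset_inter_add_card_inter_compl G a {a, b}
    have hb4 := card_neighborFinset_inter_add_card_inter_compl G b {a, b}
    rw [hG, ha, card_empty] at ha4
    rw [hG, hb, card_empty] at hb4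
    rw [sum_card_neighborFinset_inter_comm, sum_pair hne]
    omega
  have htotal : ∑ x ∈ ({a, b}ᶜ : Finset V), (2 - #(G.neighborFinset x ∩ {a, b}))
      + ∑ x ∈ ({a, b}ᶜ : Finset V), #(G.neighborFinset x ∩ {a, b})
      = 2 * #({a, b}ᶜ : Finset V) := by
    rw [← sum_add_distrib, sum_congr rfl fun x _ ↦ Nat.sub_add_cancel (hle x), sum_const,
      smul_eq_mul, mul_comm]
  have hcompl := card_add_card_compl ({a, b} : Finset V)
  rw [sum_congr rfl fun x _ ↦ hdegree x,
    sum_finset_coe fun x ↦ 2 - #(G.neighborFinset x ∩ {a, b})]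
  omega

theorem card_three_le_degree_deletePair_add_le (hne : a ≠ b) :
    #{x | 3 ≤ (deletePair G a b).degree x}
      + #(G.neighborFinset a ∩ G.neighborFinset b) + 2 ≤ Fintype.card V := by
  set C := G.neighborFinset a ∩ G.neighborFinset b
  have hmaps : ∀ x : (({a, b}ᶜ : Finset V) : Set V),
      3 ≤ (deletePair G a b).degree x → (x : V) ∈ (C ∪ {a, b})ᶜ := by
    intro x hx
    have hdeg := degree_deletePair_add_card hG x
    have hxab : (x : V) ∉ ({a, b} : Finset V) := mem_compl.1 x.2
    rw [mem_compl, mem_union, not_or]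
    refine ⟨fun hxC ↦ ?_, hxab⟩
    have hsub : {a, b} ⊆ G.neighborFinset x ∩ {a, b} := by
      simp only [C, mem_inter, SimpleGraph.mem_neighborFinset] at hxC
      simp [hxC.1.symm, hxC.2.symm]
    have := card_le_card hsub
    rw [card_pair hne] at this
    omega
  have hle : #{x | 3 ≤ (deletePair G a b).degree x} ≤ #(C ∪ {a, b})ᶜ :=
    card_le_card_of_injOn Subtype.val (fun x hx ↦ hmaps x (by simpa using hx))
      Subtype.val_injective.injOn
  have hdisj : Disjoint C {a, b} := by simp [C]
  have hcard := card_add_card_compl (C ∪ {a, b})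
  rw [card_union_of_disjoint hdisj, card_pair hne] at hcard
  omega

theorem degree_deletePair_eq_three {u : V}
    (hu : u ∈ symmDiff (G.neighborFinset a) (G.neighborFinset b))
    (hmem : u ∈ (({a, b}ᶜ : Finset V) : Set V)) :
    (deletePair G a b).degree ⟨u, hmem⟩ = 3 := by
  have hdeg := degree_deletePair_add_card hG ⟨u, hmem⟩
  have hone : #(G.neighborFinset u ∩ {a, b}) = 1 := by
    rw [card_eq_one]
    simp only [mem_symmDiff, SimpleGraph.mem_neighborFinset] at hu
    rcases hu with ⟨ha, hb⟩ | ⟨hb, ha⟩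
    · exact ⟨a, by ext x; simp; grind [G.adj_comm]⟩
    · exact ⟨b, by ext x; simp; grind [G.adj_comm]⟩
  simp only [hone] at hdeg
  omega

variable (hV : Fintype.card V = 10)
include hV

theorem twoApex_of_three_le_card_inter (hne : a ≠ b) (hab : ¬ G.Adj a b)
    (h : 3 ≤ #(G.neighborFinset a ∩ G.neighborFinset b)) : G.TwoApex := by
  have hexcess := sum_degree_deletePair_sub_two hG hne hab
  have hcard := card_three_le_degree_deletePair_add_le hG hne
  exact twoApex_of_isPlanar_deletePair (a := a) (b := b) <|
    isPlanar_of_card_three_le_degree (by omega) (by omega)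

theorem twoApex_of_triangle (hne : a ≠ b) (hab : ¬ G.Adj a b)
    (h : 2 ≤ #(G.neighborFinset a ∩ G.neighborFinset b)) {u w x : V}
    (hu : u ∈ symmDiff (G.neighborFinset a) (G.neighborFinset b))
    (hw : w ∈ symmDiff (G.neighborFinset a) (G.neighborFinset b))
    (hxa : x ≠ a) (hxb : x ≠ b) (huw : G.Adj u w) (hxu : G.Adj x u) (hxw : G.Adj x w) :
    G.TwoApex := by
  have hexcess := sum_degree_deletePair_sub_two hG hne hab
  have hcard := card_three_le_degree_deletePair_add_le hG hne
  have hmem {y : V} (hy : y ∈ symmDiff (G.neighborFinset a) (G.neighborFinset b)) :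
      y ∈ (({a, b}ᶜ : Finset V) : Set V) := by
    simp only [mem_symmDiff, SimpleGraph.mem_neighborFinset] at hy
    simp
    grind [G.adj_comm, G.irrefl]
  have hx : x ∈ (({a, b}ᶜ : Finset V) : Set V) := by simp [hxa, hxb]
  exact twoApex_of_isPlanar_deletePair <|
    isPlanar_of_triangle (u := ⟨u, hmem hu⟩) (v := ⟨w, hmem hw⟩) (x := ⟨x, hx⟩)
      (by omega) (by omega) (degree_deletePair_eq_three hG hu _)
      (degree_deletePair_eq_three hG hw _) huw hxu.symm hxw.symm

end Deletion

section Clique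

variable {V : Type*} [Fintype V] {G : SimpleGraph V} [DecidableRel G.Adj]

theorem erase_subset_neighborFinset [DecidableEq V] {n : ℕ} {s : Finset V} (hs : G.IsNClique n s)
    {x : V} (hx : x ∈ s) : s.erase x ⊆ G.neighborFinset x := fun z hz ↦ by
  rw [mem_erase] at hz
  simpa using hs.isClique hx hz.2 hz.1.symm

theorem mem_iff_mem_of_isNClique_succ {k : ℕ} (hG : G.IsRegularOfDegree k) {s : Finset V}
    (hs : G.IsNClique (k + 1) s) ⦃x y : V⦄ (hxy : G.Adj x y) : x ∈ s ↔ y ∈ s := by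
  classical
  suffices h : ∀ ⦃x y⦄, G.Adj x y → x ∈ s → y ∈ s from ⟨@h x y hxy, @h y x hxy.symm⟩
  intro x y hxy hx
  have heq : s.erase x = G.neighborFinset x :=
    eq_of_subset_of_card_le (erase_subset_neighborFinset hs hx) <| by
      rw [G.card_neighborFinset_eq_degree, hG, card_erase_of_mem hx, hs.card_eq,
        Nat.add_sub_cancel]
  have hy : y ∈ s.erase x := by simpa [heq] using hxy
  exact mem_of_mem_erase hy

theorem existsUnique_adj_notMem {k : ℕ} (hG : G.IsRegularOfDegree k) {s : Finset V}
    (hs : G.IsNClique k s) {a : V} (ha : a ∈ s) : ∃! b, G.Adj a b ∧ b ∉ s := by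
  classical
  have hpos : 0 < k := hs.card_eq ▸ card_pos.2 ⟨a, ha⟩
  have hcard : #(G.neighborFinset a \ s.erase a) = 1 := by
    rw [card_sdiff_of_subset (erase_subset_neighborFinset hs ha), card_erase_of_mem ha, hs.card_eq,
      G.card_neighborFinset_eq_degree, hG]
    omega
  obtain ⟨b, hb⟩ := card_eq_one.1 hcard
  have hmem (x : V) : G.Adj a x ∧ x ∉ s ↔ x = b := by
    rw [← mem_singleton, ← hb, mem_sdiff, mem_erase, SimpleGraph.mem_neighborFinset]
    exact and_congr_right fun hax ↦ by simp [hax.ne']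
  exact ⟨b, (hmem b).2 rfl, fun x ↦ (hmem x).1⟩

theorem twoApex_of_not_cliqueFree_five (hG : G.IsRegularOfDegree 4)
    (hV : Fintype.card V = 10) (h : ¬ G.CliqueFree 5) : G.TwoApex := by
  classical
  obtain ⟨s, hs⟩ := not_forall_not.1 h
  have hcompl := card_add_card_compl s
  rw [hs.card_eq] at hcompl
  obtain ⟨c, hc⟩ : s.Nonempty := card_pos.1 (by simp [hs.card_eq])
  obtain ⟨b, hb⟩ : sᶜ.Nonempty := card_pos.1 (by omega)
  have hbs : b ∉ s := mem_compl.1 hb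
  have hcard : #(s.subtype (· ∈ (({c, b}ᶜ : Finset V) : Set V))) = 4 := by
    have hfilter : s.filter (· ∈ (({c, b}ᶜ : Finset V) : Set V)) = s.erase c := by
      ext x
      simp
      grind
    rw [card_subtype, hfilter, card_erase_of_mem hc, hs.card_eq]
  have hverts : Fintype.card (({c, b}ᶜ : Finset V) : Set V) = 8 := by
    refine (Fintype.card_coe ({c, b}ᶜ : Finset V)).trans ?_
    rw [card_compl, card_pair (ne_of_mem_of_not_mem hc hbs), hV]
  refine twoApex_of_isPlanar_deletePair <| isPlanar_of_closed (fun x y hxy ↦ ?_) hcard.le ?_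
  · simpa using mem_iff_mem_of_isNClique_succ hG hs hxy
  · rw [hcard, hverts]

end Clique

/-- A quartic graph on ten vertices to which neither planarity criterion for `G - {a, b}` applies:
`twoApex_of_three_le_card_inter` is excluded by `codegree_le`, and `twoApex_of_triangle` by
`eq_or_eq_of_triangle`. -/
structure IsResidual {V : Type*} [Fintype V] [DecidableEq V] (G : SimpleGraph V)
    [DecidableRel G.Adj] : Prop where
  card_eq : Fintype.card V = 10
  degree_eq : G.IsRegularOfDegree 4
  codegree_le : ∀ ⦃a b⦄, a ≠ b → ¬ G.Adj a b → #(G.neighborFinset a ∩ G.neighborFinset b) ≤ 2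
  eq_or_eq_of_triangle : ∀ ⦃a b⦄, a ≠ b → ¬ G.Adj a b →
    2 ≤ #(G.neighborFinset a ∩ G.neighborFinset b) →
    ∀ ⦃u w x⦄, u ∈ symmDiff (G.neighborFinset a) (G.neighborFinset b) →
      w ∈ symmDiff (G.neighborFinset a) (G.neighborFinset b) →
      G.Adj u w → G.Adj x u → G.Adj x w → x = a ∨ x = b

namespace IsResidual

variable {V : Type*} [Fintype V] [DecidableEq V] {G : SimpleGraph V} [DecidableRel G.Adj]

theorem of_not_twoApex (hV : Fintype.card V = 10) (hG : G.IsRegularOfDegree 4)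
    (h : ¬ G.TwoApex) : IsResidual G where
  card_eq := hV
  degree_eq := hG
  codegree_le a b hne hab := by
    by_contra! hlt
    exact h (twoApex_of_three_le_card_inter hG hV hne hab hlt)
  eq_or_eq_of_triangle a b hne hab hcodeg u w x hu hw huw hxu hxw := by
    by_contra! hx
    exact h (twoApex_of_triangle hG hV hne hab hcodeg hu hw hx.1 hx.2 huw hxu hxw)

variable (hG : IsResidual G)
include hG

section Link

variable (v : V)

theorem card_neighborFinset_compl : #(Gᶜ.neighborFinset v) = 5 := by
  rw [Gᶜ.card_neighborFinset_eq_degree, G.degree_compl, hG.card_eq, hG.degree_eq]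

theorem sum_codegree_add_sum_codegree :
    ∑ b ∈ Gᶜ.neighborFinset v, #(G.neighborFinset b ∩ G.neighborFinset v)
      + ∑ x ∈ G.neighborFinset v, #(G.neighborFinset x ∩ G.neighborFinset v) = 12 := by
  have htotal : ∑ x ∈ G.neighborFinset v, (#(G.neighborFinset x ∩ G.neighborFinset v)
      + #(G.neighborFinset x ∩ (G.neighborFinset v)ᶜ)) = 16 := by
    simp only [card_neighborFinset_inter_add_card_inter_compl, hG.degree_eq _, sum_const,
      G.card_neighborFinset_eq_degree, smul_eq_mul]
  rw [sum_add_distrib, sum_card_neighborFinset_inter_comm G _ (G.neighborFinset v)ᶜ,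
    compl_neighborFinset_eq_insert, sum_insert (by simp), inter_self,
    G.card_neighborFinset_eq_degree, hG.degree_eq] at htotal
  omega

theorem codegree_le_of_mem_compl {b : V} (hb : b ∈ Gᶜ.neighborFinset v) :
    #(G.neighborFinset b ∩ G.neighborFinset v) ≤ 2 := by
  simp only [SimpleGraph.mem_neighborFinset, SimpleGraph.compl_adj] at hb
  exact hG.codegree_le hb.1.symm (mt G.adj_symm hb.2)

theorem exists_triangle : ∃ x y, G.Adj v x ∧ G.Adj v y ∧ G.Adj x y := by
  by_contra! hnone
  have hfar := sum_le_card_nsmul _ _ _ fun b hb ↦ hG.codegree_le_of_mem_compl v hb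
  have hnear : ∑ x ∈ G.neighborFinset v, #(G.neighborFinset x ∩ G.neighborFinset v) = 0 := by
    refine sum_eq_zero fun x hx ↦ card_eq_zero.2 <| eq_empty_of_forall_notMem fun y hy ↦ ?_
    simp only [mem_inter, SimpleGraph.mem_neighborFinset] at hx hy
    exact hnone x y hx hy.2 hy.1
  have := hG.sum_codegree_add_sum_codegree v
  rw [hG.card_neighborFinset_compl, smul_eq_mul] at hfar
  omega

end Link

section SparseLink

variable {v p q : V} (hsparse : ∀ x y, G.Adj v x → G.Adj v y → G.Adj x y → s(x, y) = s(p, q))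
include hsparse

omit hG in
theorem sum_codegree_le_two_of_sparse :
    ∑ x ∈ G.neighborFinset v, #(G.neighborFinset x ∩ G.neighborFinset v) ≤ 2 := by
  have hle (x : V) (hx : x ∈ G.neighborFinset v) :
      #(G.neighborFinset x ∩ G.neighborFinset v) ≤ if x ∈ ({p, q} : Finset V) then 1 else 0 := by
    simp only [SimpleGraph.mem_neighborFinset] at hx
    split_ifs with hpq
    · refine card_le_one.2 fun y hy z hz ↦ ?_
      simp only [mem_inter, SimpleGraph.mem_neighborFinset] at hy hz
      exact Sym2.congr_right.1 <|
        (hsparse x y hx hy.2 hy.1).trans (hsparse x z hx hz.2 hz.1).symm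
    · refine (card_eq_zero.2 <| eq_empty_of_forall_notMem fun y hy ↦ hpq ?_).le
      simp only [mem_inter, SimpleGraph.mem_neighborFinset] at hy
      simpa using (hsparse x y hx hy.2 hy.1).le (Sym2.mem_mk_left x y)
  calc ∑ x ∈ G.neighborFinset v, #(G.neighborFinset x ∩ G.neighborFinset v)
      ≤ #{x ∈ G.neighborFinset v | x ∈ ({p, q} : Finset V)} := by
        simpa only [sum_boole, Nat.cast_id] using sum_le_sum hle
    _ ≤ #({p, q} : Finset V) := card_le_card fun x hx ↦ (mem_filter.1 hx).2
    _ ≤ 2 := card_le_two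

theorem codegree_eq_two_of_sparse {b : V} (hb : b ∈ Gᶜ.neighborFinset v) :
    #(G.neighborFinset b ∩ G.neighborFinset v) = 2 := by
  have hle (b : V) (hb : b ∈ Gᶜ.neighborFinset v) := hG.codegree_le_of_mem_compl v hb
  refine (sum_eq_sum_iff_of_le hle).1 ((sum_le_sum hle).antisymm ?_) b hb
  have hnear := sum_codegree_le_two_of_sparse hsparse
  have htotal := hG.sum_codegree_add_sum_codegree v
  rw [sum_const, hG.card_neighborFinset_compl, smul_eq_mul]
  omega

theorem card_inter_compl_of_sparse {b : V} (hb : b ∈ Gᶜ.neighborFinset v) :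
    #(G.neighborFinset b ∩ Gᶜ.neighborFinset v) = 2 := by
  have hvb : v ∉ G.neighborFinset b := by
    simp only [SimpleGraph.mem_neighborFinset, SimpleGraph.compl_adj] at hb ⊢
    exact mt G.adj_symm hb.2
  have hsplit := card_neighborFinset_inter_add_card_inter_compl G b (G.neighborFinset v)
  rw [hG.codegree_eq_two_of_sparse hsparse hb, compl_neighborFinset_eq_insert,
    inter_insert_of_notMem hvb, hG.degree_eq] at hsplit
  omega

variable {r : V} (hvr : G.Adj v r) (hrp : r ≠ p) (hrq : r ≠ q)
include hvr hrp hrq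

omit [Fintype V] [DecidableEq V] hG [DecidableRel G.Adj] in
theorem not_adj_of_sparse {x : V} (hvx : G.Adj v x) : ¬ G.Adj r x := by
  intro hrx
  have := (hsparse r x hvr hvx hrx).le (Sym2.mem_mk_left r x)
  simp [hrp, hrq] at this

theorem card_inter_compl_eq_three_of_sparse :
    #(G.neighborFinset r ∩ Gᶜ.neighborFinset v) = 3 := by
  have hempty : G.neighborFinset r ∩ G.neighborFinset v = ∅ := by
    refine eq_empty_of_forall_notMem fun x hx ↦ ?_
    simp only [mem_inter, SimpleGraph.mem_neighborFinset] at hx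
    exact not_adj_of_sparse hsparse hvr hrp hrq hx.2 hx.1
  have hsplit := card_neighborFinset_inter_add_card_inter_compl G r (G.neighborFinset v)
  rw [hempty, compl_neighborFinset_eq_insert, inter_insert_of_mem (by simpa using hvr.symm),
    card_insert_of_notMem (by simp), hG.degree_eq, card_empty] at hsplit
  omega

/- A vertex `c` violating the inclusion `⊆` would contradict `eq_or_eq_of_triangle` for the pair
`v, c` and the triangle `r, s, t`. -/
theorem neighborFinset_inter_compl_of_sparse {s t : V}
    (hs : s ∈ G.neighborFinset r ∩ Gᶜ.neighborFinset v)
    (ht : t ∈ G.neighborFinset r ∩ Gᶜ.neighborFinset v) (hst : G.Adj s t) :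
    G.neighborFinset s ∩ Gᶜ.neighborFinset v
      = (G.neighborFinset r ∩ Gᶜ.neighborFinset v).erase s := by
  have hsub : G.neighborFinset s ∩ Gᶜ.neighborFinset v
      ⊆ (G.neighborFinset r ∩ Gᶜ.neighborFinset v).erase s := by
    intro c hc
    have hcodeg := hG.codegree_eq_two_of_sparse hsparse (mem_inter.1 hc).2
    simp only [mem_inter, mem_erase, SimpleGraph.mem_neighborFinset,
      SimpleGraph.compl_adj] at hs ht hc ⊢
    refine ⟨hc.1.ne', ?_, hc.2⟩
    by_contra hrc
    have htvc : t = v ∨ t = c :=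
      hG.eq_or_eq_of_triangle hc.2.1 hc.2.2 (by rw [inter_comm, hcodeg])
        (by simp [mem_symmDiff, hvr, mt G.adj_symm hrc])
        (by simp [mem_symmDiff, hc.1.symm, hs.2.2]) hs.1 ht.1.symm hst.symm
    rcases htvc with rfl | rfl
    · exact ht.2.1 rfl
    · exact hrc ht.1
  refine eq_of_subset_of_card_le hsub ?_
  rw [card_erase_of_mem hs, hG.card_inter_compl_eq_three_of_sparse hsparse hvr hrp hrq,
    hG.card_inter_compl_of_sparse hsparse (mem_inter.1 hs).2]

theorem neighborFinset_inter_compl_eq_erase_of_sparse {c : V}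
    (hc : c ∈ G.neighborFinset r ∩ Gᶜ.neighborFinset v) :
    G.neighborFinset c ∩ Gᶜ.neighborFinset v
      = (G.neighborFinset r ∩ Gᶜ.neighborFinset v).erase c := by
  obtain ⟨s, t, hrs, hrt, hst⟩ := hG.exists_triangle r
  have hmem {x y : V} (hrx : G.Adj r x) (hry : G.Adj r y) (hxy : G.Adj x y) :
      x ∈ G.neighborFinset r ∩ Gᶜ.neighborFinset v := by
    simp only [mem_inter, SimpleGraph.mem_neighborFinset, SimpleGraph.compl_adj]
    refine ⟨hrx, ?_, fun hvx ↦ not_adj_of_sparse hsparse hvr hrp hrq hvx hrx⟩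
    rintro rfl
    exact not_adj_of_sparse hsparse hvr hrp hrq hxy hry
  have hs := hmem hrs hrt hst
  have hs_eq := hG.neighborFinset_inter_compl_of_sparse hsparse hvr hrp hrq hs
    (hmem hrt hrs hst.symm) hst
  rcases eq_or_ne c s with rfl | hcs
  · exact hs_eq
  · have hsc : c ∈ G.neighborFinset s ∩ Gᶜ.neighborFinset v := by
      rw [hs_eq]
      exact mem_erase.2 ⟨hcs, hc⟩
    rw [mem_inter, SimpleGraph.mem_neighborFinset] at hsc
    exact hG.neighborFinset_inter_compl_of_sparse hsparse hvr hrp hrq hc hs hsc.1.symm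

theorem false_of_sparse : False := by
  set M := Gᶜ.neighborFinset v
  set T := G.neighborFinset r ∩ M
  have hcard : #(M \ T) = 2 := by
    rw [card_sdiff_of_subset inter_subset_right, hG.card_neighborFinset_compl,
      hG.card_inter_compl_eq_three_of_sparse hsparse hvr hrp hrq]
  obtain ⟨k, hk⟩ : (M \ T).Nonempty := card_pos.1 (by omega)
  have hsub : G.neighborFinset k ∩ M ⊆ (M \ T).erase k := by
    intro c hc
    simp only [mem_inter, SimpleGraph.mem_neighborFinset] at hc
    refine mem_erase.2 ⟨hc.1.ne', mem_sdiff.2 ⟨hc.2, fun hcT ↦ (mem_sdiff.1 hk).2 ?_⟩⟩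
    have hkc : k ∈ G.neighborFinset c ∩ M := by simp [hc.1.symm, (mem_sdiff.1 hk).1]
    rw [hG.neighborFinset_inter_compl_eq_erase_of_sparse hsparse hvr hrp hrq hcT] at hkc
    exact mem_of_mem_erase hkc
  have hle := card_le_card hsub
  rw [hG.card_inter_compl_of_sparse hsparse (mem_sdiff.1 hk).1, card_erase_of_mem hk] at hle
  omega

end SparseLink

theorem exists_triangle_ne (v : V) (e : Sym2 V) :
    ∃ x y, G.Adj v x ∧ G.Adj v y ∧ G.Adj x y ∧ s(x, y) ≠ e := by
  induction e with | _ p q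
  by_contra! hsparse
  have hcard : 0 < #(G.neighborFinset v \ {p, q}) := by
    have := le_card_sdiff {p, q} (G.neighborFinset v)
    have : #{p, q} ≤ 2 := card_le_two
    rw [G.card_neighborFinset_eq_degree, hG.degree_eq] at *
    omega
  obtain ⟨r, hr⟩ := card_pos.1 hcard
  simp only [mem_sdiff, mem_insert, mem_singleton, not_or, SimpleGraph.mem_neighborFinset] at hr
  exact hG.false_of_sparse hsparse hr.1 hr.2.1 hr.2.2

end IsResidual

section Diamond

variable {V : Type*} {G : SimpleGraph V}

/-- `p, r, a, q` induce a diamond, i.e. `K₄` minus an edge. The missing edge is `pr`, so `a` and `q`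
are the two middle vertices. -/
structure IsInducedDiamond (G : SimpleGraph V) (p r a q : V) : Prop where
  ne : p ≠ r
  not_adj : ¬ G.Adj p r
  adj_pa : G.Adj p a
  adj_pq : G.Adj p q
  adj_ra : G.Adj r a
  adj_rq : G.Adj r q
  adj_aq : G.Adj a q

namespace IsInducedDiamond

variable {p r a q : V}

theorem swap (d : IsInducedDiamond G p r a q) : IsInducedDiamond G r p a q :=
  ⟨d.ne.symm, mt G.adj_symm d.not_adj, d.adj_ra, d.adj_rq, d.adj_pa, d.adj_pq, d.adj_aq⟩

theorem swap_right (d : IsInducedDiamond G p r a q) : IsInducedDiamond G p r q a :=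
  ⟨d.ne, d.not_adj, d.adj_pq, d.adj_pa, d.adj_rq, d.adj_ra, d.adj_aq.symm⟩

variable [Fintype V] [DecidableEq V] [DecidableRel G.Adj] (d : IsInducedDiamond G p r a q)
  (hG : IsResidual G)
include d hG

theorem inter_eq : G.neighborFinset p ∩ G.neighborFinset r = {a, q} := by
  have hsub : {a, q} ⊆ G.neighborFinset p ∩ G.neighborFinset r := by
    simp [insert_subset_iff, d.adj_pa, d.adj_pq, d.adj_ra, d.adj_rq]
  refine (eq_of_subset_of_card_le hsub ?_).symm
  rw [card_pair d.adj_aq.ne]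
  exact hG.codegree_le d.ne d.not_adj

theorem eq_or_eq_of_adj {x : V} (hpx : G.Adj p x) (hrx : G.Adj r x) : x = a ∨ x = q := by
  have hx : x ∈ G.neighborFinset p ∩ G.neighborFinset r := by simp [hpx, hrx]
  simpa [d.inter_eq hG] using hx

theorem card_inter : 2 ≤ #(G.neighborFinset p ∩ G.neighborFinset r) := by
  rw [d.inter_eq hG, card_pair d.adj_aq.ne]

theorem eq_or_eq_of_triangle {u w x : V}
    (hu : u ∈ symmDiff (G.neighborFinset p) (G.neighborFinset r))
    (hw : w ∈ symmDiff (G.neighborFinset p) (G.neighborFinset r))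
    (huw : G.Adj u w) (hxu : G.Adj x u) (hxw : G.Adj x w) : x = p ∨ x = r :=
  hG.eq_or_eq_of_triangle d.ne d.not_adj (d.card_inter hG) hu hw huw hxu hxw

theorem exists_adj_iff : ∃ y y', y ≠ y' ∧ y ∉ ({p, r, a, q} : Finset V) ∧
    y' ∉ ({p, r, a, q} : Finset V) ∧ ∀ x, G.Adj p x ↔ x = a ∨ x = q ∨ x = y ∨ x = y' := by
  have hsub : {a, q} ⊆ G.neighborFinset p := by simp [insert_subset_iff, d.adj_pa, d.adj_pq]
  have hcard : #(G.neighborFinset p \ {a, q}) = 2 := by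
    rw [card_sdiff_of_subset hsub, card_pair d.adj_aq.ne, G.card_neighborFinset_eq_degree,
      hG.degree_eq]
  obtain ⟨y, y', hne, heq⟩ := card_eq_two.1 hcard
  have hmem (x : V) : (G.Adj p x ∧ x ≠ a ∧ x ≠ q) ↔ x = y ∨ x = y' := by
    simpa using Finset.ext_iff.1 heq x
  have hnot {x : V} (hx : x = y ∨ x = y') : x ∉ ({p, r, a, q} : Finset V) := by
    obtain ⟨hpx, hxa, hxq⟩ := (hmem x).2 hx
    have hxr : x ≠ r := by
      rintro rfl
      exact d.not_adj hpx
    simp [hpx.ne', hxa, hxq, hxr]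
  refine ⟨y, y', hne, hnot (.inl rfl), hnot (.inr rfl), fun x ↦ ?_⟩
  have := d.adj_pa
  have := d.adj_pq
  grind

theorem exists_remote_eq : ∃ z z',
    ({p, r} ∪ (G.neighborFinset p ∪ G.neighborFinset r))ᶜ = ({z, z'} : Finset V) := by
  have hunion := card_union_add_card_inter (G.neighborFinset p) (G.neighborFinset r)
  rw [d.inter_eq hG, card_pair d.adj_aq.ne, G.card_neighborFinset_eq_degree,
    G.card_neighborFinset_eq_degree, hG.degree_eq, hG.degree_eq] at hunion
  have hdisj : Disjoint {p, r} (G.neighborFinset p ∪ G.neighborFinset r) := by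
    simp [d.not_adj, mt G.adj_symm d.not_adj]
  have hcard : #({p, r} ∪ (G.neighborFinset p ∪ G.neighborFinset r))ᶜ = 2 := by
    rw [card_compl, card_union_of_disjoint hdisj, card_pair d.ne, hG.card_eq]
    omega
  obtain ⟨z, z', -, heq⟩ := card_eq_two.1 hcard
  exact ⟨z, z', heq⟩

section Remote

variable {y y' z z' : V} (hp : ∀ x, G.Adj p x ↔ x = a ∨ x = q ∨ x = y ∨ x = y')
  (hz : ∀ x, (x = z ∨ x = z') ↔ x ≠ p ∧ x ≠ r ∧ ¬ G.Adj p x ∧ ¬ G.Adj r x)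
include hp hz

theorem triangle_eq (hya : ¬ G.Adj y a) (hyq : ¬ G.Adj y q) {x₁ x₂ : V}
    (h₁ : G.Adj y x₁) (h₂ : G.Adj y x₂) (h₁₂ : G.Adj x₁ x₂) :
    s(x₁, x₂) = s(p, y') ∨ s(x₁, x₂) = s(z, z') := by
  have hpy : G.Adj p y := (hp y).2 (by simp)
  have hry : ¬ G.Adj r y := fun hry ↦ by
    rcases d.eq_or_eq_of_adj hG hpy hry with rfl | rfl
    · exact hyq d.adj_aq
    · exact hya d.adj_aq.symm
  have hy : y ∈ symmDiff (G.neighborFinset p) (G.neighborFinset r) := by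
    simp [mem_symmDiff, hpy, hry]
  have hclass {x w : V} (hx : G.Adj y x) (hw : G.Adj y w) (hxw : G.Adj x w) :
      x = p ∨ x = y' ∧ w = p ∨ x = z ∨ x = z' := by
    by_cases hxs : x ∈ symmDiff (G.neighborFinset p) (G.neighborFinset r)
    · have hwpr := d.eq_or_eq_of_triangle hG hy hxs hx hw.symm hxw.symm
      grind [G.adj_comm, G.irrefl]
    · have := d.eq_or_eq_of_adj hG (x := x)
      simp only [mem_symmDiff, SimpleGraph.mem_neighborFinset] at hxs
      grind [G.adj_comm, G.irrefl]
  have := hclass h₁ h₂ h₁₂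
  have := hclass h₂ h₁ h₁₂.symm
  simp only [Sym2.eq_iff]
  grind [G.adj_comm, G.irrefl]

theorem adj_of_not_adj (hya : ¬ G.Adj y a) (hyq : ¬ G.Adj y q) :
    G.Adj y y' ∧ G.Adj y z ∧ G.Adj y z' ∧ ¬ G.Adj y' z ∧ ¬ G.Adj y' z' := by
  obtain ⟨x₁, x₂, h₁, h₂, h₁₂, hne⟩ := hG.exists_triangle_ne y s(p, y')
  have hzz := (d.triangle_eq hG hp hz hya hyq h₁ h₂ h₁₂).resolve_left hne
  obtain ⟨w₁, w₂, k₁, k₂, k₁₂, hne'⟩ := hG.exists_triangle_ne y s(z, z')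
  have hpy' := (d.triangle_eq hG hp hz hya hyq k₁ k₂ k₁₂).resolve_right hne'
  have hyy' : G.Adj y y' := by grind [Sym2.eq_iff]
  have hsymm {x : V} (hpx : G.Adj p x) (hxa : x ≠ a) (hxq : x ≠ q) :
      x ∈ symmDiff (G.neighborFinset p) (G.neighborFinset r) := by
    have := d.eq_or_eq_of_adj hG hpx
    simp only [mem_symmDiff, SimpleGraph.mem_neighborFinset]
    tauto
  have hys := hsymm ((hp y).2 (by simp)) (by grind [d.adj_aq]) (by grind [d.adj_aq.symm])
  have hys' := hsymm ((hp y').2 (by simp)) (by grind) (by grind)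
  have hnot {x : V} (hx : x = z ∨ x = z') (hyx : G.Adj y x) : ¬ G.Adj y' x := fun hyx' ↦ by
    obtain ⟨hxp, hxr, -⟩ := (hz x).1 hx
    exact (d.eq_or_eq_of_triangle hG hys hys' hyy' hyx.symm hyx'.symm).elim hxp hxr
  have hyz : G.Adj y z := by grind [Sym2.eq_iff]
  have hyz' : G.Adj y z' := by grind [Sym2.eq_iff]
  exact ⟨hyy', hyz, hyz', hnot (.inl rfl) hyz, hnot (.inr rfl) hyz'⟩

end Remote

theorem exists_adj_iff_and_adj_middle {z z' : V}
    (hz : ∀ x, (x = z ∨ x = z') ↔ x ≠ p ∧ x ≠ r ∧ ¬ G.Adj p x ∧ ¬ G.Adj r x) :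
    ∃ y y', y ≠ y' ∧ y ∉ ({p, r, a, q} : Finset V) ∧ y' ∉ ({p, r, a, q} : Finset V) ∧
      (∀ x, G.Adj p x ↔ x = a ∨ x = q ∨ x = y ∨ x = y') ∧ (G.Adj y' a ∨ G.Adj y' q) := by
  obtain ⟨y, y', hne, hy, hy', hp⟩ := d.exists_adj_iff hG
  have hp' (x : V) : G.Adj p x ↔ x = a ∨ x = q ∨ x = y' ∨ x = y := by rw [hp]; tauto
  by_cases hadj : G.Adj y a ∨ G.Adj y q
  · exact ⟨y', y, hne.symm, hy', hy, hp', hadj⟩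
  · refine ⟨y, y', hne, hy, hy', hp, ?_⟩
    by_contra hadj'
    rw [not_or] at hadj hadj'
    exact (d.adj_of_not_adj hG hp hz hadj.1 hadj.2).2.2.2.1
      (d.adj_of_not_adj hG hp' hz hadj'.1 hadj'.2).2.1

theorem eq_of_adj_middle {x y : V} (hx : x ∉ ({p, r, a, q} : Finset V))
    (hy : y ∉ ({p, r, a, q} : Finset V)) (hxa : G.Adj x a) (hya : G.Adj y a) : x = y := by
  have hsub : {p, r, q} ⊆ G.neighborFinset a := by
    simp [insert_subset_iff, d.adj_pa.symm, d.adj_ra.symm, d.adj_aq]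
  have hcard : #(G.neighborFinset a \ {p, r, q}) = 1 := by
    rw [card_sdiff_of_subset hsub, G.card_neighborFinset_eq_degree, hG.degree_eq,
      card_eq_three.2 ⟨p, r, q, d.ne, d.adj_pq.ne, d.adj_rq.ne, rfl⟩]
  exact card_le_one.1 hcard.le x (by simp_all [G.adj_comm]) y (by simp_all [G.adj_comm])

theorem not_adj_middle {y t x : V} (hyt : y ≠ t) (hy : y ∉ ({p, r, a, q} : Finset V))
    (ht : t ∉ ({p, r, a, q} : Finset V)) (hx : x ∉ ({p, r, a, q} : Finset V))
    (hymid : G.Adj y a ∨ G.Adj y q) (htmid : G.Adj t a ∨ G.Adj t q) (hxy : x ≠ y) (hxt : x ≠ t) :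
    ¬ G.Adj x a ∧ ¬ G.Adj x q := by
  have ha {x y : V} (hx : x ∉ ({p, r, a, q} : Finset V)) (hy : y ∉ ({p, r, a, q} : Finset V)) :=
    d.eq_of_adj_middle hG hx hy
  have hq {x y : V} (hx : x ∉ ({p, r, a, q} : Finset V)) (hy : y ∉ ({p, r, a, q} : Finset V)) :=
    d.swap_right.eq_of_adj_middle hG (x := x) (y := y) (by grind) (by grind)
  grind

/- The common neighbours `a` and `q` have room for only one further edge each, and each of `p` and
`r` claims one of these for a private neighbour. So the other private neighbours and the remote
vertices avoid `a` and `q`, which leaves too few neighbours for `z`. -/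
theorem false_of_adj_middle {y y' t t' z z' : V} (hyy' : y ≠ y') (htt' : t ≠ t')
    (hy : y ∉ ({p, r, a, q} : Finset V)) (hy' : y' ∉ ({p, r, a, q} : Finset V))
    (ht : t ∉ ({p, r, a, q} : Finset V)) (ht' : t' ∉ ({p, r, a, q} : Finset V))
    (hp : ∀ x, G.Adj p x ↔ x = a ∨ x = q ∨ x = y ∨ x = y')
    (hr : ∀ x, G.Adj r x ↔ x = a ∨ x = q ∨ x = t ∨ x = t')
    (hz : ∀ x, (x = z ∨ x = z') ↔ x ≠ p ∧ x ≠ r ∧ ¬ G.Adj p x ∧ ¬ G.Adj r x)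
    (hymid : G.Adj y' a ∨ G.Adj y' q) (htmid : G.Adj t' a ∨ G.Adj t' q) : False := by
  have hdisj {x w : V} (hx : x ∉ ({p, r, a, q} : Finset V)) (hpx : G.Adj p x)
      (hrw : G.Adj r w) : x ≠ w := by
    rintro rfl
    have := d.eq_or_eq_of_adj hG hpx hrw
    grind
  have hpy : G.Adj p y := (hp y).2 (by simp)
  have hpy' : G.Adj p y' := (hp y').2 (by simp)
  have hrt : G.Adj r t := (hr t).2 (by simp)
  have hrt' : G.Adj r t' := (hr t').2 (by simp)
  have hfar {x : V} (hx : x ∉ ({p, r, a, q} : Finset V)) (hxy' : x ≠ y') (hxt' : x ≠ t') :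
      ¬ G.Adj x a ∧ ¬ G.Adj x q :=
    d.not_adj_middle hG (hdisj hy' hpy' hrt') hy' ht' hx hymid htmid hxy' hxt'
  obtain ⟨hya, hyq⟩ := hfar hy hyy' (hdisj hy hpy hrt')
  obtain ⟨hta, htq⟩ := hfar ht (hdisj hy' hpy' hrt).symm htt'
  obtain ⟨hzp, hzr, hpz, hrz⟩ := (hz z).1 (.inl rfl)
  obtain ⟨hza, hzq⟩ := hfar (x := z) (by have := d.adj_pa; have := d.adj_pq; grind)
    (by grind) (by grind)
  obtain ⟨-, -, -, hy'z, -⟩ := d.adj_of_not_adj hG hp hz hya hyq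
  obtain ⟨-, -, -, ht'z, -⟩ := d.swap.adj_of_not_adj hG hr (fun x ↦ by rw [hz]; tauto) hta htq
  have hsub : G.neighborFinset z ⊆ {y, t, z'} := by
    intro x hx
    rw [SimpleGraph.mem_neighborFinset] at hx
    have := (hz x).2
    have := hp x
    have := hr x
    simp only [mem_insert, mem_singleton]
    grind [G.adj_comm, G.irrefl]
  have hle := (card_le_card hsub).trans card_le_three
  rw [G.card_neighborFinset_eq_degree, hG.degree_eq] at hle
  omega

end IsInducedDiamond

theorem IsResidual.not_isInducedDiamond [Fintype V] [DecidableEq V] [DecidableRel G.Adj]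
    (hG : IsResidual G) ⦃p r a q : V⦄ : ¬ IsInducedDiamond G p r a q := by
  intro d
  obtain ⟨z, z', hzz⟩ := d.exists_remote_eq hG
  have hz (x : V) : (x = z ∨ x = z') ↔ x ≠ p ∧ x ≠ r ∧ ¬ G.Adj p x ∧ ¬ G.Adj r x := by
    have hx := Finset.ext_iff.1 hzz x
    simp only [mem_compl, mem_union, mem_insert, mem_singleton, SimpleGraph.mem_neighborFinset]
      at hx
    tauto
  obtain ⟨y, y', hyy', hy, hy', hp, hymid⟩ := d.exists_adj_iff_and_adj_middle hG hz
  obtain ⟨t, t', htt', ht, ht', hr, htmid⟩ :=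
    d.swap.exists_adj_iff_and_adj_middle hG (z := z) (z' := z') fun x ↦ by rw [hz]; tauto
  rw [insert_comm] at ht ht'
  exact d.false_of_adj_middle hG hyy' htt' hy hy' ht ht' hp hr hz hymid htmid

end Diamond

section DiamondFree

variable {V : Type*} {G : SimpleGraph V} (hdiamond : ∀ ⦃p r a q⦄, ¬ IsInducedDiamond G p r a q)
include hdiamond

theorem adj_of_adj_of_adj {p r a q : V} (hne : p ≠ r) (haq : G.Adj a q) (hpa : G.Adj p a)
    (hpq : G.Adj p q) (hra : G.Adj r a) (hrq : G.Adj r q) : G.Adj p r := by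
  by_contra hpr
  exact hdiamond ⟨hne, hpr, hpa, hpq, hra, hrq, haq⟩

section Insert

variable [DecidableEq V]

theorem isNClique_insert {n : ℕ} {Q : Finset V} (hQ : G.IsNClique n Q) {x u v : V} (hx : x ∉ Q)
    (hu : u ∈ Q) (hv : v ∈ Q) (huv : u ≠ v) (hxu : G.Adj x u) (hxv : G.Adj x v) :
    G.IsNClique (n + 1) (insert x Q) := by
  refine hQ.insert fun w hw ↦ ?_
  by_cases hwu : w = u
  · exact hwu ▸ hxu
  by_cases hwv : w = v
  · exact hwv ▸ hxv
  exact adj_of_adj_of_adj hdiamond (ne_of_mem_of_not_mem hw hx).symm (hQ.isClique hu hv huv)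
    hxu hxv (hQ.isClique hw hu hwu) (hQ.isClique hw hv hwv)

theorem exists_isNClique_four {s t : Finset V} (hs : G.IsNClique 3 s) (ht : G.IsNClique 3 t)
    (hst : s ≠ t) (hcard : 2 ≤ #(s ∩ t)) : ∃ z ∈ s, G.IsNClique 4 (insert z t) := by
  obtain ⟨u, hu, v, hv, huv⟩ := one_lt_card.1 hcard
  rw [mem_inter] at hu hv
  obtain ⟨z, hzs, hzt⟩ := not_subset.1 fun hsub ↦
    hst (eq_of_subset_of_card_le hsub (ht.card_eq.trans hs.card_eq.symm).le)
  exact ⟨z, hzs, isNClique_insert hdiamond ht hzt hu.2 hv.2 huv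
    (hs.isClique hzs hu.1 (ne_of_mem_of_not_mem hu.2 hzt).symm)
    (hs.isClique hzs hv.1 (ne_of_mem_of_not_mem hv.2 hzt).symm)⟩

end Insert

theorem edgeDisjointTriangles (hfree : G.CliqueFree 4) : G.EdgeDisjointTriangles := by
  classical
  intro s hs t ht hst
  by_contra hcard
  rw [← coe_inter, Set.not_subsingleton_iff] at hcard
  obtain ⟨z, -, hz⟩ := exists_isNClique_four hdiamond hs ht hst
    (one_lt_card_iff_nontrivial.2 hcard)
  exact hfree _ hz

variable [Fintype V] [DecidableEq V] [DecidableRel G.Adj]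

theorem card_neighborFinset_inter_le_one (hfree : G.CliqueFree 5) {Q : Finset V}
    (hQ : G.IsNClique 4 Q) {x : V} (hx : x ∉ Q) : #(G.neighborFinset x ∩ Q) ≤ 1 := by
  refine card_le_one.2 fun u hu v hv ↦ by_contra fun huv ↦ ?_
  simp only [mem_inter, SimpleGraph.mem_neighborFinset] at hu hv
  exact hfree _ (isNClique_insert hdiamond hQ hx hu.2 hv.2 huv hu.1 hv.1)

end DiamondFree

namespace IsResidual

variable {V : Type*} [Fintype V] [DecidableEq V] {G : SimpleGraph V} [DecidableRel G.Adj]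
  (hG : IsResidual G)
include hG

theorem exists_isNClique_four_of_forall_not_adj {v w : V} (hvw : G.Adj v w)
    (hnone : ∀ x, G.Adj v x → ¬ G.Adj w x) : ∃ K, G.IsNClique 4 K ∧ v ∈ K ∧ w ∉ K := by
  obtain ⟨x, y, hvx, hvy, hxy, -⟩ := hG.exists_triangle_ne v s(v, v)
  obtain ⟨x', y', hvx', hvy', hxy', hne⟩ := hG.exists_triangle_ne v s(x, y)
  have hs := SimpleGraph.is3Clique_triple_iff.2 ⟨hvx, hvy, hxy⟩
  have ht := SimpleGraph.is3Clique_triple_iff.2 ⟨hvx', hvy', hxy'⟩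
  have hst : ({v, x, y} : Finset V) ≠ {v, x', y'} := fun heq ↦ by
    have hx' : x' ∈ ({v, x, y} : Finset V) := by simp [heq]
    have hy' : y' ∈ ({v, x, y} : Finset V) := by simp [heq]
    simp only [mem_insert, mem_singleton, hvx'.ne', hvy'.ne', false_or] at hx' hy'
    have := hxy'.ne
    grind [Sym2.eq_iff]
  have hne_w {a b : V} (hvb : G.Adj v b) (hab : G.Adj a b) : a ≠ w := by
    rintro rfl
    exact hnone b hvb hab
  have hsub : {v, x, y} ∪ {v, x', y'} ⊆ insert v ((G.neighborFinset v).erase w) := by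
    simp [insert_subset_iff, hvx, hvy, hvx', hvy', hne_w hvy hxy,
      hne_w hvx hxy.symm, hne_w hvy' hxy', hne_w hvx' hxy'.symm]
  have hw : w ∉ insert v ((G.neighborFinset v).erase w) := by simp [hvw.ne']
  have hunion : #({v, x, y} ∪ {v, x', y'}) ≤ 4 := by
    refine (card_le_card hsub).trans ?_
    rw [card_insert_of_notMem (by simp), card_erase_of_mem (by simpa using hvw),
      G.card_neighborFinset_eq_degree, hG.degree_eq]
  have hinter := card_union_add_card_inter {v, x, y} {v, x', y'}
  rw [hs.card_eq, ht.card_eq] at hinter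
  obtain ⟨z, hz, hK⟩ := exists_isNClique_four hG.not_isInducedDiamond hs ht hst (by omega)
  refine ⟨_, hK, by simp, fun hwK ↦ hw (hsub ?_)⟩
  rcases mem_insert.1 hwK with rfl | hwt
  · exact mem_union_left _ hz
  · exact mem_union_right _ hwt

theorem not_disjoint_of_isNClique_four (hfree : G.CliqueFree 5) {Q K : Finset V}
    (hQ : G.IsNClique 4 Q) (hK : G.IsNClique 4 K) : ¬ Disjoint Q K := by
  intro hdisj
  have hcompl : #(Q ∪ K)ᶜ = 2 := by
    rw [card_compl, card_union_of_disjoint hdisj, hQ.card_eq, hK.card_eq, hG.card_eq]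
  obtain ⟨u, hu⟩ : (Q ∪ K)ᶜ.Nonempty := card_pos.1 (by omega)
  have huQK : u ∉ Q ∧ u ∉ K := by simpa using hu
  have hleQ := card_neighborFinset_inter_le_one hG.not_isInducedDiamond hfree hQ huQK.1
  have hleK := card_neighborFinset_inter_le_one hG.not_isInducedDiamond hfree hK huQK.2
  have hrest : #(G.neighborFinset u ∩ (Q ∪ K)ᶜ) ≤ 1 := by
    refine (card_le_card (t := (Q ∪ K)ᶜ.erase u) fun x hx ↦ ?_).trans ?_
    · rw [mem_inter, SimpleGraph.mem_neighborFinset] at hx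
      exact mem_erase.2 ⟨hx.1.ne', hx.2⟩
    · rw [card_erase_of_mem hu, hcompl]
  have hsplit := card_neighborFinset_inter_add_card_inter_compl G u (Q ∪ K)
  have hunion := card_union_le (G.neighborFinset u ∩ Q) (G.neighborFinset u ∩ K)
  rw [← inter_union_distrib_left] at hunion
  rw [hG.degree_eq] at hsplit
  omega

theorem cliqueFree_four (hfree : G.CliqueFree 5) : G.CliqueFree 4 := by
  intro Q hQ
  obtain ⟨a, ha⟩ : Q.Nonempty := card_pos.1 (by simp [hQ.card_eq])
  obtain ⟨b, ⟨hab, hbQ⟩, hunique⟩ := existsUnique_adj_notMem hG.degree_eq hQ ha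
  have hinter := card_neighborFinset_inter_le_one hG.not_isInducedDiamond hfree hQ hbQ
  have hnone {x : V} (hbx : G.Adj b x) (hax : G.Adj a x) : False := by
    have hxQ : x ∈ Q := by_contra fun hxQ ↦ hbx.ne' (hunique x ⟨hax, hxQ⟩)
    exact hax.ne <|
      card_le_one.1 hinter a (by simp [hab.symm, ha]) x (by simp [hbx, hxQ])
  obtain ⟨K, hK, hbK, haK⟩ := hG.exists_isNClique_four_of_forall_not_adj hab.symm
    fun x hbx hax ↦ hnone hbx hax
  have hdisj : Disjoint Q K := by
    refine disjoint_left.2 fun x hxQ hxK ↦ ?_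
    exact hnone (hK.isClique hbK hxK (ne_of_mem_of_not_mem hxQ hbQ).symm)
      (hQ.isClique ha hxQ (ne_of_mem_of_not_mem hxK haK).symm)
  exact hG.not_disjoint_of_isNClique_four hfree hQ hK hdisj

theorem locallyLinear (hfree : G.CliqueFree 5) : G.LocallyLinear := by
  have hfree4 := hG.cliqueFree_four hfree
  refine ⟨edgeDisjointTriangles hG.not_isInducedDiamond hfree4, fun v w hvw ↦ ?_⟩
  by_contra! hnone
  obtain ⟨K, hK, -⟩ := hG.exists_isNClique_four_of_forall_not_adj hvw fun x hvx hwx ↦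
    hnone {v, w, x} (SimpleGraph.is3Clique_triple_iff.2 ⟨hvw, hvx, hwx⟩) (by simp) (by simp)
  exact hfree4 K hK

theorem not_cliqueFree_five : ¬ G.CliqueFree 5 := by
  intro hfree
  have hlinear := hG.locallyLinear hfree
  have htriangles := hlinear.card_edgeFinset
  have hedges := G.sum_degrees_eq_twice_card_edges
  simp only [hG.degree_eq _, sum_const, card_univ, hG.card_eq, smul_eq_mul] at hedges
  omega

end IsResidual

end QuarticTwoApex

/-- A graph with 10 vertices and 20 edges in which every vertex has degree exactly 4
is 2-apex. -/
theorem stmt12 {V : Type*} [Fintype V] (G : SimpleGraph V)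
    (hV : Fintype.card V = 10) (hE : G.edgeSet.ncard = 20)
    (hdeg : ∀ v : V, (G.neighborSet v).ncard = 4) :
    G.TwoApex := by
  classical
  have hregular : G.IsRegularOfDegree 4 := fun v ↦
    (Set.ncard_eq_toFinset_card' (G.neighborSet v)).symm.trans (hdeg v)
  by_contra hG
  have hresidual := QuarticTwoApex.IsResidual.of_not_twoApex hV hregular hG
  exact hG <|
    QuarticTwoApex.twoApex_of_not_cliqueFree_five hregular hV hresidual.not_cliqueFree_five
end

section
/- Let G be a finite simple graph with 11 vertices and 20 edges whose maximum degree equals 4. Then G is 2-apex. -/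
/-!
A vertex of degree at most two can be suppressed without losing a `K₅` or `K₃,₃` minor, so a
nonplanar graph contains a subdivision of one of these two graphs. The excess
`∑ v, (degree v - 2)` of a subdivision is 10 for `K₅` and 6 for `K₃,₃`, so a nonplanar graph of
excess `6 + m` with `m ≤ 3` contains a subdivision of `K₃,₃`, and at most `m` units of excess can
be spent on edges and vertices outside it. Since `K₃,₃` is triangle-free, every triangle that meets
the subdivision costs two units.

Suppressing a vertex of degree at most two reduces the theorem to graphs with ten vertices and
maximum degree four. If such a graph is 4-regular, one finds two disjoint triangles and two
nonadjacent vertices off them, whose deletion leaves an excess of only 8. If it is not, joining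
nonadjacent vertices of degree less than four makes these vertices a clique, and deleting a
suitable pair leaves too few vertices of degree three.

Otherwise `G` has four vertices of degree three and seven of degree four. If the deletion of no pair
makes `G` planar, counting common neighbors over all pairs of vertices of degree four yields a
triangle `T` of such vertices. When two nonadjacent vertices `a`, `b` of degree four off `T` have
`m` common neighbors of degree three, `G - {a, b}` has excess `6 + m`, and `T` forces `2 ≤ m`. As
each of `a` and `b` has at most three neighbors of degree three, this determines the adjacencies
between the vertices of degree four so tightly that no graph remains.
-/

namespace ApexGraph

open SimpleGraph Finset
open scoped Classical

variable {V V' W : Type*}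

theorem connected_of_surjective {G : SimpleGraph V} {G' : SimpleGraph V'} (φ : V → V')
    (hsurj : Function.Surjective φ)
    (hφ : ∀ x y, G.Adj x y → φ x = φ y ∨ G'.Adj (φ x) (φ y)) (hG : G.Connected) :
    G'.Connected := by
  have reach : ∀ x y, G.Walk x y → G'.Reachable (φ x) (φ y) := by
    intro x y p
    induction p with
    | nil => rfl
    | cons h _ ih =>
      rcases hφ _ _ h with h | h
      · exact h ▸ ih
      · exact h.reachable.trans ih
  have : Nonempty V' := hG.nonempty.map φ
  refine Connected.mk fun x y ↦ ?_
  obtain ⟨a, rfl⟩ := hsurj x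
  obtain ⟨b, rfl⟩ := hsurj y
  exact reach a b (hG.preconnected a b).some

/-- The family `f` of branch sets exhibits `K` as a minor of `G`. Nonemptiness of the branch sets
is part of their connectedness, and disjointness is stated elementwise. -/
structure IsMinorModel (K : SimpleGraph W) (G : SimpleGraph V) (f : W → Set V) : Prop where
  connected : ∀ w, (G.induce (f w)).Connected
  eq_of_mem : ∀ {w w' x}, x ∈ f w → x ∈ f w' → w = w'
  exists_adj : ∀ {w w'}, K.Adj w w' → ∃ x ∈ f w, ∃ y ∈ f w', G.Adj x y

theorem isMinor_iff_exists_isMinorModel {K : SimpleGraph W} {G : SimpleGraph V} :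
    K.IsMinor G ↔ ∃ f, IsMinorModel K G f := by
  constructor
  · rintro ⟨f, -, hconn, hdisj, hadj⟩
    refine ⟨f, hconn, fun {w w' x} hx hx' ↦ ?_, fun h ↦ hadj h⟩
    by_contra hne
    exact Set.disjoint_left.1 (hdisj hne) hx hx'
  · rintro ⟨f, hf⟩
    refine ⟨f, fun w ↦ ?_, hf.connected, fun w w' hne ↦ ?_, fun w w' h ↦ hf.exists_adj h⟩
    · obtain ⟨x⟩ := (hf.connected w).nonempty
      exact ⟨x, x.2⟩
    · exact Set.disjoint_left.2 fun x hx hx' ↦ hne (hf.eq_of_mem hx hx')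

theorem IsMinorModel.image {K : SimpleGraph W} {G : SimpleGraph V} {G' : SimpleGraph V'}
    {f : W → Set V} (hf : IsMinorModel K G f) (φ : V → V')
    (hφ : ∀ x y, G.Adj x y → φ x = φ y ∨ G'.Adj (φ x) (φ y))
    (hsep : ∀ w w', ∀ x ∈ f w, ∀ y ∈ f w', φ x = φ y → w = w') :
    IsMinorModel K G' fun w ↦ φ '' f w where
  connected w := by
    refine connected_of_surjective (Set.imageFactorization φ (f w))
      Set.imageFactorization_surjective (fun x y hxy ↦ ?_) (hf.connected w)
    exact (hφ x y hxy).imp (fun h ↦ Subtype.ext h) id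
  eq_of_mem := by
    rintro w w' _ ⟨x, hx, rfl⟩ ⟨y, hy, hxy⟩
    exact hsep w w' x hx y hy hxy.symm
  exists_adj {w w'} hww' := by
    obtain ⟨x, hx, y, hy, hxy⟩ := hf.exists_adj hww'
    refine ⟨φ x, ⟨x, hx, rfl⟩, φ y, ⟨y, hy, rfl⟩, (hφ x y hxy).resolve_left fun h ↦ ?_⟩
    exact hww'.ne (hsep w w' x hx y hy h)

theorem isMinor_map {K : SimpleGraph W} {G : SimpleGraph V} {G' : SimpleGraph V'}
    (φ : G →g G') (hφ : Function.Injective φ) (h : K.IsMinor G) : K.IsMinor G' := by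
  obtain ⟨f, hf⟩ := isMinor_iff_exists_isMinorModel.1 h
  refine isMinor_iff_exists_isMinorModel.2 ⟨_, hf.image φ (fun x y hxy ↦ .inr (φ.map_adj hxy))
    fun w w' x hx y hy hxy ↦ ?_⟩
  exact hf.eq_of_mem hx (hφ hxy ▸ hy)

theorem isPlanar_of_hom {G : SimpleGraph V} {G' : SimpleGraph V'} (φ : G →g G')
    (hφ : Function.Injective φ) (h : G'.IsPlanar) : G.IsPlanar :=
  ⟨fun hm ↦ h.1 (isMinor_map φ hφ hm), fun hm ↦ h.2 (isMinor_map φ hφ hm)⟩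

theorem isPlanar_anti {G G' : SimpleGraph V} (hle : G ≤ G') (h : G'.IsPlanar) : G.IsPlanar :=
  isPlanar_of_hom (Hom.ofLE hle) Function.injective_id h

/-- The graph `G` with all edges meeting `s` removed. It stands for `G - s` but keeps the vertex
type, the vertices of `s` becoming isolated. -/
def isolate (G : SimpleGraph V) (s : Finset V) : SimpleGraph V where
  Adj x y := G.Adj x y ∧ x ∉ s ∧ y ∉ s
  symm := ⟨fun _ _ h ↦ ⟨h.1.symm, h.2.2, h.2.1⟩⟩
  loopless := ⟨fun _ h ↦ h.1.ne rfl⟩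

/-- `G` becomes planar after deleting two vertices `a` and `b`, possibly equal. -/
def PairApex (G : SimpleGraph V) : Prop :=
  ∃ a b, (isolate G {a, b}).IsPlanar

theorem PairApex.anti {G G' : SimpleGraph V} (hle : G ≤ G') (h : PairApex G') : PairApex G := by
  obtain ⟨a, b, h⟩ := h
  have hiso : isolate G {a, b} ≤ isolate G' {a, b} := fun _ _ hxy ↦ ⟨hle hxy.1, hxy.2⟩
  exact ⟨a, b, isPlanar_anti hiso h⟩

theorem PairApex.twoApex {G : SimpleGraph V} (h : PairApex G) : G.TwoApex := by
  obtain ⟨a, b, h⟩ := h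
  let φ : G.induce (({a, b} : Finset V) : Set V)ᶜ →g isolate G {a, b} :=
    ⟨Subtype.val, fun {x y} hxy ↦ ⟨hxy, x.2, y.2⟩⟩
  refine ⟨({a, b} : Finset V), ?_, isPlanar_of_hom φ Subtype.val_injective h⟩
  exact (Set.ncard_coe_finset _).trans_le card_le_two

/-- The graph obtained from `G` by removing `v` and joining its neighbors pairwise. For `v` of
degree two this suppresses a subdivision vertex. -/
def suppress (G : SimpleGraph V) (v : V) : SimpleGraph {w // w ≠ v} where
  Adj x y := x ≠ y ∧ (G.Adj x y ∨ G.Adj v x ∧ G.Adj v y)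
  symm := ⟨fun _ _ h ↦ ⟨h.1.symm, h.2.imp Adj.symm And.symm⟩⟩
  loopless := ⟨fun _ h ↦ h.1 rfl⟩

theorem eq_or_suppress_adj {G : SimpleGraph V} {v : V} {x y : {w // w ≠ v}}
    (h : G.Adj x y ∨ G.Adj v x ∧ G.Adj v y) : x = y ∨ (suppress G v).Adj x y :=
  or_iff_not_imp_left.2 fun hne ↦ ⟨hne, h⟩

theorem IsMinorModel.exists_mem_ne [Fintype V] {K : SimpleGraph W} [K.LocallyFinite]
    {G : SimpleGraph V} {f : W → Set V} (hf : IsMinorModel K G f) {v : V} {w : W}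
    (hdeg : G.degree v < K.degree w) : ∃ x ∈ f w, x ≠ v := by
  by_contra! honly
  have hnbr : ∀ w' ∈ K.neighborFinset w, ∃ y ∈ G.neighborFinset v, y ∈ f w' := by
    intro w' hw'
    obtain ⟨x, hx, y, hy, hxy⟩ := hf.exists_adj ((K.mem_neighborFinset w w').1 hw')
    exact ⟨y, by simpa [honly x hx] using hxy, hy⟩
  have : Nonempty V := ⟨v⟩
  choose! g hg hgf using hnbr
  exact hdeg.not_ge (card_le_card_of_injOn g hg fun w₁ h₁ w₂ h₂ heq ↦
    hf.eq_of_mem (hgf w₁ h₁) (heq ▸ hgf w₂ h₂))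

theorem exists_adj_mem_of_connected {G : SimpleGraph V} {s : Set V} (hs : (G.induce s).Connected)
    {v x : V} (hv : v ∈ s) (hx : x ∈ s) (hne : x ≠ v) : ∃ y ∈ s, G.Adj v y := by
  have : Nontrivial s := ⟨⟨⟨x, hx⟩, ⟨v, hv⟩, fun h ↦ hne (congrArg Subtype.val h)⟩⟩
  obtain ⟨y, hy⟩ := hs.preconnected.exists_adj_of_nontrivial ⟨v, hv⟩
  exact ⟨y, y.2, hy⟩

theorem IsMinorModel.exists_representative [Fintype V] [Nonempty W] {K : SimpleGraph W}
    [K.LocallyFinite] {G : SimpleGraph V} {f : W → Set V} (hf : IsMinorModel K G f) {v : V}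
    (hdeg : ∀ w, G.degree v < K.degree w) :
    ∃ p ≠ v, (∀ w, v ∈ f w → p ∈ f w) ∧ ∀ y, G.Adj v y → G.Adj v p := by
  by_cases hv : ∃ w, v ∈ f w
  · obtain ⟨w, hw⟩ := hv
    obtain ⟨x, hx, hxv⟩ := hf.exists_mem_ne (hdeg w)
    obtain ⟨p, hp, hvp⟩ := exists_adj_mem_of_connected (hf.connected w) hw hx hxv
    exact ⟨p, hvp.ne', fun w' hw' ↦ hf.eq_of_mem hw hw' ▸ hp, fun _ _ ↦ hvp⟩
  · push Not at hv
    by_cases hnbr : ∃ y, G.Adj v y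
    · obtain ⟨p, hp⟩ := hnbr
      exact ⟨p, hp.ne', fun w hw ↦ (hv w hw).elim, fun _ _ ↦ hp⟩
    · obtain ⟨x, -, hxv⟩ := hf.exists_mem_ne (hdeg (Classical.arbitrary W))
      exact ⟨x, hxv, fun w hw ↦ (hv w hw).elim, fun y hy ↦ (hnbr ⟨y, hy⟩).elim⟩

theorem isMinor_suppress [Fintype V] [Nonempty W] {K : SimpleGraph W} [K.LocallyFinite]
    {G : SimpleGraph V} {v : V} (hdeg : ∀ w, G.degree v < K.degree w) (h : K.IsMinor G) :
    K.IsMinor (suppress G v) := by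
  obtain ⟨f, hf⟩ := isMinor_iff_exists_isMinorModel.1 h
  obtain ⟨p, hpv, hpf, hpadj⟩ := hf.exists_representative hdeg
  let φ : V → {w // w ≠ v} := fun x ↦ if hx : x = v then ⟨p, hpv⟩ else ⟨x, hx⟩
  have hφv : φ v = ⟨p, hpv⟩ := dif_pos rfl
  have hφ : ∀ {x} (hx : x ≠ v), φ x = ⟨x, hx⟩ := fun hx ↦ dif_neg hx
  have hφf : ∀ w, ∀ x ∈ f w, (φ x).1 ∈ f w := by
    intro w x hx
    rcases eq_or_ne x v with rfl | hxv
    · simpa only [hφv] using hpf w hx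
    · simpa only [hφ hxv] using hx
  refine isMinor_iff_exists_isMinorModel.2 ⟨_, hf.image φ (fun x y hxy ↦ ?_)
    fun w w' x hx y hy hxy ↦ hf.eq_of_mem (hφf w x hx) (hxy ▸ hφf w' y hy)⟩
  apply eq_or_suppress_adj
  rcases eq_or_ne x v with rfl | hx
  · rw [hφv, hφ hxy.ne']
    exact .inr ⟨hpadj y hxy, hxy⟩
  · rcases eq_or_ne y v with rfl | hy
    · rw [hφv, hφ hx]
      exact .inr ⟨hxy.symm, hpadj x hxy.symm⟩
    · rw [hφ hx, hφ hy]
      exact .inl hxy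

theorem degree_suppress_le [Fintype V] {G : SimpleGraph V} {v : V} (hv : G.degree v ≤ 2)
    (w : {w // w ≠ v}) : (suppress G v).degree w ≤ G.degree w := by
  have hnbr : ∀ x, x ∈ ((suppress G v).neighborFinset w).map (Function.Embedding.subtype _) →
      x ≠ v ∧ x ≠ w ∧ (G.Adj w x ∨ G.Adj v w ∧ G.Adj v x) := by
    intro x hx
    obtain ⟨y, hy, rfl⟩ := mem_map.1 hx
    rw [mem_neighborFinset] at hy
    exact ⟨y.2, fun h ↦ hy.1 (Subtype.ext h.symm), hy.2⟩
  rw [← card_neighborFinset_eq_degree, ← card_neighborFinset_eq_degree,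
    ← card_map (Function.Embedding.subtype _)]
  by_cases hvw : G.Adj v w
  · have hsub : ((suppress G v).neighborFinset w).map (Function.Embedding.subtype _) ⊆
        (G.neighborFinset w).erase v ∪ (G.neighborFinset v).erase w := by
      intro x hx
      obtain ⟨hxv, hxw, hadj⟩ := hnbr x hx
      simp only [mem_union, mem_erase, mem_neighborFinset]
      tauto
    have hw := card_erase_add_one ((G.mem_neighborFinset _ _).2 hvw.symm)
    have hv' := card_erase_add_one ((G.mem_neighborFinset _ _).2 hvw)
    rw [card_neighborFinset_eq_degree G v] at hv'
    grw [hsub, card_union_le]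
    omega
  · refine card_le_card fun x hx ↦ ?_
    have := hnbr x hx
    simp only [mem_neighborFinset]
    tauto

theorem degree_isolate_le [Fintype V] (G : SimpleGraph V) (s : Finset V) (v : V) :
    (isolate G s).degree v ≤ G.degree v :=
  degree_le_of_le fun _ _ h ↦ h.1

theorem degree_completeBipartiteGraph {α β : Type*} [Fintype α] [Fintype β] (w : α ⊕ β) :
    (completeBipartiteGraph α β).degree w =
      w.elim (fun _ ↦ Fintype.card β) fun _ ↦ Fintype.card α := by
  rw [← card_neighborFinset_eq_degree]
  cases w with
  | inl a =>
    have hnbr : (completeBipartiteGraph α β).neighborFinset (.inl a) =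
        univ.map Function.Embedding.inr := by ext (x | x) <;> simp
    rw [hnbr, card_map, card_univ, Sum.elim_inl]
  | inr b =>
    have hnbr : (completeBipartiteGraph α β).neighborFinset (.inr b) =
        univ.map Function.Embedding.inl := by ext (x | x) <;> simp
    rw [hnbr, card_map, card_univ, Sum.elim_inr]

theorem isRegularOfDegree_k33 :
    (completeBipartiteGraph (Fin 3) (Fin 3)).IsRegularOfDegree 3 := fun w ↦ by
  rw [degree_completeBipartiteGraph]
  cases w <;> rfl

theorem isRegularOfDegree_k5 : (⊤ : SimpleGraph (Fin 5)).IsRegularOfDegree 4 :=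
  IsRegularOfDegree.top

theorem isPlanar_of_suppress [Fintype V] {G : SimpleGraph V} {v : V} (hv : G.degree v ≤ 2)
    (h : (suppress G v).IsPlanar) : G.IsPlanar := by
  refine ⟨fun hm ↦ h.1 (isMinor_suppress (fun w ↦ ?_) hm),
    fun hm ↦ h.2 (isMinor_suppress (fun w ↦ ?_) hm)⟩
  · have := isRegularOfDegree_k5 w
    omega
  · have := isRegularOfDegree_k33 w
    omega

theorem PairApex.of_suppress [Fintype V] {G : SimpleGraph V} {v : V} (hv : G.degree v ≤ 2)
    (h : PairApex (suppress G v)) : PairApex G := by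
  obtain ⟨a, b, h⟩ := h
  refine ⟨a, b, isPlanar_of_suppress ((degree_isolate_le G _ v).trans hv) (isPlanar_anti ?_ h)⟩
  rintro x y ⟨hne, ⟨hxy, hx, hy⟩ | ⟨⟨hvx, -, hx⟩, hvy, -, hy⟩⟩ <;>
    simp only [mem_insert, mem_singleton, ← Subtype.ext_iff] at hx hy
  · exact ⟨⟨hne, .inl hxy⟩, by simpa using hx, by simpa using hy⟩
  · exact ⟨⟨hne, .inr ⟨hvx, hvy⟩⟩, by simpa using hx, by simpa using hy⟩

/-- A spanning tree in each branch set of a minor model of `K` in `G`, together with one edge of `G`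
for each edge of `K`: for `w` adjacent to `w'`, the edge joins `contact w w'`, in the branch set
of `w`, to `contact w' w`. -/
structure Skeleton (K : SimpleGraph W) (G : SimpleGraph V) where
  branch : W → Set V
  tree : ∀ w, SimpleGraph (branch w)
  contact : W → W → V
  eq_of_mem : ∀ {w w' x}, x ∈ branch w → x ∈ branch w' → w = w'
  isTree : ∀ w, (tree w).IsTree
  tree_le : ∀ w, tree w ≤ G.induce (branch w)
  contact_mem : ∀ {w w'}, K.Adj w w' → contact w w' ∈ branch w
  contact_adj : ∀ {w w'}, K.Adj w w' → G.Adj (contact w w') (contact w' w)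

theorem IsMinorModel.exists_contact {K : SimpleGraph W} {G : SimpleGraph V} {f : W → Set V}
    (hf : IsMinorModel K G f) : ∃ c : W → W → V, ∀ w w', K.Adj w w' →
      c w w' ∈ f w ∧ G.Adj (c w w') (c w' w) := by
  have hpair : ∀ w w', ∃ p : V × V, K.Adj w w' → p.1 ∈ f w ∧ p.2 ∈ f w' ∧ G.Adj p.1 p.2 := by
    intro w w'
    by_cases h : K.Adj w w'
    · obtain ⟨x, hx, y, hy, hxy⟩ := hf.exists_adj h
      exact ⟨(x, y), fun _ ↦ ⟨hx, hy, hxy⟩⟩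
    · obtain ⟨x⟩ := (hf.connected w).nonempty
      exact ⟨(x, x), fun h' ↦ (h h').elim⟩
  choose p hp using hpair
  refine ⟨fun w w' ↦ if WellOrderingRel w w' then (p w w').1 else (p w' w).2,
    fun w w' h ↦ ?_⟩
  rcases trichotomous_of WellOrderingRel w w' with hlt | rfl | hlt
  · simpa [hlt, asymm hlt] using ⟨(hp w w' h).1, (hp w w' h).2.2⟩
  · exact (h.ne rfl).elim
  · simpa [hlt, asymm hlt] using ⟨(hp w' w h.symm).2.1, (hp w' w h.symm).2.2.symm⟩

theorem IsMinorModel.exists_skeleton {K : SimpleGraph W} {G : SimpleGraph V}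
    {f : W → Set V} (hf : IsMinorModel K G f) : ∃ S : Skeleton K G, S.branch = f := by
  obtain ⟨c, hc⟩ := hf.exists_contact
  choose T hle hT using fun w ↦ (hf.connected w).exists_isTree_le
  exact ⟨⟨f, T, c, hf.eq_of_mem, hT, hle, fun h ↦ (hc _ _ h).1, fun h ↦ (hc _ _ h).2⟩, rfl⟩

namespace Skeleton

variable {K : SimpleGraph W} {G : SimpleGraph V}

/-- The subgraph of `G` formed by the trees and the contact edges of a skeleton. -/
def graph (S : Skeleton K G) : SimpleGraph V where
  Adj x y := (∃ w hx hy, (S.tree w).Adj ⟨x, hx⟩ ⟨y, hy⟩) ∨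
    ∃ w w', K.Adj w w' ∧ S.contact w w' = x ∧ S.contact w' w = y
  symm := ⟨by
    rintro x y (⟨w, hx, hy, h⟩ | ⟨w, w', h, hx, hy⟩)
    · exact .inl ⟨w, hy, hx, h.symm⟩
    · exact .inr ⟨w', w, h.symm, hy, hx⟩⟩
  loopless := ⟨by
    rintro x (⟨w, hx, hy, h⟩ | ⟨w, w', h, rfl, hx⟩)
    · exact h.ne rfl
    · exact (S.contact_adj h).ne hx.symm⟩

theorem graph_le (S : Skeleton K G) : S.graph ≤ G := by
  rintro x y (⟨w, hx, hy, h⟩ | ⟨w, w', h, rfl, rfl⟩)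
  · exact S.tree_le w h
  · exact S.contact_adj h

theorem graph_adj_iff_of_mem (S : Skeleton K G) {x y : V} {w : W} (hx : x ∈ S.branch w)
    (hy : y ∈ S.branch w) : S.graph.Adj x y ↔ (S.tree w).Adj ⟨x, hx⟩ ⟨y, hy⟩ := by
  refine ⟨?_, fun h ↦ .inl ⟨w, hx, hy, h⟩⟩
  rintro (⟨w', hx', hy', h⟩ | ⟨w₁, w₂, h, rfl, rfl⟩)
  · obtain rfl := S.eq_of_mem hx hx'
    exact h
  · obtain rfl := S.eq_of_mem hx (S.contact_mem h)
    obtain rfl := S.eq_of_mem hy (S.contact_mem h.symm)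
    exact (h.ne rfl).elim

theorem graph_adj_iff_of_ne (S : Skeleton K G) {x y : V} {w w' : W} (hne : w ≠ w')
    (hx : x ∈ S.branch w) (hy : y ∈ S.branch w') :
    S.graph.Adj x y ↔ K.Adj w w' ∧ S.contact w w' = x ∧ S.contact w' w = y := by
  refine ⟨?_, fun h ↦ .inr ⟨w, w', h⟩⟩
  rintro (⟨v, hx', hy', -⟩ | ⟨w₁, w₂, h, rfl, rfl⟩)
  · exact (hne ((S.eq_of_mem hx hx').trans (S.eq_of_mem hy' hy))).elim
  · obtain rfl := S.eq_of_mem hx (S.contact_mem h)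
    obtain rfl := S.eq_of_mem hy (S.contact_mem h.symm)
    exact ⟨h, rfl, rfl⟩

theorem exists_mem_of_graph_adj (S : Skeleton K G) {x y : V} (h : S.graph.Adj x y) :
    ∃ w, x ∈ S.branch w := by
  obtain ⟨w, hx, -⟩ | ⟨w, w', h, rfl, -⟩ := h
  · exact ⟨w, hx⟩
  · exact ⟨w, S.contact_mem h⟩

theorem cliqueFree_graph (S : Skeleton K G) (hK : K.CliqueFree 3) : S.graph.CliqueFree 3 := by
  intro s hs
  obtain ⟨x, y, z, hxy, hxz, hyz, -⟩ := is3Clique_iff.1 hs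
  obtain ⟨wx, hx⟩ := S.exists_mem_of_graph_adj hxy
  obtain ⟨wy, hy⟩ := S.exists_mem_of_graph_adj hyz
  obtain ⟨wz, hz⟩ := S.exists_mem_of_graph_adj hxz.symm
  have hunique : ∀ {w w' x y z}, x ∈ S.branch w → y ∈ S.branch w → z ∈ S.branch w' → w ≠ w' →
      S.graph.Adj x z → S.graph.Adj y z → x = y := fun hx hy hz hne hxz hyz ↦
    ((S.graph_adj_iff_of_ne hne hx hz).1 hxz).2.1.symm.trans
      ((S.graph_adj_iff_of_ne hne hy hz).1 hyz).2.1
  by_cases hwxy : wx = wy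
  · subst hwxy
    by_cases hwxz : wx = wz
    · subst hwxz
      exact (S.isTree wx).isAcyclic.cliqueFree le_rfl _ (is3Clique_triple_iff.2
        ⟨(S.graph_adj_iff_of_mem hx hy).1 hxy, (S.graph_adj_iff_of_mem hx hz).1 hxz,
          (S.graph_adj_iff_of_mem hy hz).1 hyz⟩)
    · exact hxy.ne (hunique hx hy hz hwxz hxz hyz)
  · by_cases hwxz : wx = wz
    · subst hwxz
      exact hxz.ne (hunique hx hz hy hwxy hxy hyz.symm)
    · by_cases hwyz : wy = wz
      · subst hwyz
        exact hyz.ne (hunique hy hz hx (Ne.symm hwxy) hxy.symm hxz.symm)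
      · exact hK {wx, wy, wz} (is3Clique_triple_iff.2
          ⟨((S.graph_adj_iff_of_ne hwxy hx hy).1 hxy).1,
            ((S.graph_adj_iff_of_ne hwxz hx hz).1 hxz).1,
            ((S.graph_adj_iff_of_ne hwyz hy hz).1 hyz).1⟩)

theorem degree_graph_of_mem [Fintype V] [K.LocallyFinite] (S : Skeleton K G) {v : V} {w : W}
    (hv : v ∈ S.branch w) : S.graph.degree v =
      (S.tree w).degree ⟨v, hv⟩ + #{w' ∈ K.neighborFinset w | S.contact w w' = v} := by
  have hnbr : S.graph.neighborFinset v =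
      ((S.tree w).neighborFinset ⟨v, hv⟩).map (Function.Embedding.subtype _) ∪
        {w' ∈ K.neighborFinset w | S.contact w w' = v}.image fun w' ↦ S.contact w' w := by
    ext y
    simp only [mem_neighborFinset, mem_union, mem_map, mem_image, mem_filter]
    constructor
    · rintro (⟨w₁, hv', hy, h⟩ | ⟨w₁, w₂, h, rfl, rfl⟩)
      · obtain rfl := S.eq_of_mem hv hv'
        exact .inl ⟨⟨y, hy⟩, h, rfl⟩
      · obtain rfl := S.eq_of_mem hv (S.contact_mem h)
        exact .inr ⟨w₂, ⟨h, rfl⟩, rfl⟩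
    · rintro (⟨⟨y, hy⟩, h, rfl⟩ | ⟨w', ⟨h, rfl⟩, rfl⟩)
      · exact .inl ⟨w, hv, hy, h⟩
      · exact .inr ⟨w, w', h, rfl, rfl⟩
  have hcontact : ∀ w' ∈ ({w' ∈ K.neighborFinset w | S.contact w w' = v} : Finset W),
      S.contact w' w ∈ S.branch w' := fun w' hw' ↦
    S.contact_mem ((K.mem_neighborFinset _ _).1 (mem_filter.1 hw').1).symm
  rw [← card_neighborFinset_eq_degree, hnbr, card_union_of_disjoint, card_map,
    card_neighborFinset_eq_degree, card_image_of_injOn]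
  · exact fun w₁ h₁ w₂ h₂ heq ↦ S.eq_of_mem (hcontact w₁ h₁)
      ((congrArg (· ∈ S.branch w₂) heq).mpr (hcontact w₂ h₂))
  · rw [Finset.disjoint_left]
    intro y hy hy'
    obtain ⟨⟨_, hyw⟩, -, rfl⟩ := mem_map.1 hy
    obtain ⟨w', hw', rfl⟩ := mem_image.1 hy'
    obtain rfl := S.eq_of_mem hyw (hcontact w' hw')
    simp at hw'

theorem degree_graph_of_notMem [Fintype V] (S : Skeleton K G) {v : V}
    (hv : ∀ w, v ∉ S.branch w) : S.graph.degree v = 0 := by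
  rw [degree_eq_zero_iff_notMem_support]
  rintro ⟨y, hy⟩
  obtain ⟨w, hw⟩ := S.exists_mem_of_graph_adj hy
  exact hv w hw

theorem sum_degree_branch [Fintype V] [K.LocallyFinite] (S : Skeleton K G) (w : W) :
    ∑ v : S.branch w, S.graph.degree v.1 + 2 = 2 * Fintype.card (S.branch w) + K.degree w := by
  have htree : ∑ v, (S.tree w).degree v + 2 = 2 * Fintype.card (S.branch w) := by
    rw [sum_degrees_eq_twice_card_edges, ← (S.isTree w).card_edgeFinset]
    ring
  have hcontact : ∑ v : S.branch w, #{w' ∈ K.neighborFinset w | S.contact w w' = v.1} =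
      K.degree w := by
    rw [sum_set_coe (S.branch w) (f := fun v ↦ #{w' ∈ K.neighborFinset w | S.contact w w' = v}),
      ← card_neighborFinset_eq_degree]
    refine (card_eq_sum_card_fiberwise fun w' hw' ↦ ?_).symm
    simpa using S.contact_mem ((K.mem_neighborFinset _ _).1 hw')
  rw [sum_congr rfl fun v _ ↦ S.degree_graph_of_mem v.2, sum_add_distrib, hcontact, ← htree]
  ring

theorem sum_degree_sub_two_branch [Fintype V] [K.LocallyFinite] (S : Skeleton K G) {w : W}
    (htwo : ∀ v ∈ S.branch w, 2 ≤ S.graph.degree v) :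
    ∑ v : S.branch w, (S.graph.degree v.1 - 2) + 2 = K.degree w := by
  have hsplit : ∑ v : S.branch w, S.graph.degree v.1 =
      ∑ v : S.branch w, (S.graph.degree v.1 - 2) + 2 * Fintype.card (S.branch w) := by
    rw [mul_comm, ← smul_eq_mul, ← card_univ, ← sum_const, ← sum_add_distrib]
    exact sum_congr rfl fun v _ ↦ (Nat.sub_add_cancel (htwo v v.2)).symm
  have := S.sum_degree_branch w
  omega

theorem isMinorModel_update (S : Skeleton K G) {v : V} {w : W}
    (hconn : (G.induce (S.branch w \ {v})).Connected)
    (hcontact : ∀ w', K.Adj w w' → S.contact w w' ≠ v) :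
    IsMinorModel K G (Function.update S.branch w (S.branch w \ {v})) := by
  have hsub : Function.update S.branch w (S.branch w \ {v}) ≤ S.branch :=
    update_le_self_iff.2 Set.sdiff_subset
  have hmem : ∀ {w₁ w₂}, K.Adj w₁ w₂ →
      S.contact w₁ w₂ ∈ Function.update S.branch w (S.branch w \ {v}) w₁ := by
    intro w₁ w₂ h
    rcases eq_or_ne w₁ w with rfl | hne
    · simpa using ⟨S.contact_mem h, hcontact w₂ h⟩
    · simpa [hne] using S.contact_mem h
  refine ⟨fun w' ↦ ?_, fun hx hx' ↦ S.eq_of_mem (hsub _ hx) (hsub _ hx'),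
    fun h ↦ ⟨_, hmem h, _, hmem h.symm, S.contact_adj h⟩⟩
  rcases eq_or_ne w' w with rfl | hne
  · rwa [Function.update_self]
  · rw [Function.update_of_ne hne]
    exact (S.isTree w').connected.mono (S.tree_le w')

theorem connected_induce_diff_of_degree_eq_one (S : Skeleton K G) {v : V} {w : W}
    (hv : v ∈ S.branch w) [Fintype ((S.tree w).neighborSet ⟨v, hv⟩)]
    (hleaf : (S.tree w).degree ⟨v, hv⟩ = 1) : (G.induce (S.branch w \ {v})).Connected := by
  refine connected_of_surjective
    (fun x : ({⟨v, hv⟩}ᶜ : Set (S.branch w)) ↦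
      (⟨x.1.1, x.1.2, fun h ↦ x.2 (Subtype.ext (Set.mem_singleton_iff.1 h))⟩ : ↥(S.branch w \ {v})))
    (fun y ↦ ⟨⟨⟨y.1, y.2.1⟩, by simpa using y.2.2⟩, rfl⟩)
    (fun x y hxy ↦ .inr (S.tree_le w hxy))
    ((S.isTree w).connected.induce_compl_singleton_of_degree_eq_one hleaf)

theorem two_le_degree_graph [Fintype V] [K.LocallyFinite] (S : Skeleton K G)
    (hmin : Minimal (IsMinorModel K G) S.branch) (hK : ∀ w, 2 ≤ K.degree w) {v : V} {w : W}
    (hv : v ∈ S.branch w) : 2 ≤ S.graph.degree v := by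
  by_contra! hdeg
  rw [S.degree_graph_of_mem hv] at hdeg
  have hnontrivial : Nontrivial (S.branch w) := by
    by_contra hsub
    have : Subsingleton (S.branch w) := not_nontrivial_iff_subsingleton.1 hsub
    have hall : ∀ w' ∈ K.neighborFinset w, S.contact w w' = v := fun w' hw' ↦
      congrArg Subtype.val (Subsingleton.elim (α := S.branch w)
        ⟨_, S.contact_mem ((K.mem_neighborFinset _ _).1 hw')⟩ ⟨v, hv⟩)
    rw [filter_true_of_mem hall, card_neighborFinset_eq_degree] at hdeg
    have := hK w
    omega
  have hpos := (S.isTree w).connected.preconnected.degree_pos_of_nontrivial ⟨v, hv⟩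
  have hleaf : (S.tree w).degree ⟨v, hv⟩ = 1 := by omega
  have hnone : #{w' ∈ K.neighborFinset w | S.contact w w' = v} = 0 := by omega
  have hcontact : ∀ w', K.Adj w w' → S.contact w w' ≠ v := by
    simpa [card_eq_zero, filter_eq_empty_iff] using hnone
  have hmodel := S.isMinorModel_update (S.connected_induce_diff_of_degree_eq_one hv hleaf) hcontact
  have hle := hmin.2 hmodel (update_le_self_iff.2 Set.sdiff_subset) w hv
  simp at hle

theorem sum_degree_sub_two_graph [Fintype V] [Fintype W] [K.LocallyFinite] (S : Skeleton K G)
    (hmin : Minimal (IsMinorModel K G) S.branch) (hK : ∀ w, 2 ≤ K.degree w) :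
    ∑ v, (S.graph.degree v - 2) = ∑ w, (K.degree w - 2) := by
  have hbranch : ∀ w, ∑ v ∈ (S.branch w).toFinset, (S.graph.degree v - 2) = K.degree w - 2 := by
    intro w
    rw [← sum_set_coe, ← S.sum_degree_sub_two_branch fun v hv ↦ S.two_le_degree_graph hmin hK hv,
      Nat.add_sub_cancel]
  rw [← sum_congr rfl fun w _ ↦ hbranch w, ← sum_biUnion]
  · refine (sum_subset (subset_univ _) fun v _ hv ↦ ?_).symm
    simp [S.degree_graph_of_notMem (v := v) (by simpa using hv)]
  · exact fun w _ w' _ hne ↦ Set.disjoint_toFinset.2 <|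
      Set.disjoint_left.2 fun x hx hx' ↦ hne (S.eq_of_mem hx hx')

theorem degree_graph_le [Fintype V] [K.LocallyFinite] (S : Skeleton K G)
    (hmin : Minimal (IsMinorModel K G) S.branch) (hK : ∀ w, 2 ≤ K.degree w) {v : V} {w : W}
    (hv : v ∈ S.branch w) : S.graph.degree v ≤ K.degree w := by
  have hsum := S.sum_degree_sub_two_branch (w := w) fun v hv ↦ S.two_le_degree_graph hmin hK hv
  have hle := single_le_sum (f := fun v : S.branch w ↦ S.graph.degree v.1 - 2)
    (fun _ _ ↦ Nat.zero_le _) (mem_univ ⟨v, hv⟩)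
  grind

end Skeleton

theorem exists_subgraph_of_isMinor [Fintype V] [Fintype W] {K : SimpleGraph W} [K.LocallyFinite]
    {G : SimpleGraph V} {d : ℕ} (hK : K.IsRegularOfDegree d) (hd : 2 ≤ d) (h : K.IsMinor G) :
    ∃ J ≤ G, (∀ v, J.degree v = 0 ∨ 2 ≤ J.degree v ∧ J.degree v ≤ d) ∧
      ∑ v, (J.degree v - 2) = Fintype.card W * (d - 2) ∧ (K.CliqueFree 3 → J.CliqueFree 3) := by
  have hK₂ : ∀ w, 2 ≤ K.degree w := fun w ↦ hd.trans_eq (hK w).symm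
  obtain ⟨f, hmin⟩ := exists_minimal_of_wellFoundedLT _ (isMinor_iff_exists_isMinorModel.1 h)
  obtain ⟨S, rfl⟩ := hmin.prop.exists_skeleton
  refine ⟨S.graph, S.graph_le, fun v ↦ ?_, ?_, S.cliqueFree_graph⟩
  · by_cases hv : ∃ w, v ∈ S.branch w
    · obtain ⟨w, hw⟩ := hv
      exact .inr ⟨S.two_le_degree_graph hmin hK₂ hw, (S.degree_graph_le hmin hK₂ hw).trans_eq
        (hK w)⟩
    · exact .inl (S.degree_graph_of_notMem (not_exists.1 hv))
  · simp only [S.sum_degree_sub_two_graph hmin hK₂, hK.degree_eq, sum_const, card_univ, smul_eq_mul]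

/-- The excess of a graph is the sum of `deg v - 2` over its vertices of degree at least two; the
truncated subtraction discards the other vertices. It is invariant under subdivision. -/
noncomputable def excess [Fintype V] (G : SimpleGraph V) : ℕ :=
  ∑ v, (G.degree v - 2)

theorem excess_mono [Fintype V] {G G' : SimpleGraph V} (hle : G ≤ G') : excess G ≤ excess G' :=
  sum_le_sum fun _ _ ↦ Nat.sub_le_sub_right (degree_le_of_le hle) 2

theorem card_le_degree_mono [Fintype V] {G G' : SimpleGraph V} (hle : G ≤ G') (k : ℕ) :
    #{v | k ≤ G.degree v} ≤ #{v | k ≤ G'.degree v} :=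
  card_le_card <| monotone_filter_right _ fun _ _ h ↦ h.trans (degree_le_of_le hle)

/-- `J` is a subgraph of `G` without triangles and without vertices of degree one, having exactly
six vertices of degree three and no larger degrees. Every graph with a `K₃,₃` minor has such a
subgraph, a subdivision of `K₃,₃`. -/
structure IsK33Subdivision [Fintype V] (G J : SimpleGraph V) : Prop where
  le : J ≤ G
  degree_eq : ∀ v, J.degree v = 0 ∨ J.degree v = 2 ∨ J.degree v = 3
  card_degree_eq_three : #{v | J.degree v = 3} = 6
  cliqueFree : J.CliqueFree 3

theorem exists_isK33Subdivision_of_isMinor [Fintype V] {G : SimpleGraph V}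
    (h : (completeBipartiteGraph (Fin 3) (Fin 3)).IsMinor G) : ∃ J, IsK33Subdivision G J := by
  have hfree : (completeBipartiteGraph (Fin 3) (Fin 3)).CliqueFree 3 :=
    (CompleteBipartiteGraph.bicoloring (Fin 3) (Fin 3)).colorable.cliqueFree (by simp)
  obtain ⟨J, hle, hdeg, hsum, hclique⟩ :=
    exists_subgraph_of_isMinor isRegularOfDegree_k33 (by norm_num) h
  refine ⟨J, hle, fun v ↦ by have := hdeg v; omega, ?_, hclique hfree⟩
  rw [card_filter]
  refine Eq.trans (sum_congr rfl fun v _ ↦ ?_) hsum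
  grind

theorem card_degree_of_isMinor_k5 [Fintype V] {G : SimpleGraph V}
    (h : (⊤ : SimpleGraph (Fin 5)).IsMinor G) :
    10 ≤ excess G ∧ 10 ≤ #{v | 3 ≤ G.degree v} + #{v | 4 ≤ G.degree v} := by
  obtain ⟨J, hle, hdeg, hsum, -⟩ :=
    exists_subgraph_of_isMinor isRegularOfDegree_k5 (by norm_num) h
  have hexc : excess J = 10 := hsum
  have hcard : excess J = #{v | 3 ≤ J.degree v} + #{v | 4 ≤ J.degree v} := by
    rw [excess, card_filter, card_filter, ← sum_add_distrib]
    refine sum_congr rfl fun v _ ↦ ?_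
    have := hdeg v
    grind
  refine ⟨hexc.ge.trans (excess_mono hle), ?_⟩
  rw [← hexc, hcard]
  exact Nat.add_le_add (card_le_degree_mono hle 3) (card_le_degree_mono hle 4)

theorem card_degree_of_not_isPlanar [Fintype V] {G : SimpleGraph V} (h : ¬ G.IsPlanar) :
    6 ≤ #{v | 3 ≤ G.degree v} ∨ 5 ≤ #{v | 4 ≤ G.degree v} := by
  rcases not_and_or.1 h with h | h <;> rw [not_not] at h
  · have := (card_degree_of_isMinor_k5 h).2
    omega
  · obtain ⟨J, hJ⟩ := exists_isK33Subdivision_of_isMinor h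
    left
    rw [← hJ.card_degree_eq_three]
    refine card_le_card <| monotone_filter_right _ fun v _ hv ↦ ?_
    exact hv.ge.trans (degree_le_of_le hJ.le)

theorem exists_isK33Subdivision [Fintype V] {G : SimpleGraph V} (h : ¬ G.IsPlanar)
    (hexc : excess G < 10) : ∃ J, IsK33Subdivision G J := by
  rcases not_and_or.1 h with h | h <;> rw [not_not] at h
  · exact absurd (card_degree_of_isMinor_k5 h).1 hexc.not_ge
  · exact exists_isK33Subdivision_of_isMinor h

namespace IsK33Subdivision

variable [Fintype V] {G J : SimpleGraph V}

/-- The contribution of the vertex `v` to `excess G` that is not used by the subgraph `J`. -/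
noncomputable def cost (G J : SimpleGraph V) (v : V) : ℕ :=
  if J.degree v = 0 then G.degree v - 2 else G.degree v - J.degree v

theorem sum_cost (hJ : IsK33Subdivision G J) : ∑ v, cost G J v + 6 = excess G := by
  rw [← hJ.card_degree_eq_three, card_filter, ← sum_add_distrib, excess]
  refine sum_congr rfl fun v _ ↦ ?_
  have := hJ.degree_eq v
  have := degree_le_of_le hJ.le (v := v)
  grind [cost]

theorem degree_eq_zero (hJ : IsK33Subdivision G J) {v : V} (hv : G.degree v ≤ 1) :
    J.degree v = 0 := by
  have := hJ.degree_eq v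
  have := degree_le_of_le hJ.le (v := v)
  omega

theorem card_add_six_le (hJ : IsK33Subdivision G J) {X : Finset V}
    (hX : ∀ x ∈ X, J.degree x = 0) : #X + 6 ≤ Fintype.card V := by
  rw [← hJ.card_degree_eq_three, ← card_union_of_disjoint]
  · exact card_le_univ _
  · refine disjoint_left.2 fun x hx hx' ↦ ?_
    have := hX x hx
    have := (mem_filter.1 hx').2
    omega

theorem card_le_cost (hle : J ≤ G) {v : V} (hv : J.degree v ≠ 0) {X : Finset V}
    (hG : ∀ x ∈ X, G.Adj v x) (hJ : ∀ x ∈ X, ¬ J.Adj v x) : #X ≤ cost G J v := by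
  have hsub : X ⊆ G.neighborFinset v \ J.neighborFinset v := fun x hx ↦
    mem_sdiff.2 ⟨(G.mem_neighborFinset _ _).2 (hG x hx), by simpa using hJ x hx⟩
  have hJG : J.neighborFinset v ⊆ G.neighborFinset v := fun _ ↦ by
    simpa only [mem_neighborFinset] using @hle _ _
  rw [cost, if_neg hv, ← card_neighborFinset_eq_degree, ← card_neighborFinset_eq_degree,
    ← card_sdiff_of_subset hJG]
  exact card_le_card hsub

theorem two_le_sum_cost_of_isNClique (hle : J ≤ G) (hJ : J.CliqueFree 3) {T : Finset V}
    (hT : G.IsNClique 3 T) (hmeet : ∃ t ∈ T, J.degree t ≠ 0) : 2 ≤ ∑ t ∈ T, cost G J t := by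
  have hzero : ∀ {v w}, J.degree v = 0 → ¬ J.Adj v w := fun h hvw ↦
    (degree_pos_iff_exists_adj (G := J) _).2 ⟨_, hvw⟩ |>.ne' h
  have hmissing : ∀ {v w₁ w₂}, G.Adj v w₁ → G.Adj v w₂ → w₁ ≠ w₂ → J.degree v ≠ 0 →
      (if J.Adj v w₁ then 0 else 1) + (if J.Adj v w₂ then 0 else 1) ≤ cost G J v := by
    intro v w₁ w₂ h₁ h₂ hne hdeg
    have hcard := card_le_cost (X := {w ∈ {w₁, w₂} | ¬ J.Adj v w}) hle hdeg (by simp [h₁, h₂])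
      fun x hx ↦ (mem_filter.1 hx).2
    simpa only [card_filter, sum_pair hne, ite_not] using hcard
  obtain ⟨x, y, z, hxy, hxz, hyz, rfl⟩ := is3Clique_iff.1 hT
  have hfree : ¬ (J.Adj x y ∧ J.Adj x z ∧ J.Adj y z) := fun h ↦ hJ _ (is3Clique_triple_iff.2 h)
  have hx := hmissing hxy hxz hyz.ne
  have hy := hmissing hxy.symm hyz hxz.ne
  have hz := hmissing hxz.symm hyz.symm hxy.ne
  rw [sum_insert (by simp [hxy.ne, hxz.ne]), sum_pair hyz.ne]
  have := hzero (v := x) (w := y)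
  clear hmissing hT
  grind [Adj.symm]

end IsK33Subdivision

theorem degree_isolate_of_mem [Fintype V] {G : SimpleGraph V} {s : Finset V} {v : V}
    (hv : v ∈ s) : (isolate G s).degree v = 0 := by
  rw [degree_eq_zero_iff_notMem_support]
  rintro ⟨w, -, hv', -⟩
  exact hv' hv

theorem degree_isolate_pair [Fintype V] (G : SimpleGraph V) {a b v : V} (hab : a ≠ b)
    (hva : v ≠ a) (hvb : v ≠ b) :
    (isolate G {a, b}).degree v + (if G.Adj a v then 1 else 0) + (if G.Adj b v then 1 else 0) =
      G.degree v := by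
  have hnbr : (isolate G {a, b}).neighborFinset v = G.neighborFinset v \ {a, b} := by
    ext w
    have hv : v ∉ ({a, b} : Finset V) := by simp [hva, hvb]
    rw [mem_neighborFinset, mem_sdiff, mem_neighborFinset]
    exact and_congr_right fun _ ↦ and_iff_right hv
  have hinter : #(G.neighborFinset v ∩ {a, b}) =
      (if G.Adj a v then 1 else 0) + (if G.Adj b v then 1 else 0) := by
    rw [inter_comm, ← filter_mem_eq_inter, card_filter, sum_pair hab]
    simp only [mem_neighborFinset, G.adj_comm v]
  rw [← card_neighborFinset_eq_degree, ← card_neighborFinset_eq_degree, hnbr, add_assoc, ← hinter,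
    card_sdiff_add_card_inter]

theorem excess_isolate_pair [Fintype V] {G : SimpleGraph V} (hG : ∀ v, 3 ≤ G.degree v) {a b : V}
    (hne : a ≠ b) (hab : ¬ G.Adj a b) :
    excess (isolate G {a, b}) + 2 * (G.degree a + G.degree b) =
      excess G + 4 + #{v | G.Adj a v ∧ G.Adj b v ∧ G.degree v = 3} := by
  have hdeg : ∀ u, ∑ v, (if G.Adj u v then 1 else 0) = G.degree u := fun u ↦ by
    rw [← card_filter, ← neighborFinset_eq_filter, card_neighborFinset_eq_degree]
  have hpoint : ∀ v, ((isolate G {a, b}).degree v - 2) + (if G.Adj a v then 1 else 0) +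
      (if G.Adj b v then 1 else 0) + (if v = a then G.degree a - 2 else 0) +
      (if v = b then G.degree b - 2 else 0) =
      (G.degree v - 2) + if G.Adj a v ∧ G.Adj b v ∧ G.degree v = 3 then 1 else 0 := by
    intro v
    have := hG v
    rcases eq_or_ne v a with rfl | hva
    · simp [degree_isolate_of_mem, hne, G.adj_comm b, hab]
    rcases eq_or_ne v b with rfl | hvb
    · simp [degree_isolate_of_mem, hva, hab]
    have := degree_isolate_pair G hne hva hvb
    grind
  have hsum := sum_congr (rfl : (univ : Finset V) = univ) fun v _ ↦ hpoint v
  simp only [sum_add_distrib, sum_ite_eq', mem_univ, if_true, hdeg, ← card_filter] at hsum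
  have := hG a
  have := hG b
  simp only [excess]
  omega

theorem degree_isolate_pair_le [Fintype V] {G : SimpleGraph V} {a b v : V} {k : ℕ} (hab : a ≠ b)
    (h : v = a ∨ v = b ∨
      G.degree v ≤ k + (if G.Adj a v then 1 else 0) + (if G.Adj b v then 1 else 0)) :
    (isolate G {a, b}).degree v ≤ k := by
  by_cases hv : v ∈ ({a, b} : Finset V)
  · exact (degree_isolate_of_mem hv).trans_le k.zero_le
  · simp only [mem_insert, mem_singleton, not_or] at hv
    have := degree_isolate_pair G hab hv.1 hv.2
    have := (h.resolve_left hv.1).resolve_left hv.2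
    omega

theorem card_add_six_le_of_not_isPlanar [Fintype V] {G : SimpleGraph V} {a b : V}
    (hG : ¬ (isolate G {a, b}).IsPlanar) {X Y : Finset V}
    (hX : ∀ x ∈ X, (isolate G {a, b}).degree x ≤ 2)
    (hY : ∀ y ∈ Y, (isolate G {a, b}).degree y ≤ 3) (hcard : Fintype.card V < #Y + 5) :
    #X + 6 ≤ Fintype.card V := by
  have hdisj : ∀ {k} {Z : Finset V}, (∀ z ∈ Z, (isolate G {a, b}).degree z < k) →
      #Z + #{v | k ≤ (isolate G {a, b}).degree v} ≤ Fintype.card V := by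
    intro k Z hZ
    rw [← card_union_of_disjoint]
    · exact card_le_univ _
    · exact disjoint_left.2 fun z hz hz' ↦ (hZ z hz).not_ge (mem_filter.1 hz').2
  rcases card_degree_of_not_isPlanar hG with h | h
  · have := hdisj (k := 3) fun x hx ↦ Nat.lt_succ_of_le (hX x hx)
    omega
  · have := hdisj (k := 4) fun y hy ↦ Nat.lt_succ_of_le (hY y hy)
    omega

theorem sum_card_inter_neighborFinset_comm [Fintype V] (G : SimpleGraph V) (s t : Finset V) :
    ∑ x ∈ s, #(t ∩ G.neighborFinset x) = ∑ y ∈ t, #(s ∩ G.neighborFinset y) := by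
  have h := sum_card_bipartiteAbove_eq_sum_card_bipartiteBelow (s := s) (t := t) G.Adj
  convert h using 3 with x _ y _
  · ext; simp [mem_bipartiteAbove]
  · ext; simp [mem_bipartiteBelow, G.adj_comm]

theorem sum_card_neighborFinset_inter [Fintype V] (G : SimpleGraph V) (v : V) :
    ∑ w, #(G.neighborFinset v ∩ G.neighborFinset w) = ∑ x ∈ G.neighborFinset v, G.degree x := by
  simp [sum_card_inter_neighborFinset_comm G univ]

theorem degree_sup_edge_le [Fintype V] (G : SimpleGraph V) (u v w : V) :
    (G ⊔ edge u v).degree w ≤ G.degree w + if w = u ∨ w = v then 1 else 0 := by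
  have hsub : (G ⊔ edge u v).neighborFinset w ⊆
      G.neighborFinset w ∪ if w = u then {v} else if w = v then {u} else ∅ := by
    intro x hx
    simp only [mem_neighborFinset, sup_adj, edge_adj, mem_union] at hx ⊢
    grind
  rw [← card_neighborFinset_eq_degree, ← card_neighborFinset_eq_degree]
  refine (card_le_card hsub).trans ((card_union_le _ _).trans (Nat.add_le_add_left ?_ _))
  split_ifs <;> simp_all

/-- The set of vertices of degree less than `k`. -/
noncomputable def lowDegree [Fintype V] (G : SimpleGraph V) (k : ℕ) : Finset V :=
  {v | G.degree v < k}

@[simp]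
theorem mem_lowDegree [Fintype V] {G : SimpleGraph V} {k : ℕ} {v : V} :
    v ∈ lowDegree G k ↔ G.degree v < k :=
  mem_filter_univ v

theorem exists_isClique_lowDegree [Fintype V] {G : SimpleGraph V} {k : ℕ}
    (hG : ¬ PairApex G) (hΔ : ∀ v, G.degree v ≤ k) :
    ∃ G' : SimpleGraph V, ¬ PairApex G' ∧ (∀ v, G'.degree v ≤ k) ∧
      G'.IsClique (lowDegree G' k : Set V) := by
  obtain ⟨G', -, ⟨hG', hΔ'⟩, hmax⟩ := Finite.exists_le_maximal
    (p := fun G' : SimpleGraph V ↦ ¬ PairApex G' ∧ ∀ v, G'.degree v ≤ k) ⟨hG, hΔ⟩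
  refine ⟨G', hG', hΔ', fun u hu v hv hne ↦ ?_⟩
  rw [mem_coe, mem_lowDegree] at hu hv
  by_contra hadj
  refine (lt_sup_edge _ _ _ hne hadj).not_ge
    (hmax ⟨fun h ↦ hG' (h.anti le_sup_left), fun w ↦ ?_⟩ le_sup_left)
  have := degree_sup_edge_le G' u v w
  have := hΔ' w
  grind

theorem card_le_four_of_not_isPlanar [Fintype V] {G : SimpleGraph V}
    (hcard : Fintype.card V = 10) (hΔ : ∀ v, G.degree v ≤ 4) {a b z : V}
    (hG : ¬ (isolate G {a, b}).IsPlanar) (hab : a ≠ b) (ha : G.degree a = 4)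
    (hza : z ≠ a) (haz : ¬ G.Adj a z) (hz : z = b ∨ G.degree z ≤ 3) {X : Finset V}
    (hX : ∀ x ∈ X, x = a ∨ x = b ∨
      G.degree x ≤ 2 + (if G.Adj a x then 1 else 0) + (if G.Adj b x then 1 else 0)) :
    #X ≤ 4 := by
  have hY : #(insert a (insert z (G.neighborFinset a))) = 6 := by
    rw [card_insert_of_notMem, card_insert_of_notMem, card_neighborFinset_eq_degree, ha] <;>
      simp [haz, hza.symm]
  have := card_add_six_le_of_not_isPlanar hG
    (fun x hx ↦ degree_isolate_pair_le hab (hX x hx))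
    (Y := insert a (insert z (G.neighborFinset a)))
    (fun y hy ↦ degree_isolate_pair_le hab ?_) (by omega)
  · omega
  · have := hΔ y
    simp only [mem_insert, mem_neighborFinset] at hy
    grind

theorem isNClique_isolate {G : SimpleGraph V} {n : ℕ} {s T : Finset V} (hT : G.IsNClique n T)
    (h : Disjoint T s) : (isolate G s).IsNClique n T :=
  ⟨fun _ hx _ hy hne ↦ ⟨hT.1 hx hy hne, disjoint_left.1 h hx, disjoint_left.1 h hy⟩, hT.2⟩

theorem card_inter_neighborFinset_le_two [Fintype V] {G : SimpleGraph V}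
    (hcard : Fintype.card V = 10) (hreg : G.IsRegularOfDegree 4) {a b : V}
    (hG : ¬ (isolate G {a, b}).IsPlanar) (hne : a ≠ b) (hab : ¬ G.Adj a b) :
    #(G.neighborFinset a ∩ G.neighborFinset b) ≤ 2 := by
  have hX := card_le_four_of_not_isPlanar hcard (fun v ↦ (hreg v).le) hG hne (hreg a) hne.symm hab
    (.inl rfl) (X := insert a (insert b (G.neighborFinset a ∩ G.neighborFinset b))) fun x hx ↦ by
      have := hreg x
      simp only [mem_insert, mem_inter, mem_neighborFinset] at hx
      grind
  rw [card_insert_of_notMem (by simp [hne]), card_insert_of_notMem (by simp)] at hX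
  omega

theorem exists_isNClique_three_mem [Fintype V] {G : SimpleGraph V}
    (hcard : Fintype.card V = 10) (hG : ¬ PairApex G) (hreg : G.IsRegularOfDegree 4) (v : V) :
    ∃ T, G.IsNClique 3 T ∧ v ∈ T := by
  by_contra! hno
  have hcodeg : ∀ w, #(G.neighborFinset v ∩ G.neighborFinset w) + 2 * (if G.Adj v w then 1 else 0) ≤
      2 + 2 * (if w = v then 1 else 0) := by
    intro w
    rcases eq_or_ne w v with rfl | hne
    · simp [hreg.degree_eq]
    by_cases hvw : G.Adj v w
    · have hempty : G.neighborFinset v ∩ G.neighborFinset w = ∅ := by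
        refine eq_empty_of_forall_notMem fun x hx ↦ ?_
        simp only [mem_inter, mem_neighborFinset] at hx
        exact hno {v, w, x} (is3Clique_triple_iff.2 ⟨hvw, hx.1, hx.2⟩) (by simp)
      simp [hempty, hvw]
    · simpa [hvw, hne] using
        card_inter_neighborFinset_le_two hcard hreg (fun h ↦ hG ⟨_, _, h⟩) hne.symm hvw
  have hsum := sum_le_sum fun w (_ : w ∈ univ) ↦ hcodeg w
  simp only [sum_add_distrib, ← mul_sum, sum_ite_eq', mem_univ, if_true] at hsum
  simp only [← card_filter, ← neighborFinset_eq_filter, sum_card_neighborFinset_inter,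
    hreg.degree_eq, card_neighborFinset_eq_degree, sum_const, card_univ, hcard,
    smul_eq_mul] at hsum
  omega

theorem pairApex_of_disjoint_triangles [Fintype V] {G : SimpleGraph V}
    (hcard : Fintype.card V = 10) (hreg : G.IsRegularOfDegree 4) {T₁ T₂ : Finset V}
    (h₁ : G.IsNClique 3 T₁) (h₂ : G.IsNClique 3 T₂) (hdisj : Disjoint T₁ T₂) {a b : V}
    (hne : a ≠ b) (hab : ¬ G.Adj a b) (ha : a ∉ T₁ ∪ T₂) (hb : b ∉ T₁ ∪ T₂) : PairApex G := by
  by_contra hG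
  have hexc : excess (isolate G {a, b}) = 8 := by
    have := excess_isolate_pair (fun v ↦ (by simp [hreg.degree_eq] : 3 ≤ G.degree v)) hne hab
    simp only [hreg.degree_eq, excess, sum_const, card_univ, hcard] at this ⊢
    simp at this
    omega
  obtain ⟨J, hJ⟩ := exists_isK33Subdivision (fun h ↦ hG ⟨a, b, h⟩) (by omega)
  have hcost : ∀ T, G.IsNClique 3 T → a ∉ T → b ∉ T →
      2 ≤ ∑ t ∈ T, IsK33Subdivision.cost (isolate G {a, b}) J t := by
    intro T hT ha hb
    refine IsK33Subdivision.two_le_sum_cost_of_isNClique hJ.le hJ.cliqueFree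
      (isNClique_isolate hT (by simp [ha, hb])) ?_
    by_contra! hzero
    have := hJ.card_add_six_le (X := insert a (insert b T)) (by
      simp only [mem_insert, forall_eq_or_imp]
      exact ⟨hJ.degree_eq_zero (by simp [degree_isolate_of_mem]),
        hJ.degree_eq_zero (by simp [degree_isolate_of_mem]), hzero⟩)
    rw [card_insert_of_notMem (by simp [hne, ha]), card_insert_of_notMem hb, hT.2] at this
    omega
  simp only [mem_union, not_or] at ha hb
  have h₁ := hcost T₁ h₁ ha.1 hb.1
  have h₂ := hcost T₂ h₂ ha.2 hb.2
  have hle := sum_le_univ_sum_of_nonneg (s := T₁ ∪ T₂)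
    fun t ↦ Nat.zero_le (IsK33Subdivision.cost (isolate G {a, b}) J t)
  rw [sum_union hdisj] at hle
  have := hJ.sum_cost
  omega

theorem card_neighborFinset_sdiff_add [Fintype V] {G : SimpleGraph V} {n : ℕ} {T : Finset V}
    (hT : G.IsNClique n T) {t : V} (ht : t ∈ T) :
    #(G.neighborFinset t \ T) + n = G.degree t + 1 := by
  have hinter : G.neighborFinset t ∩ T = T.erase t := by
    ext x
    simp only [mem_inter, mem_neighborFinset, mem_erase]
    exact ⟨fun h ↦ ⟨h.1.ne', h.2⟩, fun h ↦ ⟨hT.1 ht h.2 h.1.symm, h.2⟩⟩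
  rw [← card_neighborFinset_eq_degree, ← card_sdiff_add_card_inter (G.neighborFinset t) T, hinter,
    ← hT.2, add_assoc, card_erase_add_one ht]

theorem exists_notMem_forall_not_adj_of_isNClique [Fintype V] {G : SimpleGraph V} {n k : ℕ}
    {T : Finset V} (hT : G.IsNClique n T) (hk : ∀ t ∈ T, G.degree t + 1 ≤ n + k)
    (hcard : n + n * k < Fintype.card V) : ∃ v ∉ T, ∀ t ∈ T, ¬ G.Adj t v := by
  have hout : ∀ t ∈ T, #(G.neighborFinset t \ T) ≤ k := fun t ht ↦ by
    have := card_neighborFinset_sdiff_add hT ht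
    have := hk t ht
    omega
  have hbiUnion := card_biUnion_le_card_mul T _ k hout
  have hunion := card_union_le T (T.biUnion fun t ↦ G.neighborFinset t \ T)
  rw [hT.2] at hbiUnion hunion
  obtain ⟨v, -, hv⟩ := exists_mem_notMem_of_card_lt_card
    (s := T ∪ T.biUnion fun t ↦ G.neighborFinset t \ T) (t := univ) (by rw [card_univ]; omega)
  simp only [mem_union, mem_biUnion, mem_sdiff, mem_neighborFinset] at hv
  exact ⟨v, by tauto, fun t ht htv ↦ hv (.inr ⟨t, ht, htv, by tauto⟩)⟩

theorem pairApex_of_isRegularOfDegree_four [Fintype V] {G : SimpleGraph V}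
    (hcard : Fintype.card V = 10) (hreg : G.IsRegularOfDegree 4) : PairApex G := by
  by_contra hG
  obtain ⟨v₁⟩ : Nonempty V := Fintype.card_pos_iff.1 (by omega)
  obtain ⟨T₁, hT₁, -⟩ := exists_isNClique_three_mem hcard hG hreg v₁
  obtain ⟨v₂, hv₂, hv₂T₁⟩ := exists_notMem_forall_not_adj_of_isNClique (k := 2) hT₁
    (fun t _ ↦ by rw [hreg t]) (by omega)
  obtain ⟨T₂, hT₂, hv₂T₂⟩ := exists_isNClique_three_mem hcard hG hreg v₂
  have hdisj : Disjoint T₁ T₂ := disjoint_left.2 fun t ht₁ ht₂ ↦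
    hv₂T₁ t ht₁ (hT₂.1 ht₂ hv₂T₂ fun h ↦ hv₂ (h ▸ ht₁))
  have hPcard : #(T₁ ∪ T₂)ᶜ = 4 := by
    rw [card_compl, card_union_of_disjoint hdisj, hT₁.2, hT₂.2, hcard]
  have hP : G.IsNClique 4 (T₁ ∪ T₂)ᶜ := by
    refine ⟨fun a ha b hb hne ↦ not_not.1 fun hab ↦ hG ?_, hPcard⟩
    exact pairApex_of_disjoint_triangles hcard hreg hT₁ hT₂ hdisj hne hab (mem_compl.1 ha)
      (mem_compl.1 hb)
  obtain ⟨s, hs⟩ := card_pos.1 (hPcard ▸ Nat.succ_pos 3 : 0 < #(T₁ ∪ T₂)ᶜ)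
  have hs' := hP.erase_of_mem hs
  obtain ⟨t, ht, hst⟩ : ∃ t ∈ T₁, ¬ G.Adj s t := by
    by_contra! hadj
    have hsub : T₁ ∪ (T₁ ∪ T₂)ᶜ.erase s ⊆ G.neighborFinset s := union_subset
      (fun t ht ↦ (G.mem_neighborFinset _ _).2 (hadj t ht)) fun t ht ↦ (G.mem_neighborFinset _ _).2
        (hP.1 hs (mem_of_mem_erase ht) (ne_of_mem_erase ht).symm)
    have := card_le_card hsub
    rw [card_union_of_disjoint, hT₁.2, hs'.2, card_neighborFinset_eq_degree, hreg s] at this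
    · omega
    · exact disjoint_left.2 fun t ht ht' ↦ by simp [ht] at ht'
  simp only [compl_union, mem_inter, mem_compl] at hs
  have hne : s ≠ t := (ne_of_mem_of_not_mem ht hs.1).symm
  refine hG (pairApex_of_disjoint_triangles hcard hreg hs' hT₂ ?_ hne hst ?_ ?_)
  · exact disjoint_left.2 fun t ht ht' ↦ by simp [ht'] at ht
  · simp [hs.2]
  · simp [ht, disjoint_left.1 hdisj ht]

theorem lowDegree_mono [Fintype V] (G : SimpleGraph V) {k l : ℕ} (hkl : k ≤ l) :
    lowDegree G k ⊆ lowDegree G l := fun _ hv ↦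
  mem_lowDegree.2 ((mem_lowDegree.1 hv).trans_le hkl)

theorem card_compl_lowDegree_inter_add [Fintype V] {G : SimpleGraph V} {k : ℕ}
    (hsat : G.IsClique (lowDegree G k : Set V)) {v : V} (hv : G.degree v < k) :
    #((lowDegree G k)ᶜ ∩ G.neighborFinset v) + #(lowDegree G k) = G.degree v + 1 := by
  have := card_neighborFinset_sdiff_add ⟨hsat, rfl⟩ (mem_lowDegree.2 hv)
  rwa [sdiff_eq_inter_compl, inter_comm] at this

theorem card_lowDegree_le [Fintype V] {G : SimpleGraph V} {k : ℕ}
    (hsat : G.IsClique (lowDegree G k : Set V)) : #(lowDegree G k) ≤ k := by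
  rcases (lowDegree G k).eq_empty_or_nonempty with h | ⟨v, hv⟩
  · simp [h]
  · rw [mem_lowDegree] at hv
    have := card_compl_lowDegree_inter_add hsat hv
    omega

theorem exists_degree_eq_four_forall_not_adj [Fintype V] {G : SimpleGraph V}
    (hcard : Fintype.card V = 10) (hΔ : ∀ v, G.degree v ≤ 4)
    (hsat : G.IsClique (lowDegree G 4 : Set V)) :
    ∃ a, G.degree a = 4 ∧ ∀ v ∈ lowDegree G 4, ¬ G.Adj a v := by
  by_contra! h
  have hlow : ∑ a ∈ (lowDegree G 4)ᶜ, 1 ≤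
      ∑ a ∈ (lowDegree G 4)ᶜ, #(lowDegree G 4 ∩ G.neighborFinset a) := by
    refine sum_le_sum fun a ha ↦ ?_
    rw [mem_compl, mem_lowDegree, not_lt] at ha
    obtain ⟨v, hv, hav⟩ := h a ((hΔ a).antisymm ha)
    exact card_pos.2 ⟨v, mem_inter.2 ⟨hv, (G.mem_neighborFinset _ _).2 hav⟩⟩
  have hup : ∑ v ∈ lowDegree G 4, (#((lowDegree G 4)ᶜ ∩ G.neighborFinset v) + #(lowDegree G 4)) ≤
      ∑ v ∈ lowDegree G 4, 4 := by
    refine sum_le_sum fun v hv ↦ ?_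
    rw [mem_lowDegree] at hv
    exact (card_compl_lowDegree_inter_add hsat hv).trans_le hv
  have hs := card_lowDegree_le hsat
  rw [sum_card_inter_neighborFinset_comm] at hlow
  simp only [sum_add_distrib, sum_const, smul_eq_mul, card_compl, hcard] at hlow hup
  interval_cases #(lowDegree G 4) <;> omega

theorem card_inter_neighborFinset_add_le_two [Fintype V] {G : SimpleGraph V}
    (hcard : Fintype.card V = 10) (hΔ : ∀ v, G.degree v ≤ 4)
    (hlow : (lowDegree G 4).Nonempty) {a b : V} (hG : ¬ (isolate G {a, b}).IsPlanar)
    (hab : a ≠ b) (ha : G.degree a = 4) (hb : G.degree b = 4)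
    (haS : ∀ v ∈ lowDegree G 4, ¬ G.Adj a v) :
    #(lowDegree G 3) + #(G.neighborFinset a ∩ G.neighborFinset b) +
      #((lowDegree G 4 \ lowDegree G 3) ∩ G.neighborFinset b) ≤ 2 := by
  obtain ⟨z, hz⟩ := hlow
  have hz' := mem_lowDegree.1 hz
  have hX := card_le_four_of_not_isPlanar hcard hΔ hG hab ha (by rintro rfl; omega) (haS z hz)
    (.inr (by omega)) (X := insert a (insert b ((lowDegree G 3 ∪
      (G.neighborFinset a ∩ G.neighborFinset b)) ∪
        ((lowDegree G 4 \ lowDegree G 3) ∩ G.neighborFinset b)))) fun x hx ↦ by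
      have := hΔ x
      simp only [mem_insert, mem_union, mem_inter, mem_sdiff, mem_neighborFinset,
        mem_lowDegree] at hx
      grind
  rw [card_insert_of_notMem, card_insert_of_notMem, card_union_of_disjoint,
    card_union_of_disjoint] at hX
  · omega
  · refine disjoint_left.2 fun x hx hx' ↦ haS x (lowDegree_mono G (Nat.le_succ 3) hx) ?_
    exact (G.mem_neighborFinset _ _).1 (mem_inter.1 hx').1
  · refine disjoint_left.2 fun x hx hx' ↦ ?_
    simp only [mem_union, mem_inter, mem_neighborFinset, mem_sdiff] at hx hx'
    exact hx.elim hx'.1.2 fun h ↦ haS x hx'.1.1 h.1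
  · simp [hb]
  · simp [ha, hab]

theorem sum_card_inter_neighborFinset_lowDegree_le [Fintype V] {G : SimpleGraph V}
    (hsat : G.IsClique (lowDegree G 4 : Set V)) {a : V}
    (ha : G.neighborFinset a ⊆ (lowDegree G 4)ᶜ) (haS : a ∈ (lowDegree G 4)ᶜ) :
    ∑ w ∈ lowDegree G 4, #(G.neighborFinset a ∩ G.neighborFinset w) +
      #(lowDegree G 3) * #(lowDegree G 4) ≤ #(lowDegree G 3) * 3 +
      ∑ b ∈ (lowDegree G 4)ᶜ.erase a, #((lowDegree G 4 \ lowDegree G 3) ∩ G.neighborFinset b) := by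
  have hsub := sum_le_sum fun w (_ : w ∈ lowDegree G 4) ↦ card_le_card <|
    inter_subset_inter_right (u := G.neighborFinset w) ha
  have hR : ∑ w ∈ lowDegree G 3, (#((lowDegree G 4)ᶜ ∩ G.neighborFinset w) + #(lowDegree G 4)) ≤
      ∑ w ∈ lowDegree G 3, 3 := by
    refine sum_le_sum fun w hw ↦ ?_
    have hw := mem_lowDegree.1 hw
    have := card_compl_lowDegree_inter_add hsat (v := w) (by omega)
    omega
  have hC : ∑ w ∈ lowDegree G 4 \ lowDegree G 3, #((lowDegree G 4)ᶜ ∩ G.neighborFinset w) =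
      ∑ b ∈ (lowDegree G 4)ᶜ.erase a,
        #((lowDegree G 4 \ lowDegree G 3) ∩ G.neighborFinset b) := by
    have hempty : (lowDegree G 4 \ lowDegree G 3) ∩ G.neighborFinset a = ∅ :=
      disjoint_iff_inter_eq_empty.1 <|
        disjoint_left.2 fun x hx hx' ↦ mem_compl.1 (ha hx') (mem_sdiff.1 hx).1
    rw [← sum_card_inter_neighborFinset_comm, ← add_sum_erase _ _ haS, hempty, card_empty,
      zero_add]
  have hsplit := sum_sdiff (f := fun w ↦ #((lowDegree G 4)ᶜ ∩ G.neighborFinset w))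
    (lowDegree_mono G (by norm_num : 3 ≤ 4))
  simp only [sum_add_distrib, sum_const, smul_eq_mul] at hR
  omega

theorem lowDegree_three_eq_empty [Fintype V] {G : SimpleGraph V}
    (hcard : Fintype.card V = 10) (hG : ¬ PairApex G) (hΔ : ∀ v, G.degree v ≤ 4)
    (hsat : G.IsClique (lowDegree G 4 : Set V)) (hlow : (lowDegree G 4).Nonempty) :
    lowDegree G 3 = ∅ ∧ #(lowDegree G 4) ≤ 3 := by
  obtain ⟨a, ha, haS⟩ := exists_degree_eq_four_forall_not_adj hcard hΔ hsat
  have haSc : a ∈ (lowDegree G 4)ᶜ := by simp [ha]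
  have hnbr : G.neighborFinset a ⊆ (lowDegree G 4)ᶜ := fun x hx ↦
    mem_compl.2 fun h ↦ haS x h ((G.mem_neighborFinset _ _).1 hx)
  have htotal : ∑ w, #(G.neighborFinset a ∩ G.neighborFinset w) = 16 := by
    have hdeg : ∀ x ∈ G.neighborFinset a, G.degree x = 4 := fun x hx ↦
      (hΔ x).eq_of_not_lt fun h ↦ mem_compl.1 (hnbr hx) (mem_lowDegree.2 h)
    rw [sum_card_neighborFinset_inter, sum_congr rfl hdeg, sum_const,
      card_neighborFinset_eq_degree, ha, smul_eq_mul]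
  have hpair : ∑ b ∈ (lowDegree G 4)ᶜ.erase a, (#(lowDegree G 3) +
      #(G.neighborFinset a ∩ G.neighborFinset b) +
      #((lowDegree G 4 \ lowDegree G 3) ∩ G.neighborFinset b)) ≤
      ∑ b ∈ (lowDegree G 4)ᶜ.erase a, 2 := by
    refine sum_le_sum fun b hb ↦ ?_
    rw [mem_erase, mem_compl, mem_lowDegree] at hb
    exact card_inter_neighborFinset_add_le_two hcard hΔ hlow (fun h ↦ hG ⟨_, _, h⟩)
      hb.1.symm ha ((hΔ b).eq_of_not_lt hb.2) haS
  have hcut := sum_card_inter_neighborFinset_lowDegree_le hsat hnbr haSc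
  rw [← sum_compl_add_sum (lowDegree G 4), ← add_sum_erase _ _ haSc, inter_self,
    card_neighborFinset_eq_degree, ha] at htotal
  simp only [sum_add_distrib, sum_const, smul_eq_mul, card_erase_of_mem haSc, card_compl,
    hcard] at hpair
  have hs := card_lowDegree_le hsat
  have hpos := hlow.card_pos
  rw [← card_eq_zero]
  interval_cases #(lowDegree G 4) <;> omega

theorem card_lowDegree_eq_two [Fintype V] {G : SimpleGraph V}
    (hcard : Fintype.card V = 10) (hG : ¬ PairApex G) (hΔ : ∀ v, G.degree v ≤ 4)
    (hsat : G.IsClique (lowDegree G 4 : Set V)) (hlow : (lowDegree G 4).Nonempty) :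
    (∀ v, 3 ≤ G.degree v) ∧ #(lowDegree G 4) = 2 := by
  obtain ⟨hempty, hle⟩ := lowDegree_three_eq_empty hcard hG hΔ hsat hlow
  have hδ : ∀ v, 3 ≤ G.degree v := fun v ↦
    not_lt.1 fun h ↦ notMem_empty v (hempty ▸ mem_lowDegree.2 h)
  have hodd : lowDegree G 4 = ({v | Odd (G.degree v)} : Finset V) := by
    ext v
    have h₃ := hδ v
    have h₄ := hΔ v
    rw [mem_lowDegree, mem_filter_univ]
    interval_cases G.degree v <;> decide
  have heven : Even #(lowDegree G 4) := by
    convert G.even_card_odd_degree_vertices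
  have hpos := hlow.card_pos
  refine ⟨hδ, ?_⟩
  interval_cases #(lowDegree G 4) <;> first | rfl | exact absurd heven (by decide)

theorem card_inter_add_card_compl_inter_neighborFinset [Fintype V] (G : SimpleGraph V)
    (s : Finset V) (v : V) :
    #(s ∩ G.neighborFinset v) + #(sᶜ ∩ G.neighborFinset v) = G.degree v := by
  rw [inter_comm s, inter_comm sᶜ, ← sdiff_eq_inter_compl, add_comm, card_sdiff_add_card_inter,
    card_neighborFinset_eq_degree]

theorem card_inter_neighborFinset_add_le_one [Fintype V] {G : SimpleGraph V}
    (hcard : Fintype.card V = 10) (hΔ : ∀ v, G.degree v ≤ 4) {u u' : V}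
    (hlow : lowDegree G 4 = {u, u'}) (huu' : G.Adj u u') {a b : V}
    (hG : ¬ (isolate G {a, b}).IsPlanar) (ha : a ∉ lowDegree G 4)
    (hb : b ∉ lowDegree G 4) (hab : a ≠ b) (hau : G.Adj a u) (hau' : ¬ G.Adj a u') :
    #(((lowDegree G 4)ᶜ ∩ G.neighborFinset a) ∩ G.neighborFinset b) +
      #({u'} ∩ G.neighborFinset b) ≤ 1 := by
  have hu : u ∈ lowDegree G 4 := by simp [hlow]
  have hu' : u' ∈ lowDegree G 4 := by simp [hlow]
  have hdeg := mem_lowDegree.1 hu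
  have hdeg' := mem_lowDegree.1 hu'
  have hX := card_le_four_of_not_isPlanar hcard hΔ hG hab
    ((hΔ a).eq_of_not_lt fun h ↦ ha (mem_lowDegree.2 h)) (ne_of_mem_of_not_mem hu' ha) hau'
    (.inr (by omega)) (X := insert a (insert b (insert u
      ((((lowDegree G 4)ᶜ ∩ G.neighborFinset a) ∩ G.neighborFinset b) ∪
        ({u'} ∩ G.neighborFinset b))))) fun x hx ↦ by
      have := hΔ x
      simp only [mem_insert, mem_union, mem_inter, mem_neighborFinset, mem_singleton] at hx
      grind
  have := hu.ne_of_notMem ha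
  rw [card_insert_of_notMem, card_insert_of_notMem, card_insert_of_notMem,
    card_union_of_disjoint] at hX
  · omega
  · refine disjoint_left.2 fun x hx hx' ↦ ?_
    simp only [mem_inter, mem_singleton, mem_compl] at hx hx'
    exact hx.1.1 (hx'.1 ▸ hu')
  · simp [hu, huu'.ne]
  · simp [(ne_of_mem_of_not_mem hu hb).symm, (ne_of_mem_of_not_mem hu' hb).symm]
  · simp [(ne_of_mem_of_not_mem hu ha).symm, (ne_of_mem_of_not_mem hu' ha).symm, hab]

theorem card_compl_lowDegree_inter_eq_two [Fintype V] {G : SimpleGraph V}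
    (hδ : ∀ v, 3 ≤ G.degree v) {u u' : V} (hlow : lowDegree G 4 = {u, u'}) (huu' : G.Adj u u')
    {v : V} (hv : v ∈ lowDegree G 4) : #((lowDegree G 4)ᶜ ∩ G.neighborFinset v) = 2 := by
  have hclique : G.IsClique (lowDegree G 4 : Set V) := by simp [hlow, huu']
  rw [mem_lowDegree] at hv
  have hsum := card_compl_lowDegree_inter_add hclique hv
  have hcard : #(lowDegree G 4) = 2 := hlow ▸ card_pair huu'.ne
  have := hδ v
  omega

theorem sum_card_lowDegree_inter_le_three [Fintype V] {G : SimpleGraph V}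
    (hδ : ∀ v, 3 ≤ G.degree v) {u u' : V} (hlow : lowDegree G 4 = {u, u'}) (huu' : G.Adj u u')
    {a : V} (ha : a ∉ lowDegree G 4) (hau : G.Adj a u) :
    ∑ x ∈ (lowDegree G 4)ᶜ ∩ G.neighborFinset a, #(lowDegree G 4 ∩ G.neighborFinset x) ≤ 3 := by
  have hcut := fun v ↦ card_compl_lowDegree_inter_eq_two hδ hlow huu' (v := v)
  have hmem : a ∈ (lowDegree G 4)ᶜ ∩ G.neighborFinset u := by simpa [hau.symm] using ha
  have hu := card_erase_lt_of_mem hmem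
  have hu' := card_le_card <| inter_subset_inter_right (u := G.neighborFinset u')
    (inter_subset_left (s₁ := (lowDegree G 4)ᶜ) (s₂ := G.neighborFinset a))
  have hsub : ((lowDegree G 4)ᶜ ∩ G.neighborFinset a) ∩ G.neighborFinset u ⊆
      ((lowDegree G 4)ᶜ ∩ G.neighborFinset u).erase a := fun x hx ↦ by
    simp only [mem_inter, mem_neighborFinset, mem_erase] at hx ⊢
    exact ⟨hx.1.2.ne', hx.1.1, hx.2⟩
  have := card_le_card hsub
  rw [hcut u (by simp [hlow])] at hu
  rw [hcut u' (by simp [hlow])] at hu'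
  rw [sum_card_inter_neighborFinset_comm]
  nth_rw 1 [hlow]
  rw [sum_pair huu'.ne]
  omega

theorem six_le_sum_card_inter_neighborFinset [Fintype V] {G : SimpleGraph V}
    (hΔ : ∀ v, G.degree v ≤ 4) (hδ : ∀ v, 3 ≤ G.degree v) {u u' : V}
    (hlow : lowDegree G 4 = {u, u'}) (huu' : G.Adj u u') {a : V} (ha : a ∉ lowDegree G 4)
    (hau : G.Adj a u) (hau' : ¬ G.Adj a u') :
    6 ≤ ∑ b ∈ (lowDegree G 4)ᶜ.erase a,
      #(((lowDegree G 4)ᶜ ∩ G.neighborFinset a) ∩ G.neighborFinset b) := by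
  have hdeg : ∀ v ∉ lowDegree G 4, G.degree v = 4 := fun v hv ↦
    (hΔ v).eq_of_not_lt fun h ↦ hv (mem_lowDegree.2 h)
  have hA : #((lowDegree G 4)ᶜ ∩ G.neighborFinset a) = 3 := by
    have hSa : lowDegree G 4 ∩ G.neighborFinset a = {u} := by
      ext x
      simp only [hlow, mem_inter, mem_insert, mem_singleton, mem_neighborFinset]
      grind
    have := card_inter_add_card_compl_inter_neighborFinset G (lowDegree G 4) a
    rw [hSa, hdeg a ha, card_singleton] at this
    omega
  have hAS := sum_card_lowDegree_inter_le_three hδ hlow huu' ha hau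
  have hAD : ∀ x ∈ (lowDegree G 4)ᶜ ∩ G.neighborFinset a, #(lowDegree G 4 ∩ G.neighborFinset x) +
      #((lowDegree G 4)ᶜ.erase a ∩ G.neighborFinset x) = 3 := by
    intro x hx
    rw [mem_inter, mem_compl, mem_neighborFinset] at hx
    have := card_inter_add_card_compl_inter_neighborFinset G (lowDegree G 4) x
    rw [hdeg x hx.1] at this
    rw [erase_inter, card_erase_of_mem (by simpa [hx.2.symm] using ha)]
    have : 0 < #((lowDegree G 4)ᶜ ∩ G.neighborFinset x) :=
      card_pos.2 ⟨a, by simpa [hx.2.symm] using ha⟩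
    omega
  have hsum := sum_congr rfl hAD
  rw [sum_add_distrib, sum_const, hA, smul_eq_mul] at hsum
  rw [sum_card_inter_neighborFinset_comm]
  omega

theorem adj_of_lowDegree_eq_pair [Fintype V] {G : SimpleGraph V}
    (hcard : Fintype.card V = 10) (hG : ¬ PairApex G) (hΔ : ∀ v, G.degree v ≤ 4)
    (hδ : ∀ v, 3 ≤ G.degree v) {u u' : V} (hlow : lowDegree G 4 = {u, u'}) (huu' : G.Adj u u')
    {a : V} (ha : a ∉ lowDegree G 4) (hau : G.Adj a u) : G.Adj a u' := by
  by_contra hau'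
  have hle := sum_le_sum fun b (hb : b ∈ (lowDegree G 4)ᶜ.erase a) ↦
    card_inter_neighborFinset_add_le_one hcard hΔ hlow huu' (fun h ↦ hG ⟨_, _, h⟩) ha
      (mem_compl.1 (mem_of_mem_erase hb)) (ne_of_mem_erase hb).symm hau hau'
  have hcutu' : #((lowDegree G 4)ᶜ.erase a ∩ G.neighborFinset u') = 2 := by
    rw [erase_inter, erase_eq_of_notMem]
    · exact card_compl_lowDegree_inter_eq_two hδ hlow huu' (by simp [hlow])
    · rw [mem_inter, mem_neighborFinset]
      exact fun h ↦ hau' h.2.symm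
  have hS : #(lowDegree G 4) = 2 := hlow ▸ card_pair huu'.ne
  rw [sum_add_distrib, sum_card_inter_neighborFinset_comm G _ {u'}, sum_singleton, hcutu',
    sum_const, card_erase_of_mem (mem_compl.2 ha), card_compl, hcard, hS] at hle
  have hge := six_le_sum_card_inter_neighborFinset hΔ hδ hlow huu' ha hau hau'
  simp only [smul_eq_mul] at hle
  omega

theorem pairApex_of_lowDegree_eq_pair [Fintype V] {G : SimpleGraph V}
    (hcard : Fintype.card V = 10) (hΔ : ∀ v, G.degree v ≤ 4)
    (hδ : ∀ v, 3 ≤ G.degree v) {u u' : V} (hlow : lowDegree G 4 = {u, u'}) (huu' : G.Adj u u') :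
    PairApex G := by
  by_contra hG
  have hu : G.degree u < 4 := mem_lowDegree.1 (by simp [hlow])
  have hu' : G.degree u' < 4 := mem_lowDegree.1 (by simp [hlow])
  have hmem : ∀ {v}, v ∉ lowDegree G 4 ↔ v ≠ u ∧ v ≠ u' := by simp [hlow]
  have hdeg : ∀ {v}, v ≠ u → v ≠ u' → G.degree v = 4 := fun {v} hv hv' ↦
    (hΔ v).eq_of_not_lt fun h ↦ hmem.2 ⟨hv, hv'⟩ (mem_lowDegree.2 h)
  have hadj : ∀ {v}, v ≠ u → v ≠ u' → (G.Adj v u ↔ G.Adj v u') := fun hv hv' ↦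
    ⟨adj_of_lowDegree_eq_pair hcard hG hΔ hδ hlow huu' (hmem.2 ⟨hv, hv'⟩),
      adj_of_lowDegree_eq_pair hcard hG hΔ hδ (hlow.trans (pair_comm u u')) huu'.symm
        (hmem.2 ⟨hv, hv'⟩)⟩
  obtain ⟨a, hau, hau'⟩ : ∃ a ∈ G.neighborFinset u, a ≠ u' :=
    exists_mem_ne (by rw [card_neighborFinset_eq_degree]; have := hδ u; omega) u'
  rw [mem_neighborFinset] at hau
  have ha := hdeg hau.ne' hau'
  obtain ⟨x, hax, hxu⟩ : ∃ x ∈ G.neighborFinset a, x ∉ insert u ((G.neighborFinset u).erase a) := by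
    refine exists_mem_notMem_of_card_lt_card ?_
    rw [card_insert_of_notMem (by simp), card_erase_of_mem (by simpa using hau)]
    simp only [card_neighborFinset_eq_degree]
    omega
  simp only [mem_insert, mem_erase, mem_neighborFinset, not_or, not_and] at hax hxu
  have hxu' : ¬ G.Adj u x := hxu.2 hax.ne'
  have hxne : x ≠ u' := by rintro rfl; exact hxu' huu'
  have hxdeg := hdeg hxu.1 hxne
  obtain ⟨w, hxw, hwu⟩ : ∃ w ∈ G.neighborFinset x, w ∉ G.neighborFinset u := by
    refine exists_mem_notMem_of_card_lt_card ?_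
    simp only [card_neighborFinset_eq_degree]
    omega
  rw [mem_neighborFinset] at hxw hwu
  have hwu₁ : w ≠ u := by rintro rfl; exact hxu' hxw.symm
  have hwu₂ : w ≠ u' := by rintro rfl; exact hwu huu'
  have hwa : w ≠ a := by rintro rfl; exact hwu hau
  have := card_le_four_of_not_isPlanar hcard hΔ (fun h ↦ hG ⟨_, _, h⟩) hwa (hdeg hwu₁ hwu₂)
    hwu₁.symm (fun h ↦ hwu h.symm) (.inr (by omega)) (X := {w, a, u, u', x}) fun y hy ↦ by
      have := (hadj hau.ne' hau').1 hau.symm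
      simp only [mem_insert, mem_singleton] at hy
      grind [Adj.symm]
  simp [card_insert_of_notMem, hwa, hwu₁, hwu₂, hxw.ne', hau.ne', hau', hax.ne, huu'.ne,
    Ne.symm hxu.1, hxne.symm] at this

theorem pairApex_of_card_eq_ten [Fintype V] {G : SimpleGraph V} (hcard : Fintype.card V = 10)
    (hΔ : ∀ v, G.degree v ≤ 4) : PairApex G := by
  by_contra h
  obtain ⟨G', hG', hΔ', hclique⟩ := exists_isClique_lowDegree h hΔ
  rcases (lowDegree G' 4).eq_empty_or_nonempty with hempty | hne
  · refine hG' (pairApex_of_isRegularOfDegree_four hcard fun v ↦ (hΔ' v).eq_of_not_lt fun hv ↦ ?_)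
    exact notMem_empty v (hempty ▸ mem_lowDegree.2 hv)
  · obtain ⟨hδ, htwo⟩ := card_lowDegree_eq_two hcard hG' hΔ' hclique hne
    obtain ⟨u, u', hne, hlow⟩ := card_eq_two.1 htwo
    refine hG' (pairApex_of_lowDegree_eq_pair hcard hΔ' hδ hlow (hclique ?_ ?_ hne)) <;> simp [hlow]

theorem sum_eq_add_sum_inter_neighborFinset_add [Fintype V] {G : SimpleGraph V} {s : Finset V}
    {a : V} (ha : a ∈ s) (φ : V → ℕ) :
    ∑ v ∈ s, φ v = φ a + ∑ v ∈ s ∩ G.neighborFinset a, φ v +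
      ∑ v ∈ s \ insert a (G.neighborFinset a), φ v := by
  rw [← sum_inter_add_sum_sdiff s (insert a (G.neighborFinset a)), inter_insert_of_mem ha,
    sum_insert (by simp)]

theorem sum_sum_inter_neighborFinset [Fintype V] (G : SimpleGraph V) (s : Finset V) (φ : V → ℕ) :
    ∑ v ∈ s, ∑ x ∈ s ∩ G.neighborFinset v, φ x = ∑ x ∈ s, #(s ∩ G.neighborFinset x) * φ x := by
  rw [sum_comm' (t' := s) (s' := fun x ↦ s ∩ G.neighborFinset x)]
  · simp only [sum_const, smul_eq_mul]
  · intro v x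
    simp only [mem_inter, mem_neighborFinset, G.adj_comm x]
    tauto

/-- The graphs with eleven vertices of which four have degree three and seven have degree four,
that is, with 20 edges and all degrees three or four. -/
structure IsThreeFourGraph [Fintype V] (G : SimpleGraph V) : Prop where
  card_eq : Fintype.card V = 11
  three_le_degree : ∀ v, 3 ≤ G.degree v
  degree_le_four : ∀ v, G.degree v ≤ 4
  card_lowDegree : #(lowDegree G 4) = 4

/-- The number of neighbors of `v` of degree less than four. -/
noncomputable def lowNeighbors [Fintype V] (G : SimpleGraph V) (v : V) : ℕ :=
  #(lowDegree G 4 ∩ G.neighborFinset v)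

namespace IsThreeFourGraph

open IsK33Subdivision

variable [Fintype V] {G : SimpleGraph V} {a b : V}

theorem degree_eq_three (h : IsThreeFourGraph G) {v : V} (hv : v ∈ lowDegree G 4) :
    G.degree v = 3 := by
  have := h.three_le_degree v
  have := mem_lowDegree.1 hv
  omega

theorem degree_eq_four (h : IsThreeFourGraph G) {v : V} (hv : v ∉ lowDegree G 4) :
    G.degree v = 4 :=
  (h.degree_le_four v).eq_of_not_lt fun hlt ↦ hv (mem_lowDegree.2 hlt)

theorem card_compl_lowDegree (h : IsThreeFourGraph G) : #(lowDegree G 4)ᶜ = 7 := by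
  rw [card_compl, h.card_eq, h.card_lowDegree]

theorem excess_eq (h : IsThreeFourGraph G) : excess G = 18 := by
  have hlow : ∀ v ∈ lowDegree G 4, G.degree v - 2 = 1 := fun v hv ↦ by rw [h.degree_eq_three hv]
  have hcompl : ∀ v ∈ (lowDegree G 4)ᶜ, G.degree v - 2 = 2 := fun v hv ↦ by
    rw [h.degree_eq_four (mem_compl.1 hv)]
  rw [excess, ← sum_add_sum_compl (lowDegree G 4), sum_congr rfl hlow, sum_congr rfl hcompl,
    sum_const, sum_const, h.card_lowDegree, h.card_compl_lowDegree]
  rfl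

theorem lowNeighbors_add (h : IsThreeFourGraph G) (ha : a ∉ lowDegree G 4) :
    lowNeighbors G a + #((lowDegree G 4)ᶜ ∩ G.neighborFinset a) = 4 :=
  (card_inter_add_card_compl_inter_neighborFinset G _ a).trans (h.degree_eq_four ha)

theorem exists_adj_of_neighborFinset_eq_lowDegree (h : IsThreeFourGraph G)
    (ha : G.neighborFinset a = lowDegree G 4) :
    ∃ q ∉ lowDegree G 4, ∃ w ∉ lowDegree G 4, a ≠ q ∧ a ≠ w ∧ G.Adj q w := by
  obtain ⟨c, hc⟩ : (lowDegree G 4).Nonempty := card_pos.1 (by simp [h.card_lowDegree])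
  have hac : G.Adj a c := (G.mem_neighborFinset _ _).1 (ha ▸ hc)
  obtain ⟨q, hq, hqc⟩ : ∃ q ∈ (lowDegree G 4)ᶜ, q ∉ G.neighborFinset c := by
    refine exists_mem_notMem_of_card_lt_card ?_
    rw [card_neighborFinset_eq_degree, h.degree_eq_three hc, h.card_compl_lowDegree]
    norm_num
  rw [mem_compl] at hq
  rw [mem_neighborFinset, G.adj_comm] at hqc
  obtain ⟨w, hw, hwC⟩ : ∃ w ∈ G.neighborFinset q, w ∉ lowDegree G 4 := by
    by_contra! hsub
    have := eq_of_subset_of_card_le hsub (by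
      rw [card_neighborFinset_eq_degree, h.degree_eq_four hq, h.card_lowDegree])
    exact hqc ((G.mem_neighborFinset _ _).1 (this ▸ hc))
  rw [mem_neighborFinset] at hw
  refine ⟨q, hq, w, hwC, fun heq ↦ hqc (heq ▸ hac), ?_, hw⟩
  rintro rfl
  exact hq (ha ▸ (G.mem_neighborFinset _ _).2 hw.symm)

theorem exists_not_adj_lowDegree (h : IsThreeFourGraph G) (hG : ¬ PairApex G)
    (ha : a ∉ lowDegree G 4) : ∃ c ∈ lowDegree G 4, ¬ G.Adj a c := by
  by_contra! hadj
  have hnbr : lowDegree G 4 = G.neighborFinset a := eq_of_subset_of_card_le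
    (fun c hc ↦ (G.mem_neighborFinset _ _).2 (hadj c hc))
    (by rw [card_neighborFinset_eq_degree, h.degree_eq_four ha, h.card_lowDegree])
  obtain ⟨q, hq, w, hwC, haq, haw, hqw⟩ := h.exists_adj_of_neighborFinset_eq_lowDegree hnbr.symm
  have hYcard : #(insert a (insert q (insert w (lowDegree G 4)))) = 7 := by
    rw [card_insert_of_notMem, card_insert_of_notMem, card_insert_of_notMem hwC,
      h.card_lowDegree]
    · simpa [hqw.ne] using hq
    · simpa [haq, haw] using ha
  have hX := card_add_six_le_of_not_isPlanar (fun hpl ↦ hG ⟨a, q, hpl⟩)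
    (X := insert a (insert q (lowDegree G 4)))
    (fun x hx ↦ degree_isolate_pair_le haq ?_)
    (Y := insert a (insert q (insert w (lowDegree G 4))))
    (fun y hy ↦ degree_isolate_pair_le haq ?_) (by rw [hYcard, h.card_eq]; norm_num)
  · rw [card_insert_of_notMem (by simpa [haq] using ha), card_insert_of_notMem (by simpa using hq),
      h.card_lowDegree, h.card_eq] at hX
    omega
  · simp only [mem_insert] at hx
    have := h.degree_eq_three (v := x)
    have := hadj x
    grind
  · simp only [mem_insert] at hy
    have := h.degree_eq_three (v := y)
    have := h.degree_le_four y
    grind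

theorem card_inter_add_card_inter_le_three (h : IsThreeFourGraph G)
    (hG : ¬ (isolate G {a, b}).IsPlanar) (ha : a ∉ lowDegree G 4) (hne : a ≠ b)
    (hab : ¬ G.Adj a b) (hc : ∃ c ∈ lowDegree G 4, ¬ G.Adj a c) (hb : b ∉ lowDegree G 4) :
    #((lowDegree G 4)ᶜ ∩ (G.neighborFinset a ∩ G.neighborFinset b)) +
      #(lowDegree G 4 ∩ (G.neighborFinset a ∪ G.neighborFinset b)) ≤ 3 := by
  obtain ⟨c, hc, hac⟩ := hc
  have hca := ne_of_mem_of_not_mem hc ha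
  have hcb := ne_of_mem_of_not_mem hc hb
  have hYcard : #(insert a (insert b (insert c (G.neighborFinset a)))) = 7 := by
    rw [card_insert_of_notMem, card_insert_of_notMem, card_insert_of_notMem,
      card_neighborFinset_eq_degree, h.degree_eq_four ha]
    · simpa using hac
    · simp [hcb.symm, hab]
    · simp [hne, hca.symm]
  have hX := card_add_six_le_of_not_isPlanar hG
    (X := insert a (insert b (((lowDegree G 4)ᶜ ∩ (G.neighborFinset a ∩ G.neighborFinset b)) ∪
      (lowDegree G 4 ∩ (G.neighborFinset a ∪ G.neighborFinset b)))))
    (fun x hx ↦ degree_isolate_pair_le hne ?_)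
    (Y := insert a (insert b (insert c (G.neighborFinset a))))
    (fun y hy ↦ degree_isolate_pair_le hne ?_) (by rw [hYcard, h.card_eq]; norm_num)
  · rw [card_insert_of_notMem (by simp [hne, ha]), card_insert_of_notMem (by simp [hb]),
      card_union_of_disjoint, h.card_eq] at hX
    · omega
    · exact disjoint_compl_left.mono inter_subset_left inter_subset_left
  · simp only [mem_insert, mem_union, mem_inter, mem_neighborFinset, mem_compl] at hx
    have := h.degree_eq_three (v := x)
    have := h.degree_le_four x
    grind
  · simp only [mem_insert, mem_neighborFinset] at hy
    have := h.degree_eq_three hc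
    have := h.degree_le_four y
    grind

theorem card_inter_add_lowNeighbors_le (h : IsThreeFourGraph G) (hG : ¬ PairApex G)
    (ha : a ∉ lowDegree G 4) (hb : b ∉ lowDegree G 4) (hne : a ≠ b) (hab : ¬ G.Adj a b) :
    #(((lowDegree G 4)ᶜ ∩ G.neighborFinset a) ∩ G.neighborFinset b) +
        lowNeighbors G a + lowNeighbors G b ≤
      3 + #((lowDegree G 4 ∩ G.neighborFinset a) ∩ G.neighborFinset b) := by
  have hle := h.card_inter_add_card_inter_le_three (fun hpl ↦ hG ⟨_, _, hpl⟩) ha hne hab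
    (h.exists_not_adj_lowDegree hG ha) hb
  have hcard := card_union_add_card_inter (lowDegree G 4 ∩ G.neighborFinset a)
    (lowDegree G 4 ∩ G.neighborFinset b)
  rw [← inter_union_distrib_left, ← inter_inter_distrib_left] at hcard
  rw [inter_assoc, inter_assoc, lowNeighbors, lowNeighbors]
  omega

theorem lowNeighbors_le_four (h : IsThreeFourGraph G) (v : V) : lowNeighbors G v ≤ 4 :=
  (card_le_card inter_subset_left).trans h.card_lowDegree.le

theorem six_add_lowNeighbors_sq_le (h : IsThreeFourGraph G) (hG : ¬ PairApex G)
    (hfree : G.CliqueFreeOn ((lowDegree G 4)ᶜ : Finset V) 3) (ha : a ∉ lowDegree G 4) :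
    6 + lowNeighbors G a ^ 2 + ∑ v ∈ (lowDegree G 4)ᶜ, lowNeighbors G v ≤
      7 * lowNeighbors G a +
        2 * ∑ v ∈ (lowDegree G 4)ᶜ ∩ G.neighborFinset a, lowNeighbors G v := by
  have hsplit := sum_eq_add_sum_inter_neighborFinset_add (G := G) (mem_compl.2 ha)
  have hB := hsplit fun _ ↦ 1
  have hF := hsplit (lowNeighbors G)
  have hhigh := hsplit fun v ↦ #(((lowDegree G 4)ᶜ ∩ G.neighborFinset a) ∩ G.neighborFinset v)
  have hlow := hsplit fun v ↦ #((lowDegree G 4 ∩ G.neighborFinset a) ∩ G.neighborFinset v)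
  have hadd := h.lowNeighbors_add ha
  have hhigh_nbr : ∑ v ∈ (lowDegree G 4)ᶜ ∩ G.neighborFinset a,
      #(((lowDegree G 4)ᶜ ∩ G.neighborFinset a) ∩ G.neighborFinset v) = 0 := by
    refine sum_eq_zero fun v hv ↦ card_eq_zero.2 (eq_empty_of_forall_notMem fun x hx ↦ ?_)
    simp only [mem_inter, mem_neighborFinset] at hv hx
    refine hfree (t := {a, v, x}) ?_ (is3Clique_triple_iff.2 ⟨hv.2, hx.1.2, hx.2⟩)
    simp only [mem_compl] at hv hx
    simp [Set.insert_subset_iff, ha, hv, hx]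
  have hhigh_sum : ∑ v ∈ (lowDegree G 4)ᶜ ∩ G.neighborFinset a, lowNeighbors G v +
      ∑ v ∈ (lowDegree G 4)ᶜ, #(((lowDegree G 4)ᶜ ∩ G.neighborFinset a) ∩ G.neighborFinset v) =
      #((lowDegree G 4)ᶜ ∩ G.neighborFinset a) * 4 := by
    rw [sum_card_inter_neighborFinset_comm, ← sum_add_distrib]
    exact sum_const_nat fun x hx ↦ h.lowNeighbors_add (mem_compl.1 (mem_inter.1 hx).1)
  have hlow_sum : ∑ v ∈ (lowDegree G 4)ᶜ,
      #((lowDegree G 4 ∩ G.neighborFinset a) ∩ G.neighborFinset v) ≤ lowNeighbors G a * 3 := by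
    rw [sum_card_inter_neighborFinset_comm]
    refine sum_le_card_nsmul _ _ _ fun c hc ↦ (card_le_card inter_subset_right).trans_eq ?_
    rw [card_neighborFinset_eq_degree, h.degree_eq_three (mem_inter.1 hc).1]
  have hpairs := sum_le_sum fun b (hb : b ∈ (lowDegree G 4)ᶜ \ insert a (G.neighborFinset a)) ↦ by
    simp only [mem_sdiff, mem_compl, mem_insert, mem_neighborFinset, not_or] at hb
    exact h.card_inter_add_lowNeighbors_le hG ha hb.1 (Ne.symm hb.2.1) hb.2.2
  simp only [sum_add_distrib, sum_const, smul_eq_mul, mul_one] at hpairs hB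
  simp only [inter_assoc, inter_self] at hhigh hlow hhigh_nbr hhigh_sum hlow_sum hpairs
  rw [h.card_compl_lowDegree] at hB
  rw [← lowNeighbors] at hlow
  have hf := h.lowNeighbors_le_four a
  generalize lowNeighbors G a = f at *
  have hcard : #((lowDegree G 4)ᶜ \ insert a (G.neighborFinset a)) = f + 2 := by omega
  rw [hcard] at hpairs
  interval_cases f <;> omega

theorem exists_isNClique_three_subset (h : IsThreeFourGraph G) (hG : ¬ PairApex G) :
    ∃ T ⊆ (lowDegree G 4)ᶜ, G.IsNClique 3 T := by
  by_contra! hno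
  have hfree : G.CliqueFreeOn ((lowDegree G 4)ᶜ : Finset V) 3 := fun T hT ↦ hno T (coe_subset.1 hT)
  have hsum := sum_le_sum fun a (ha : a ∈ (lowDegree G 4)ᶜ) ↦
    h.six_add_lowNeighbors_sq_le hG hfree (mem_compl.1 ha)
  have hswap : ∑ v ∈ (lowDegree G 4)ᶜ, ∑ x ∈ (lowDegree G 4)ᶜ ∩ G.neighborFinset v,
      lowNeighbors G x + ∑ v ∈ (lowDegree G 4)ᶜ, lowNeighbors G v ^ 2 =
      4 * ∑ v ∈ (lowDegree G 4)ᶜ, lowNeighbors G v := by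
    rw [sum_sum_inter_neighborFinset, ← sum_add_distrib, mul_sum]
    refine sum_congr rfl fun v hv ↦ ?_
    rw [sq, ← add_mul, add_comm, h.lowNeighbors_add (mem_compl.1 hv)]
  have hpoint := sum_le_sum fun v (_ : v ∈ (lowDegree G 4)ᶜ) ↦
    (by have := h.lowNeighbors_le_four v; interval_cases lowNeighbors G v <;> omega :
      8 * lowNeighbors G v ≤ 3 * lowNeighbors G v ^ 2 + 5)
  simp only [sum_add_distrib, ← mul_sum, sum_const, smul_eq_mul, h.card_compl_lowDegree]
    at hsum hpoint
  omega

theorem lowNeighbors_le_three (h : IsThreeFourGraph G) (hG : ¬ PairApex G)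
    (ha : a ∉ lowDegree G 4) : lowNeighbors G a ≤ 3 := by
  obtain ⟨c, hc, hac⟩ := h.exists_not_adj_lowDegree hG ha
  have hlt : lowNeighbors G a < #(lowDegree G 4) := card_lt_card <|
    inter_subset_left.ssubset_of_mem_notMem hc (by simp [hac])
  rw [h.card_lowDegree] at hlt
  omega

theorem exists_isK33Subdivision_isolate (h : IsThreeFourGraph G) (hG : ¬ PairApex G)
    (ha : a ∉ lowDegree G 4) (hb : b ∉ lowDegree G 4) (hne : a ≠ b) (hab : ¬ G.Adj a b) :
    ∃ J, IsK33Subdivision (isolate G {a, b}) J ∧ ∑ v, cost (isolate G {a, b}) J v =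
      #(lowDegree G 4 ∩ G.neighborFinset a ∩ G.neighborFinset b) := by
  have hexc := excess_isolate_pair h.three_le_degree hne hab
  have hL : ({v | G.Adj a v ∧ G.Adj b v ∧ G.degree v = 3} : Finset V) =
      lowDegree G 4 ∩ G.neighborFinset a ∩ G.neighborFinset b := by
    ext v
    have := h.three_le_degree v
    simp only [mem_filter_univ, mem_inter, mem_lowDegree, mem_neighborFinset]
    grind
  rw [hL, h.excess_eq, h.degree_eq_four ha, h.degree_eq_four hb] at hexc
  have hle := h.lowNeighbors_le_three hG ha
  have hmono : #(lowDegree G 4 ∩ G.neighborFinset a ∩ G.neighborFinset b) ≤ lowNeighbors G a :=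
    card_le_card inter_subset_left
  obtain ⟨J, hJ⟩ := exists_isK33Subdivision (fun hpl ↦ hG ⟨a, b, hpl⟩) (by omega)
  exact ⟨J, hJ, by have := hJ.sum_cost; omega⟩

theorem degree_eq_zero_of_mem_inter (h : IsThreeFourGraph G) {J : SimpleGraph V}
    (hJ : IsK33Subdivision (isolate G {a, b}) J) (hne : a ≠ b) {c : V}
    (hc : c ∈ lowDegree G 4 ∩ G.neighborFinset a ∩ G.neighborFinset b) : J.degree c = 0 := by
  refine hJ.degree_eq_zero (degree_isolate_pair_le hne ?_)
  simp only [mem_inter, mem_neighborFinset] at hc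
  have := h.degree_eq_three hc.1.1
  grind

theorem card_add_card_inter_le_three (h : IsThreeFourGraph G) {J : SimpleGraph V}
    (hJ : IsK33Subdivision (isolate G {a, b}) J) (ha : a ∉ lowDegree G 4)
    (hb : b ∉ lowDegree G 4) (hne : a ≠ b) {X : Finset V} (hX : X ⊆ (lowDegree G 4)ᶜ)
    (haX : a ∉ X) (hbX : b ∉ X) (hzero : ∀ x ∈ X, J.degree x = 0) :
    #X + #(lowDegree G 4 ∩ G.neighborFinset a ∩ G.neighborFinset b) ≤ 3 := by
  have hcard := hJ.card_add_six_le (X := insert a (insert b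
    (X ∪ lowDegree G 4 ∩ G.neighborFinset a ∩ G.neighborFinset b))) fun x hx ↦ by
      rw [mem_insert, mem_insert, mem_union] at hx
      rcases hx with rfl | rfl | hx | hx
      · exact hJ.degree_eq_zero (by simp [degree_isolate_of_mem])
      · exact hJ.degree_eq_zero (by simp [degree_isolate_of_mem])
      · exact hzero x hx
      · exact h.degree_eq_zero_of_mem_inter hJ hne hx
  rw [card_insert_of_notMem (by simp [hne, haX, ha]), card_insert_of_notMem (by simp [hbX, hb]),
    card_union_of_disjoint, h.card_eq] at hcard
  · omega
  · exact disjoint_compl_left.mono hX (inter_subset_left.trans inter_subset_left)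

theorem one_le_cost_isolate (h : IsThreeFourGraph G) {J : SimpleGraph V} (hne : a ≠ b) {v : V}
    (hv : v ∉ lowDegree G 4) (hva : v ≠ a) (hvb : v ≠ b) (hvab : ¬ (G.Adj a v ∧ G.Adj b v))
    (hJ : J.degree v = 0) : 1 ≤ cost (isolate G {a, b}) J v := by
  have := degree_isolate_pair G hne hva hvb
  rw [h.degree_eq_four hv] at this
  rw [cost, if_pos hJ]
  grind

theorem two_le_sum_cost (h : IsThreeFourGraph G) {J : SimpleGraph V}
    (hJ : IsK33Subdivision (isolate G {a, b}) J)
    (hcost : ∑ v, cost (isolate G {a, b}) J v =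
      #(lowDegree G 4 ∩ G.neighborFinset a ∩ G.neighborFinset b))
    (ha : a ∉ lowDegree G 4) (hb : b ∉ lowDegree G 4) (hne : a ≠ b) {T : Finset V}
    (hT : G.IsNClique 3 T) (hTD : T ⊆ (lowDegree G 4)ᶜ) (haT : a ∉ T) (hbT : b ∉ T)
    (ht : ∃ t ∈ T, ¬ (G.Adj a t ∧ G.Adj b t)) : 2 ≤ ∑ t ∈ T, cost (isolate G {a, b}) J t := by
  refine two_le_sum_cost_of_isNClique hJ.le hJ.cliqueFree
    (isNClique_isolate hT (by simp [haT, hbT])) ?_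
  by_contra! hzero
  obtain ⟨t, ht, htab⟩ := ht
  have hcard := h.card_add_card_inter_le_three hJ ha hb hne hTD haT hbT hzero
  have hone := h.one_le_cost_isolate hne (mem_compl.1 (hTD ht)) (ne_of_mem_of_not_mem ht haT)
    (ne_of_mem_of_not_mem ht hbT) htab (hzero t ht)
  have := single_le_sum_of_canonicallyOrdered (f := cost (isolate G {a, b}) J) (mem_univ t)
  rw [hT.2] at hcard
  omega

theorem two_le_card_inter (h : IsThreeFourGraph G) (hG : ¬ PairApex G) (ha : a ∉ lowDegree G 4)
    (hb : b ∉ lowDegree G 4) (hne : a ≠ b) (hab : ¬ G.Adj a b) {T : Finset V}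
    (hT : G.IsNClique 3 T) (hTD : T ⊆ (lowDegree G 4)ᶜ) (haT : a ∉ T) (hbT : b ∉ T)
    (ht : ∃ t ∈ T, ¬ (G.Adj a t ∧ G.Adj b t)) :
    2 ≤ #(lowDegree G 4 ∩ G.neighborFinset a ∩ G.neighborFinset b) := by
  obtain ⟨J, hJ, hcost⟩ := h.exists_isK33Subdivision_isolate hG ha hb hne hab
  rw [← hcost]
  exact (h.two_le_sum_cost hJ hcost ha hb hne hT hTD haT hbT ht).trans
    (sum_le_univ_sum_of_nonneg fun _ ↦ Nat.zero_le _)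

theorem two_add_card_inter_le (h : IsThreeFourGraph G) (hG : ¬ PairApex G)
    (ha : a ∉ lowDegree G 4) (hb : b ∉ lowDegree G 4) (hne : a ≠ b) (hab : ¬ G.Adj a b)
    {T : Finset V} (hT : G.IsNClique 3 T) (hTD : T ⊆ (lowDegree G 4)ᶜ) (haT : a ∉ T) (hbT : b ∉ T)
    (ht : ∃ t ∈ T, ¬ (G.Adj a t ∧ G.Adj b t)) {p : V} (hp : p ∉ lowDegree G 4) (hpT : p ∉ T)
    (hpa : p ≠ a) (hpb : p ≠ b) (hpab : ¬ (G.Adj a p ∧ G.Adj b p)) :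
    2 + #(lowDegree G 4 ∩ G.neighborFinset a ∩ G.neighborFinset b ∩ G.neighborFinset p) ≤
      #(lowDegree G 4 ∩ G.neighborFinset a ∩ G.neighborFinset b) := by
  obtain ⟨J, hJ, hcost⟩ := h.exists_isK33Subdivision_isolate hG ha hb hne hab
  have hle := sum_le_univ_sum_of_nonneg (s := insert p T)
    fun t ↦ Nat.zero_le (cost (isolate G {a, b}) J t)
  rw [hcost, sum_insert hpT] at hle
  have htwo := h.two_le_sum_cost hJ hcost ha hb hne hT hTD haT hbT ht
  by_cases hzero : J.degree p = 0
  · have := h.card_add_card_inter_le_three hJ ha hb hne (X := {p}) (by simpa using hp)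
      (by simpa using hpa.symm) (by simpa using hpb.symm) (by simpa using hzero)
    have := h.one_le_cost_isolate hne hp hpa hpb hpab hzero
    rw [card_singleton] at *
    omega
  · have := card_le_cost hJ.le hzero
      (X := lowDegree G 4 ∩ G.neighborFinset a ∩ G.neighborFinset b ∩ G.neighborFinset p)
      (fun x hx ↦ ?_) fun x hx hpx ↦ ?_
    · omega
    · simp only [mem_inter, mem_neighborFinset] at hx
      have := ne_of_mem_of_not_mem hx.1.1.1 ha
      have := ne_of_mem_of_not_mem hx.1.1.1 hb
      exact ⟨hx.2, by simp [hpa, hpb], by simp [*]⟩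
    · have := h.degree_eq_zero_of_mem_inter hJ hne (mem_inter.1 hx).1
      exact (degree_pos_iff_exists_adj (G := J) _).2 ⟨_, hpx.symm⟩ |>.ne' this

theorem card_compl_lowDegree_sdiff (h : IsThreeFourGraph G) {T : Finset V}
    (hT : G.IsNClique 3 T) (hTD : T ⊆ (lowDegree G 4)ᶜ) : #((lowDegree G 4)ᶜ \ T) = 4 := by
  rw [card_sdiff_of_subset hTD, h.card_compl_lowDegree, hT.2]

theorem card_neighborFinset_sdiff (h : IsThreeFourGraph G) {T : Finset V}
    (hT : G.IsNClique 3 T) (hTD : T ⊆ (lowDegree G 4)ᶜ) {t : V} (ht : t ∈ T) :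
    #(G.neighborFinset t \ T) = 2 := by
  have := card_neighborFinset_sdiff_add hT ht
  rw [h.degree_eq_four (mem_compl.1 (hTD ht))] at this
  omega

theorem not_isClique_compl_lowDegree_sdiff (h : IsThreeFourGraph G) (hG : ¬ PairApex G)
    {T : Finset V} (hT : G.IsNClique 3 T) (hTD : T ⊆ (lowDegree G 4)ᶜ) :
    ¬ G.IsClique ((lowDegree G 4)ᶜ \ T : Finset V) := by
  intro hclique
  have hP : G.IsNClique 4 ((lowDegree G 4)ᶜ \ T) := ⟨hclique, h.card_compl_lowDegree_sdiff hT hTD⟩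
  obtain ⟨b, hbT⟩ := card_pos.1 (hT.2 ▸ Nat.succ_pos 2 : 0 < #T)
  obtain ⟨s, hs, p, hp, hsp⟩ : ∃ s ∈ ((lowDegree G 4)ᶜ \ T) \ G.neighborFinset b,
      ∃ p ∈ ((lowDegree G 4)ᶜ \ T) \ G.neighborFinset b, s ≠ p := by
    have hsub : ((lowDegree G 4)ᶜ \ T) ∩ G.neighborFinset b ⊆ G.neighborFinset b \ T := fun x hx ↦
      mem_sdiff.2 ⟨(mem_inter.1 hx).2, (mem_sdiff.1 (mem_inter.1 hx).1).2⟩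
    have hle := card_le_card hsub
    have := card_sdiff_add_card_inter ((lowDegree G 4)ᶜ \ T) (G.neighborFinset b)
    rw [h.card_neighborFinset_sdiff hT hTD hbT] at hle
    rw [hP.2] at this
    exact one_lt_card.1 (by omega)
  simp only [mem_sdiff (t := G.neighborFinset b), mem_neighborFinset] at hs hp
  have hsT := mem_sdiff.1 hs.1
  have htwo := h.two_le_card_inter hG (mem_compl.1 hsT.1) (mem_compl.1 (hTD hbT))
    (ne_of_mem_of_not_mem hbT hsT.2).symm (fun hsb ↦ hs.2 hsb.symm) (hP.erase_of_mem hs.1)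
    ((erase_subset _ _).trans sdiff_subset) (by simp) (by simp [hbT])
    ⟨p, mem_erase.2 ⟨hsp.symm, hp.1⟩, fun hadj ↦ hp.2 hadj.2⟩
  have hle : _ ≤ lowNeighbors G s := card_le_card (inter_subset_left (s₂ := G.neighborFinset b))
  have hnbr : ((lowDegree G 4)ᶜ \ T).erase s ⊆ (lowDegree G 4)ᶜ ∩ G.neighborFinset s := fun x hx ↦
    mem_inter.2 ⟨(mem_sdiff.1 (mem_of_mem_erase hx)).1, (G.mem_neighborFinset _ _).2
      (hP.1 hs.1 (mem_of_mem_erase hx) (ne_of_mem_erase hx).symm)⟩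
  have hthree := card_le_card hnbr
  have hadd := h.lowNeighbors_add (mem_compl.1 hsT.1)
  rw [card_erase_of_mem hs.1, hP.2] at hthree
  omega

theorem exists_not_adj_mem_triangle (h : IsThreeFourGraph G) (hG : ¬ PairApex G)
    {T : Finset V} (hT : G.IsNClique 3 T) (hTD : T ⊆ (lowDegree G 4)ᶜ)
    (ha : a ∈ (lowDegree G 4)ᶜ \ T) (hb : b ∈ (lowDegree G 4)ᶜ \ T) (hne : a ≠ b)
    (hab : ¬ G.Adj a b) : ∃ t ∈ T, ¬ (G.Adj a t ∧ G.Adj b t) := by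
  by_contra! hadj
  have ha' := mem_sdiff.1 ha
  have hb' := mem_sdiff.1 hb
  rw [mem_compl] at ha' hb'
  have hsub : T ⊆ (lowDegree G 4)ᶜ ∩ (G.neighborFinset a ∩ G.neighborFinset b) := fun t ht ↦ by
    simpa [hadj t ht] using hTD ht
  have hTle := card_le_card hsub
  have hle := h.card_inter_add_card_inter_le_three (fun hpl ↦ hG ⟨_, _, hpl⟩) ha'.1 hne hab
    (h.exists_not_adj_lowDegree hG ha'.1) hb'.1
  have hfa : lowNeighbors G a ≤ #(lowDegree G 4 ∩ (G.neighborFinset a ∪ G.neighborFinset b)) :=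
    card_le_card (inter_subset_inter_left subset_union_left)
  rw [hT.2] at hTle
  obtain ⟨q, hq, haq⟩ : ∃ q ∈ (((lowDegree G 4)ᶜ \ T).erase a).erase b,
      q ∉ G.neighborFinset a \ T := by
    refine exists_mem_notMem_of_card_lt_card ?_
    have hTN : T ⊆ G.neighborFinset a := fun t ht ↦ (G.mem_neighborFinset _ _).2 (hadj t ht).1
    rw [card_erase_of_mem (mem_erase.2 ⟨hne.symm, hb⟩), card_erase_of_mem ha,
      h.card_compl_lowDegree_sdiff hT hTD, card_sdiff_of_subset hTN, hT.2,
      card_neighborFinset_eq_degree, h.degree_eq_four ha'.1]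
    norm_num
  simp only [mem_erase, mem_sdiff, mem_compl, mem_neighborFinset] at hq haq
  obtain ⟨t, ht⟩ := card_pos.1 (hT.2 ▸ Nat.succ_pos 2 : 0 < #T)
  have hNt : {a, b} = G.neighborFinset t \ T := by
    refine eq_of_subset_of_card_le ?_ ?_
    · simp [insert_subset_iff, (hadj t ht).1.symm, (hadj t ht).2.symm, ha'.2, hb'.2]
    · rw [h.card_neighborFinset_sdiff hT hTD ht, card_pair hne]
  have hqt : ¬ G.Adj q t := fun hqt ↦ by
    have : q ∈ ({a, b} : Finset V) := hNt ▸ by simp [hqt.symm, hq]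
    grind
  have htwo := h.two_le_card_inter hG ha'.1 hq.2.2.1 hq.2.1.symm (by tauto) hT hTD ha'.2 hq.2.2.2
    ⟨t, ht, fun hadj ↦ hqt hadj.2⟩
  have hle : _ ≤ lowNeighbors G a := card_le_card (inter_subset_left (s₂ := G.neighborFinset q))
  omega

theorem adj_of_not_adj (h : IsThreeFourGraph G) (hG : ¬ PairApex G) {T : Finset V}
    (hT : G.IsNClique 3 T) (hTD : T ⊆ (lowDegree G 4)ᶜ) (ha : a ∈ (lowDegree G 4)ᶜ \ T)
    (hb : b ∈ (lowDegree G 4)ᶜ \ T) (hne : a ≠ b) (hab : ¬ G.Adj a b) {p : V}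
    (hp : p ∈ (lowDegree G 4)ᶜ \ T) (hpa : p ≠ a) (hpb : p ≠ b) : G.Adj a p := by
  by_contra hap
  have htab := h.exists_not_adj_mem_triangle hG hT hTD ha hb hne hab
  have htap := h.exists_not_adj_mem_triangle hG hT hTD ha hp hpa.symm hap
  rw [mem_sdiff, mem_compl] at ha hb hp
  have hrule := h.two_add_card_inter_le hG ha.1 hb.1 hne hab hT hTD ha.2 hb.2 htab hp.1 hp.2 hpa
    hpb fun hadj ↦ hap hadj.1
  have htwo := h.two_le_card_inter hG ha.1 hp.1 hpa.symm hap hT hTD ha.2 hp.2 htap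
  have hthree := h.lowNeighbors_le_three hG ha.1
  have hunion := card_union_add_card_inter (lowDegree G 4 ∩ G.neighborFinset a ∩ G.neighborFinset b)
    (lowDegree G 4 ∩ G.neighborFinset a ∩ G.neighborFinset p)
  have hle : #(lowDegree G 4 ∩ G.neighborFinset a ∩ G.neighborFinset b ∪
      lowDegree G 4 ∩ G.neighborFinset a ∩ G.neighborFinset p) ≤ lowNeighbors G a :=
    card_le_card (union_subset inter_subset_left inter_subset_left)
  rw [← inter_inter_distrib_left, ← inter_assoc] at hunion
  omega

theorem pairApex (h : IsThreeFourGraph G) : PairApex G := by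
  by_contra hG
  obtain ⟨T, hTD, hT⟩ := h.exists_isNClique_three_subset hG
  have hnot := h.not_isClique_compl_lowDegree_sdiff hG hT hTD
  simp only [SimpleGraph.IsClique, Set.Pairwise, mem_coe, not_forall] at hnot
  obtain ⟨a, ha, b, hb, hne, hab⟩ := hnot
  obtain ⟨haD, haT⟩ := mem_sdiff.1 ha
  obtain ⟨hbD, hbT⟩ := mem_sdiff.1 hb
  rw [mem_compl] at haD hbD
  have htwo := h.two_le_card_inter hG haD hbD hne hab hT hTD haT hbT
    (h.exists_not_adj_mem_triangle hG hT hTD ha hb hne hab)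
  have hle := h.card_inter_add_card_inter_le_three (fun hpl ↦ hG ⟨_, _, hpl⟩) haD hne hab
    (h.exists_not_adj_lowDegree hG haD) hbD
  have hcommon : (((lowDegree G 4)ᶜ \ T).erase a).erase b ⊆
      (lowDegree G 4)ᶜ ∩ (G.neighborFinset a ∩ G.neighborFinset b) := fun p hp ↦ by
    simp only [mem_erase] at hp
    have hap := h.adj_of_not_adj hG hT hTD ha hb hne hab hp.2.2 hp.2.1 hp.1
    have hbp := h.adj_of_not_adj hG hT hTD hb ha hne.symm (fun hba ↦ hab hba.symm) hp.2.2
      hp.1 hp.2.1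
    simp only [mem_inter, mem_neighborFinset]
    exact ⟨(mem_sdiff.1 hp.2.2).1, hap, hbp⟩
  have hlow : lowDegree G 4 ∩ G.neighborFinset a ∩ G.neighborFinset b ⊆
      lowDegree G 4 ∩ (G.neighborFinset a ∪ G.neighborFinset b) := by
    rw [inter_assoc]
    exact inter_subset_inter_left (inter_subset_left.trans subset_union_left)
  have hcommon := card_le_card hcommon
  have hlow := card_le_card hlow
  rw [card_erase_of_mem (mem_erase.2 ⟨hne.symm, hb⟩), card_erase_of_mem ha,
    h.card_compl_lowDegree_sdiff hT hTD] at hcommon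
  omega

end IsThreeFourGraph

theorem isThreeFourGraph_of_card_edgeFinset [Fintype V] {G : SimpleGraph V}
    (hcard : Fintype.card V = 11) (hE : #G.edgeFinset = 20) (hΔ : ∀ v, G.degree v ≤ 4)
    (hδ : ∀ v, 3 ≤ G.degree v) : IsThreeFourGraph G := by
  refine ⟨hcard, hδ, hΔ, ?_⟩
  have hpoint : ∀ v ∈ univ, G.degree v + (if G.degree v < 4 then 1 else 0) = 4 := fun v _ ↦ by
    have := hδ v
    have := hΔ v
    split_ifs <;> omega
  have hsum := sum_congr rfl hpoint
  rw [sum_add_distrib, sum_degrees_eq_twice_card_edges, hE, ← card_filter, sum_const, card_univ,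
    hcard, smul_eq_mul] at hsum
  rw [lowDegree]
  omega

theorem pairApex_of_card_eq_eleven [Fintype V] {G : SimpleGraph V}
    (hcard : Fintype.card V = 11) (hE : #G.edgeFinset = 20) (hΔ : ∀ v, G.degree v ≤ 4) :
    PairApex G := by
  by_cases hδ : ∀ v, 3 ≤ G.degree v
  · exact (isThreeFourGraph_of_card_edgeFinset hcard hE hΔ hδ).pairApex
  · push Not at hδ
    obtain ⟨v, hv⟩ := hδ
    rw [Nat.lt_succ_iff] at hv
    refine .of_suppress hv (pairApex_of_card_eq_ten ?_ fun w ↦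
      (degree_suppress_le hv w).trans (hΔ w))
    rw [Fintype.card_subtype_compl, Fintype.card_subtype_eq, hcard]

end ApexGraph

/-- A graph with 11 vertices and 20 edges whose maximum degree equals 4 is 2-apex. -/
theorem stmt13 {V : Type*} [Fintype V] (G : SimpleGraph V)
    (hV : Fintype.card V = 11) (hE : G.edgeSet.ncard = 20)
    (hmax : ∀ v : V, (G.neighborSet v).ncard ≤ 4)
    (hmax4 : ∃ v : V, (G.neighborSet v).ncard = 4) :
    G.TwoApex := by
  classical
  rw [← SimpleGraph.coe_edgeFinset, Set.ncard_coe_finset] at hE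
  have hΔ : ∀ v, G.degree v ≤ 4 := fun v ↦ by
    rw [← SimpleGraph.card_neighborFinset_eq_degree, ← Set.ncard_coe_finset,
      SimpleGraph.coe_neighborFinset]
    exact hmax v
  refine (ApexGraph.pairApex_of_card_eq_eleven hV ?_ fun v ↦ ?_).twoApex
  · convert hE
  · convert hΔ v
end
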